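/- arXiv:2412.10340 — 4 statements merged into one kernel-verified Lean document; each statement's English description precedes it below -/
import Mathlib

section
/- Let N > 6 be a positive integer. Then the product over the prime divisors p of N of (1 + 1/p) is strictly less than (6·e^γ/π²)·(1 + log log N), where γ is the Euler–Mascheroni constant and log is the natural logarithm. -/
/-!
Among all integers with a given number of prime divisors, the product of the first primes is extremal:
replacing the primes dividing `N` by the primes up to some prime `n` increases the product of `1 + 1/p` and
decreases the product of the primes (`exchange`). Writing `θ(n) = ∑_{p ≤ n} log p` (`th n`), it therefore
suffices to show, for every prime `n ≥ 5`,
`∏_{p ≤ n} (1 + 1/p) < (6 e^γ / π²) (1 + log θ(n))`;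
the few `N` with at most two prime divisors are treated directly.

For `n ≥ 2^18` this follows from explicit forms of the theorems of Chebyshev and Mertens. Chebyshev's
combination `n! ⌊n/30⌋! / (⌊n/2⌋! ⌊n/3⌋! ⌊n/5⌋!)` gives `0.912 n ≤ θ(n) ≤ 1.13 n + 650` (`le_th`, `th_le`).
The prime factorization of `n!` gives `G n = ∑_{p ≤ n} log p / (p - 1) ≥ log n - 1` and
`G n - log n + 1 ≤ θ(n)/(3n) + 0.537` (`G_ge`, `G_le`). Partial summation turns the lower bound for `G`
into a lower bound `log log m + c` for `∑_{p ≤ m} 1/p`, valid for all `m ≥ n`, in which `c` is determined by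
`n` and the primes up to `n` (`le_recipSum`). Comparing `∑ p^(-s)` with `log ζ(s)` as `s → 1+` shows that such a `c` is
bounded above in terms of Euler's constant (`mertens_limit`), which is the upper bound
`∏_{p ≤ n} (1 - 1/p)⁻¹ ≤ e^γ log n exp((G n - log n + 1)/log n + 2/n)`. Multiplication by
`∏_{p ≤ n} (1 - 1/p²)`, which is at most `6/π² exp(1/n)`, yields `prod_one_add_le`, and the additional `1` on
the right-hand side of the claim absorbs the error factor (`prod_lt_of_large`).

For `64 ≤ n < 2^18` the product and `θ` are bounded on dyadic blocks: the primes of a block are detected by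
coprimality to a product of small primes, so that exact integer products over a block can be
evaluated by the kernel (`prod_lt_of_medium`). The remaining `n` are settled by direct computation.
-/

open Filter Topology

/-! ### Reduction to the primes up to `n` -/

theorem exists_initial_primes (N : ℕ) (hk : N.primeFactors.card ≠ 0) :
    ∃ n : ℕ, n.Prime ∧ (Nat.primesLE n).card = N.primeFactors.card := by
  obtain ⟨k, hk⟩ := Nat.exists_eq_succ_of_ne_zero hk
  refine ⟨Nat.nth Nat.Prime k, Nat.prime_nth_prime k, ?_⟩
  rw [hk, Nat.primesLE, Nat.primesBelow_card_eq_primeCounting', Nat.primeCounting', Nat.count_succ,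
    Nat.count_nth_of_infinite Nat.infinite_setOfPred_prime, if_pos (Nat.prime_nth_prime k)]

/-- Replacing a set `S` of primes by the initial segment of the primes of the same size increases the
product of `1 + 1/p` and decreases the product of the primes themselves. -/
theorem exchange (S : Finset ℕ) (n : ℕ) (hn : 0 < n) (hS : ∀ p ∈ S, p.Prime)
    (hc : (Nat.primesLE n).card = S.card) :
    ∏ p ∈ S, (1 + 1 / (p : ℝ)) ≤ ∏ p ∈ Nat.primesLE n, (1 + 1 / (p : ℝ)) ∧
    ∏ p ∈ Nat.primesLE n, p ≤ ∏ p ∈ S, p := by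
  classical
  set T := Nat.primesLE n
  have hcard : (S \ T).card = (T \ S).card := by
    rw [Finset.card_sdiff_comm hc.symm]
  have hST : ∀ p ∈ S \ T, n ≤ p := by
    intro p hp
    rw [Finset.mem_sdiff] at hp
    by_contra h
    exact hp.2 (Nat.mem_primesLE.2 ⟨by omega, hS p hp.1⟩)
  have hTS : ∀ p ∈ T \ S, p ≤ n ∧ 0 < p := by
    intro p hp
    rw [Finset.mem_sdiff] at hp
    exact ⟨Nat.le_of_mem_primesLE hp.1, (Nat.prime_of_mem_primesLE hp.1).pos⟩
  have hn' : (0:ℝ) < n := by exact_mod_cast hn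
  constructor
  · rw [← Finset.prod_inter_mul_prod_sdiff S T, ← Finset.prod_inter_mul_prod_sdiff T S,
      Finset.inter_comm]
    refine mul_le_mul_of_nonneg_left ?_ (Finset.prod_nonneg fun _ _ => by positivity)
    calc ∏ p ∈ S \ T, (1 + 1 / (p : ℝ)) ≤ ∏ p ∈ S \ T, (1 + 1 / (n : ℝ)) := by
          refine Finset.prod_le_prod (fun _ _ => by positivity) fun p hp => ?_
          have : (n : ℝ) ≤ p := by exact_mod_cast hST p hp
          gcongr
      _ = ∏ p ∈ T \ S, (1 + 1 / (n : ℝ)) := by simp [hcard]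
      _ ≤ _ := by
          refine Finset.prod_le_prod (fun _ _ => by positivity) fun p hp => ?_
          have h1 : (p : ℝ) ≤ n := by exact_mod_cast (hTS p hp).1
          have h2 : (0 : ℝ) < p := by exact_mod_cast (hTS p hp).2
          gcongr
  · rw [← Finset.prod_inter_mul_prod_sdiff S T, ← Finset.prod_inter_mul_prod_sdiff T S,
      Finset.inter_comm]
    refine Nat.mul_le_mul_left _ ?_
    calc ∏ p ∈ T \ S, p ≤ ∏ p ∈ T \ S, n := Finset.prod_le_prod' fun p hp => (hTS p hp).1
      _ = ∏ p ∈ S \ T, n := by simp [hcard]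
      _ ≤ _ := Finset.prod_le_prod' fun p hp => hST p hp

/-! ### Chebyshev's combination of factorials -/

/-- Chebyshev's function `θ(n) = ∑_{p ≤ n} log p` at a natural number. -/
noncomputable def th (n : ℕ) : ℝ := ∑ p ∈ Nat.primesLE n, Real.log p

/-- Legendre's formula, in logarithmic form and with a common range of primes and exponents for all
`m ≤ n`. -/
theorem log_factorial_eq (n m : ℕ) (h : m ≤ n) :
    Real.log (m.factorial : ℝ) =
      ∑ p ∈ Nat.primesLE n, ((∑ i ∈ Finset.Ico 1 (n + 1), m / p ^ i : ℕ) : ℝ) * Real.log p := by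
  have h0 : m.factorial ≠ 0 := Nat.factorial_ne_zero m
  conv_lhs => rw [← Nat.prod_factorization_pow_eq_self h0]
  rw [Finsupp.prod, Nat.cast_prod, Real.log_prod]
  · have hsub : m.factorial.factorization.support ⊆ Nat.primesLE n := by
      intro p hp
      rw [Nat.support_factorization, Nat.mem_primeFactors] at hp
      exact Nat.mem_primesLE.2 ⟨((hp.1.dvd_factorial).1 hp.2.1).trans h, hp.1⟩
    rw [Finset.sum_subset hsub]
    · refine Finset.sum_congr rfl fun p hp => ?_
      have hpp := Nat.prime_of_mem_primesLE hp
      rw [Nat.cast_pow, Real.log_pow, Nat.factorization_factorial hpp (b := n + 1)]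
      exact lt_of_le_of_lt (Nat.log_le_self p m) (by omega)
    · intro p _ hp
      rw [Finsupp.notMem_support_iff] at hp
      simp [hp]
  · intro p hp
    rw [Nat.support_factorization, Nat.mem_primeFactors] at hp
    have := hp.1.pos
    positivity

/-- The logarithm of Chebyshev's quotient `n! ⌊n/30⌋! / (⌊n/2⌋! ⌊n/3⌋! ⌊n/5⌋!)`. -/
noncomputable def comb (n : ℕ) : ℝ :=
  Real.log (n.factorial : ℝ) - Real.log ((n / 2).factorial : ℝ) - Real.log ((n / 3).factorial : ℝ)
    - Real.log ((n / 5).factorial : ℝ) + Real.log ((n / 30).factorial : ℝ)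

/-- The coefficient `m - ⌊m/2⌋ - ⌊m/3⌋ - ⌊m/5⌋ + ⌊m/30⌋`, which takes only the values `0` and `1`. -/
def chebC (m : ℕ) : ℤ := m - (m / 2 : ℕ) - (m / 3 : ℕ) - (m / 5 : ℕ) + (m / 30 : ℕ)

theorem chebC_nonneg (m : ℕ) : 0 ≤ chebC m := by unfold chebC; omega
theorem chebC_le_one (m : ℕ) : chebC m ≤ 1 := by unfold chebC; omega
theorem chebC_eq_one (m : ℕ) (h1 : 1 ≤ m) (h2 : m < 6) : chebC m = 1 := by unfold chebC; omega
theorem chebC_zero : chebC 0 = 0 := by unfold chebC; omega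

theorem comb_eq (n : ℕ) : comb n =
    ∑ p ∈ Nat.primesLE n, ((∑ i ∈ Finset.Ico 1 (n + 1), chebC (n / p ^ i) : ℤ) : ℝ) * Real.log p := by
  unfold comb
  rw [log_factorial_eq n n le_rfl, log_factorial_eq n _ (Nat.div_le_self n 2),
    log_factorial_eq n _ (Nat.div_le_self n 3), log_factorial_eq n _ (Nat.div_le_self n 5),
    log_factorial_eq n _ (Nat.div_le_self n 30), ← Finset.sum_sub_distrib, ← Finset.sum_sub_distrib,
    ← Finset.sum_sub_distrib, ← Finset.sum_add_distrib]
  refine Finset.sum_congr rfl fun p _ => ?_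
  rw [← sub_mul, ← sub_mul, ← sub_mul, ← add_mul]
  congr 1
  push_cast
  rw [← Finset.sum_sub_distrib, ← Finset.sum_sub_distrib,
    ← Finset.sum_sub_distrib, ← Finset.sum_add_distrib]
  refine Finset.sum_congr rfl fun i _ => ?_
  simp only [chebC, Int.cast_add, Int.cast_sub, Int.cast_natCast]
  rw [Nat.div_right_comm n 2, Nat.div_right_comm n 3, Nat.div_right_comm n 5,
    Nat.div_right_comm n 30]

/-- A prime `p` in `(n/6, n]` has `1 ≤ ⌊n/p⌋ < 6`, so `log p` occurs in `comb n`. -/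
theorem th_sub_le_comb (n : ℕ) : th n - th (n / 6) ≤ comb n := by
  rw [comb_eq]
  unfold th
  have hsub : Nat.primesLE (n / 6) ⊆ Nat.primesLE n := Nat.primesLE_mono (Nat.div_le_self n 6)
  rw [← Finset.sum_sdiff hsub, add_sub_cancel_right]
  rw [← Finset.sum_sdiff hsub (f := fun p =>
    ((∑ i ∈ Finset.Ico 1 (n + 1), chebC (n / p ^ i) : ℤ) : ℝ) * Real.log p)]
  have hnn : ∀ p ∈ Nat.primesLE n, 0 ≤ Real.log p := fun p hp =>
    Real.log_natCast_nonneg p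
  have h2 : 0 ≤ ∑ p ∈ Nat.primesLE (n / 6),
      ((∑ i ∈ Finset.Ico 1 (n + 1), chebC (n / p ^ i) : ℤ) : ℝ) * Real.log p :=
    Finset.sum_nonneg fun p hp => mul_nonneg
      (by exact_mod_cast Finset.sum_nonneg fun i _ => chebC_nonneg _) (hnn p (hsub hp))
  refine le_trans (Finset.sum_le_sum fun p hp => ?_) (le_add_of_nonneg_right h2)
  rw [Finset.mem_sdiff, Nat.mem_primesLE, Nat.mem_primesLE] at hp
  obtain ⟨⟨hpn, hpp⟩, hp6⟩ := hp
  have hp6 : n / 6 < p := by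
    by_contra h
    exact hp6 ⟨by omega, hpp⟩
  have h1 : chebC (n / p ^ 1) = 1 := by
    rw [pow_one]
    refine chebC_eq_one _ ((Nat.one_le_div_iff hpp.pos).2 hpn) ?_
    rw [Nat.div_lt_iff_lt_mul hpp.pos]
    omega
  have h3 : (1 : ℤ) ≤ ∑ i ∈ Finset.Ico 1 (n + 1), chebC (n / p ^ i) := by
    rw [← h1]
    exact Finset.single_le_sum (f := fun i => chebC (n / p ^ i)) (fun i _ => chebC_nonneg _)
      (Finset.mem_Ico.2 ⟨le_rfl, by have := hpp.pos; omega⟩)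
  have h4 : (1 : ℝ) ≤ ((∑ i ∈ Finset.Ico 1 (n + 1), chebC (n / p ^ i) : ℤ) : ℝ) := by
    exact_mod_cast h3
  nlinarith [Real.log_natCast_nonneg p]

/-- In `comb n` a prime `p` has multiplicity at most `⌊log n / log p⌋`, which is `1` for `p > √n`. -/
theorem comb_le (n : ℕ) :
    comb n ≤ th n + (Nat.primesLE n.sqrt).card * Real.log n := by
  rw [comb_eq]
  unfold th
  have hsub : Nat.primesLE n.sqrt ⊆ Nat.primesLE n := Nat.primesLE_mono (Nat.sqrt_le_self n)
  have hkey : ∀ p ∈ Nat.primesLE n,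
      ((∑ i ∈ Finset.Ico 1 (n + 1), chebC (n / p ^ i) : ℤ) : ℝ) ≤ Nat.log p n := by
    intro p hp
    obtain ⟨hpn, hpp⟩ := Nat.mem_primesLE.1 hp
    have : ∑ i ∈ Finset.Ico 1 (n + 1), chebC (n / p ^ i) ≤ (Nat.log p n : ℤ) := by
      have hs : Finset.Ico 1 (Nat.log p n + 1) ⊆ Finset.Ico 1 (n + 1) :=
        Finset.Ico_subset_Ico le_rfl (by have := Nat.log_le_self p n; omega)
      rw [← Finset.sum_subset hs]
      · refine (Finset.sum_le_card_nsmul _ _ 1 fun i _ => chebC_le_one _).trans ?_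
        simp
      · intro i hi hi'
        rw [Finset.mem_Ico] at hi hi'
        have : n < p ^ i := Nat.lt_pow_of_log_lt hpp.one_lt (by omega)
        rw [Nat.div_eq_of_lt this, chebC_zero]
    exact_mod_cast this
  have hlog : ∀ p ∈ Nat.primesLE n, (Nat.log p n : ℝ) * Real.log p ≤ Real.log n := by
    intro p hp
    obtain ⟨hpn, hpp⟩ := Nat.mem_primesLE.1 hp
    rw [← Real.log_pow]
    refine Real.log_le_log (by have := hpp.pos; positivity) ?_
    exact_mod_cast Nat.pow_log_le_self p (by have := hpp.pos; omega)
  have h1 : (Nat.primesLE n.sqrt).card * Real.log n = ∑ p ∈ Nat.primesLE n,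
      if p ∈ Nat.primesLE n.sqrt then Real.log n else 0 := by
    rw [Finset.sum_ite_mem, Finset.inter_eq_right.2 hsub]; simp
  rw [h1, ← Finset.sum_add_distrib]
  refine Finset.sum_le_sum fun p hp => ?_
  have hl := Real.log_natCast_nonneg p
  obtain ⟨hpn, hpp⟩ := Nat.mem_primesLE.1 hp
  split_ifs with h
  · exact (mul_le_mul_of_nonneg_right (hkey p hp) hl).trans ((hlog p hp).trans (by linarith))
  · have h2 : n.sqrt < p := by
      by_contra h'
      exact h (Nat.mem_primesLE.2 ⟨by omega, hpp⟩)
    have h3 : Nat.log p n < 2 := Nat.log_lt_of_lt_pow (by have := hpp.pos; omega)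
      (by rw [pow_two]; exact Nat.sqrt_lt.1 h2)
    have h4 : (Nat.log p n : ℝ) ≤ 1 := by exact_mod_cast (by omega : Nat.log p n ≤ 1)
    have := hkey p hp
    nlinarith

/-! ### Elementary Stirling bounds -/

theorem le_log_factorial (m : ℕ) : m * Real.log m - m ≤ Real.log (m.factorial : ℝ) := by
  induction m with
  | zero => simp
  | succ k ih =>
    rw [Nat.factorial_succ, Nat.cast_mul, Real.log_mul (by positivity) (by positivity)]
    rcases Nat.eq_zero_or_pos k with rfl | hk
    · simp
    have hk' : (0 : ℝ) < k := by exact_mod_cast hk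
    -- `k log(1 + 1/k) ≤ 1`
    have h : Real.log (k + 1) - Real.log k ≤ 1 / k := by
      rw [← Real.log_div (by positivity) (by positivity)]
      refine (Real.log_le_sub_one_of_pos (by positivity)).trans (le_of_eq ?_)
      field_simp; ring
    have h2 : k * (Real.log (k + 1) - Real.log k) ≤ 1 := by
      calc _ ≤ k * (1 / (k:ℝ)) := by gcongr
        _ = 1 := by field_simp
    push_cast
    nlinarith

theorem log_factorial_le (m : ℕ) (hm : 1 ≤ m) :
    Real.log (m.factorial : ℝ) ≤ m * Real.log m - m + Real.log m + 1 := by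
  induction m, hm using Nat.le_induction with
  | base => simp
  | succ k hk ih =>
    rw [Nat.factorial_succ, Nat.cast_mul, Real.log_mul (by positivity) (by positivity)]
    have hk' : (0 : ℝ) < k := by exact_mod_cast hk
    -- `(k + 1) log(1 + 1/k) ≥ 1`
    have h : 1 / ((k:ℝ) + 1) ≤ Real.log (k + 1) - Real.log k := by
      rw [← Real.log_div (by positivity) (by positivity)]
      refine le_trans (le_of_eq ?_) (Real.one_sub_inv_le_log_of_pos (by positivity))
      field_simp; ring
    have h2 : 1 ≤ (k + 1) * (Real.log (k + 1) - Real.log k) := by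
      calc 1 = (k + 1) * (1 / ((k:ℝ) + 1)) := by field_simp
        _ ≤ _ := by gcongr
    push_cast
    nlinarith

theorem mul_log_sub_mono {x y : ℝ} (hx : 1 ≤ x) (hxy : x ≤ y) :
    x * Real.log x - x ≤ y * Real.log y - y := by
  have hx0 : 0 < x := by linarith
  have hy0 : 0 < y := by linarith
  have h : Real.log x - Real.log y ≤ x / y - 1 := by
    rw [← Real.log_div (by positivity) (by positivity)]
    exact Real.log_le_sub_one_of_pos (by positivity)
  have h2 : y * (Real.log x - Real.log y) ≤ x - y := by
    calc _ ≤ y * (x / y - 1) := by gcongr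
      _ = x - y := by field_simp
  have h3 := Real.log_nonneg hx
  nlinarith

theorem floor_log_factorial_bounds (n j : ℕ) (hj : 1 ≤ j) (hn : j ≤ n) :
    (n / j : ℝ) * Real.log (n / j) - n / j - Real.log (2 * n) ≤ Real.log ((n / j).factorial : ℝ) ∧
    Real.log ((n / j).factorial : ℝ) ≤
      (n / j : ℝ) * Real.log (n / j) - n / j + Real.log n + 1 := by
  have hj0 : (0 : ℝ) < j := by exact_mod_cast hj
  have hjn : (j : ℝ) ≤ n := by exact_mod_cast hn
  have h1 : (1 : ℝ) ≤ (n : ℝ) / j := by rw [le_div_iff₀ hj0]; linarith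
  set m := n / j with hm
  have hm1 : 1 ≤ m := (Nat.one_le_div_iff hj).2 hn
  have hm1' : (1 : ℝ) ≤ m := by exact_mod_cast hm1
  have hle : (m : ℝ) ≤ (n : ℝ) / j := Nat.cast_div_le
  have hlt : (n : ℝ) / j ≤ (m : ℝ) + 1 := by
    rw [div_le_iff₀ hj0]
    have := Nat.lt_div_mul_add (a := n) hj
    have h2 : n ≤ (m + 1) * j := by rw [add_mul, one_mul]; exact this.le
    exact_mod_cast h2
  have hnn : (1 : ℝ) ≤ n := by
    have : 1 ≤ n := le_trans hj hn
    exact_mod_cast this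
  have hmn : (m : ℝ) ≤ n := by exact_mod_cast Nat.div_le_self n j
  constructor
  · have h2 := le_log_factorial (m + 1)
    rw [Nat.factorial_succ, Nat.cast_mul, Real.log_mul (by positivity) (by positivity)] at h2
    push_cast at h2
    have h3 := mul_log_sub_mono h1 hlt
    have h4 : Real.log ((m : ℝ) + 1) ≤ Real.log (2 * n) :=
      Real.log_le_log (by positivity) (by linarith)
    linarith
  · have h2 := log_factorial_le m hm1
    have h3 := mul_log_sub_mono hm1' hle
    have h4 : Real.log (m : ℝ) ≤ Real.log n := Real.log_le_log (by positivity) hmn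
    linarith

/-- The constant is Chebyshev's `log (2^(1/2) * 3^(1/3) * 5^(1/5) / 30^(1/30)) = 0.92129…`. -/
theorem comb_bounds (n : ℕ) (hn : 30 ≤ n) :
    0.92129 * n - (5 * Real.log n + 5) ≤ comb n ∧ comb n ≤ 0.9213 * n + (5 * Real.log n + 5) := by
  have hn0 : (30 : ℝ) ≤ n := by exact_mod_cast hn
  have b1 := floor_log_factorial_bounds n 1 (by norm_num) (by omega)
  have b2 := floor_log_factorial_bounds n 2 (by norm_num) (by omega)
  have b3 := floor_log_factorial_bounds n 3 (by norm_num) (by omega)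
  have b5 := floor_log_factorial_bounds n 5 (by norm_num) (by omega)
  have b30 := floor_log_factorial_bounds n 30 (by norm_num) (by omega)
  have l2 : Real.log (2 * n) = Real.log 2 + Real.log n := Real.log_mul (by norm_num) (by positivity)
  have l30 : Real.log 30 = Real.log 2 + Real.log 3 + Real.log 5 := by
    rw [← Real.log_mul (by norm_num) (by norm_num), ← Real.log_mul (by norm_num) (by norm_num)]
    norm_num
  have hd : ∀ j : ℝ, 0 < j → Real.log (n / j) = Real.log n - Real.log j := fun j hj =>
    Real.log_div (by positivity) (by positivity)
  simp only [Nat.cast_one, div_one, Nat.div_one, Nat.cast_ofNat] at b1 b2 b3 b5 b30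
  rw [hd _ (by norm_num)] at b2 b3 b5 b30
  rw [l30] at b30
  rw [l2] at b1 b2 b3 b5 b30
  have e2 := Real.log_two_gt_d9
  have e2' := Real.log_two_lt_d9
  have e3 := Real.log_three_gt_d9
  have e3' := Real.log_three_lt_d9
  have e5 := Real.log_five_gt_d9
  have e5' := Real.log_five_lt_d9
  have hA : (0.92129:ℝ) ≤ Real.log 2 / 2 + Real.log 3 / 3 + Real.log 5 / 5
      - (Real.log 2 + Real.log 3 + Real.log 5) / 30 := by linarith
  have hA' : Real.log 2 / 2 + Real.log 3 / 3 + Real.log 5 / 5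
      - (Real.log 2 + Real.log 3 + Real.log 5) / 30 ≤ (0.9213:ℝ) := by linarith
  have m1 := mul_le_mul_of_nonneg_right hA (show (0:ℝ) ≤ n by positivity)
  have m2 := mul_le_mul_of_nonneg_right hA' (show (0:ℝ) ≤ n by positivity)
  unfold comb
  constructor <;> linarith

/-! ### Explicit Chebyshev bounds -/

theorem th_le_log_four (n : ℕ) : th n ≤ Real.log 4 * n := by
  unfold th
  rw [← Chebyshev.theta_eq_sum_primesLE_log]
  exact Chebyshev.theta_le_log4_mul_x (Nat.cast_nonneg n)

/-- Iterating `th n - th (n / 6) ≤ comb n` gives the slope `6/5 * 0.9213 < 1.13`, the excess absorbing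
the logarithmic error for `n ≥ 2500`; below that `θ(n) ≤ n log 4` suffices. -/
theorem th_le (n : ℕ) : th n ≤ 1.13 * n + 650 := by
  induction n using Nat.strong_induction_on with
  | _ n ih =>
    rcases lt_or_ge n 2500 with hn | hn
    · have h1 := th_le_log_four n
      have h2 : Real.log 4 ≤ 1.387 := by
        rw [Real.log_four_eq]; linarith [Real.log_two_lt_d9]
      have h3 : (n : ℝ) ≤ 2500 := by exact_mod_cast hn.le
      have h4 : (0 : ℝ) ≤ n := Nat.cast_nonneg n
      nlinarith
    · have h1 := th_sub_le_comb n
      have h2 := (comb_bounds n (by omega)).2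
      have h3 := ih (n / 6) (by omega)
      have h4 : ((n / 6 : ℕ) : ℝ) ≤ (n : ℝ) / 6 := by exact_mod_cast Nat.cast_div_le (α := ℝ) (m := n) (n := 6)
      have hn' : (2500 : ℝ) ≤ n := by exact_mod_cast hn
      -- tangent line of the logarithm at `2500`
      have h5 : Real.log n ≤ 7.825 + (n / 2500 - 1) := by
        have e1 : Real.log (n : ℝ) = Real.log 2500 + Real.log (n / 2500) := by
          rw [← Real.log_mul (by norm_num) (by positivity)]; congr 1; field_simp
        have e2 : Real.log 2500 = 2 * Real.log 2 + 4 * Real.log 5 := by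
          rw [show (2500 : ℝ) = 2 ^ 2 * 5 ^ 4 by norm_num,
            Real.log_mul (by norm_num) (by norm_num), Real.log_pow, Real.log_pow]
          norm_num
        have e3 := Real.log_le_sub_one_of_pos (show (0 : ℝ) < n / 2500 by positivity)
        linarith [Real.log_two_lt_d9, Real.log_five_lt_d9]
      linarith

/-- Primes larger than `6` lie in two residue classes modulo `6`. -/
theorem card_primesLE_le (s : ℕ) (hs : 6 ≤ s) : ((Nat.primesLE s).card : ℝ) ≤ s / 3 + 3 := by
  rw [Nat.primesLE_card_eq_primeCounting, Nat.primeCounting]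
  obtain ⟨m, rfl⟩ := Nat.exists_eq_add_of_le hs
  have h := Nat.primeCounting'_add_le (a := 6) (k := 7) (by norm_num) (by norm_num) m
  have h7 : Nat.primeCounting' 7 = 3 := by decide
  have h6 : Nat.totient 6 = 2 := by decide
  rw [h7, h6] at h
  have h8 : 3 * Nat.primeCounting' (6 + m + 1) ≤ (6 + m) + 9 := by
    rw [show 6 + m + 1 = 7 + m by omega]; omega
  have h9 : (3 : ℝ) * Nat.primeCounting' (6 + m + 1) ≤ ((6 + m : ℕ) : ℝ) + 9 := by exact_mod_cast h8
  linarith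

theorem log_le_mul_sqrt {n : ℕ} (hn : 2 ^ 18 ≤ n) : Real.log n ≤ 0.02437 * √n := by
  have hn' : (2 : ℝ) ^ 18 ≤ n := by exact_mod_cast hn
  have hX : Real.exp 2 ≤ (2 : ℝ) ^ 18 := by
    have := Real.exp_one_lt_three
    rw [show (2 : ℝ) = 1 + 1 by norm_num, Real.exp_add]
    nlinarith [Real.exp_pos 1]
  have h := Real.log_div_sqrt_antitoneOn (Set.mem_ofPred_eq ▸ hX) (Set.mem_ofPred_eq ▸ hX.trans hn') hn'
  have h1 : √((2 : ℝ) ^ 18) = 512 := by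
    rw [show (2 : ℝ) ^ 18 = 512 ^ 2 by norm_num]; exact Real.sqrt_sq (by norm_num)
  simp only [h1, Real.log_pow] at h
  have h0 : 0 < √(n : ℝ) := Real.sqrt_pos.2 (by linarith [show (0 : ℝ) < 2 ^ 18 by norm_num])
  have h2 : Real.log n / √n ≤ 0.02437 := h.trans (by
    norm_num; linarith [Real.log_two_lt_d9])
  rwa [div_le_iff₀ h0] at h2

theorem sqrt_ge {n : ℕ} (hn : 2 ^ 18 ≤ n) : 512 ≤ √(n : ℝ) := by
  have hn' : (2 : ℝ) ^ 18 ≤ n := by exact_mod_cast hn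
  exact Real.le_sqrt_of_sq_le (by norm_num at hn' ⊢; linarith)

theorem le_th {n : ℕ} (hn : 2 ^ 18 ≤ n) : 0.912 * n ≤ th n := by
  have h1 := comb_le n
  have h2 := (comb_bounds n (by omega)).1
  have hs : 6 ≤ n.sqrt := by rw [Nat.le_sqrt]; omega
  have h3 := card_primesLE_le n.sqrt hs
  have h4 : (n.sqrt : ℝ) ≤ √(n : ℝ) := Real.nat_sqrt_le_real_sqrt
  have h5 := log_le_mul_sqrt hn
  have h6 := sqrt_ge hn
  have h7 : (n : ℝ) = √(n : ℝ) ^ 2 := (Real.sq_sqrt (Nat.cast_nonneg n)).symm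
  have h8 : 0 ≤ Real.log (n : ℝ) := Real.log_natCast_nonneg n
  set r := √(n : ℝ)
  have h9 : ((Nat.primesLE n.sqrt).card : ℝ) * Real.log n ≤ (r / 3 + 3) * (0.02437 * r) :=
    mul_le_mul (by linarith) h5 h8 (by linarith)
  nlinarith

/-! ### Explicit form of Mertens' first theorem -/

theorem log_factorial_eq_factorization (n : ℕ) :
    Real.log (n.factorial : ℝ) =
      ∑ p ∈ Nat.primesLE n, (n.factorial.factorization p : ℝ) * Real.log p := by
  rw [log_factorial_eq n n le_rfl]
  refine Finset.sum_congr rfl fun p hp => ?_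
  rw [Nat.factorization_factorial (Nat.prime_of_mem_primesLE hp) (b := n + 1)]
  exact lt_of_le_of_lt (Nat.log_le_self p n) (by omega)

/-- The sum `∑_{p ≤ n} log p / (p - 1)`, which is `log n + O(1)` by Mertens' first theorem. -/
noncomputable def G (n : ℕ) : ℝ := ∑ p ∈ Nat.primesLE n, Real.log p / (p - 1)

/-- Since the exponent of `p` in `m!` is at most `m / (p - 1)`, `log m! ≤ m * G m`. -/
theorem G_ge (m : ℕ) (hm : 1 ≤ m) : Real.log m - 1 ≤ G m := by
  have hm' : (0 : ℝ) < m := by exact_mod_cast hm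
  have h1 := le_log_factorial m
  have h2 : Real.log (m.factorial : ℝ) ≤ m * G m := by
    rw [log_factorial_eq_factorization, G, Finset.mul_sum]
    refine Finset.sum_le_sum fun p hp => ?_
    have hpp := Nat.prime_of_mem_primesLE hp
    have hp1 : (0 : ℝ) < (p : ℝ) - 1 := by
      have : (1 : ℝ) < p := by exact_mod_cast hpp.one_lt
      linarith
    have h3 : (p - 1) * m.factorial.factorization p ≤ m := by
      rw [Nat.sub_one_mul_factorization_factorial hpp]; exact Nat.sub_le _ _
    have h4 : ((p : ℝ) - 1) * (m.factorial.factorization p : ℝ) ≤ m := by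
      have : ((p - 1 : ℕ) : ℝ) * (m.factorial.factorization p : ℝ) ≤ m := by exact_mod_cast h3
      rwa [Nat.cast_sub hpp.one_le, Nat.cast_one] at this
    rw [mul_div_left_comm, mul_comm (Real.log (p : ℝ))]
    refine mul_le_mul_of_nonneg_right ?_ (Real.log_natCast_nonneg p)
    rw [le_div_iff₀ hp1]; linarith
  have h3 : (m : ℝ) * (Real.log m - 1) ≤ m * G m := by linarith
  exact le_of_mul_le_mul_left h3 hm'

/-- For `p ≤ √n` the difference `n/(p-1) - v_p(n!)` is the digit sum of `n` in base `p` divided by `p - 1`,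
hence at most the number of digits. -/
theorem factorial_small_prime (n p : ℕ) (hp : p.Prime) (hps : p ≤ n.sqrt) :
    ((n : ℝ) / (p - 1) - n.factorial.factorization p) * Real.log p ≤ 1.5 * Real.log n := by
  have hp1 : (0 : ℝ) < (p : ℝ) - 1 := by
    have : (1 : ℝ) < p := by exact_mod_cast hp.one_lt
    linarith
  have hsq : p * p ≤ n := Nat.le_sqrt.1 hps
  have hn0 : n ≠ 0 := by have := Nat.mul_pos hp.pos hp.pos; omega
  have h1 := Nat.sub_one_mul_factorization_factorial (n := n) hp
  have hdig : (p.digits n).sum ≤ (Nat.log p n + 1) * (p - 1) := by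
    have h := List.sum_le_card_nsmul (p.digits n) (p - 1) (fun d hd => by
      have := Nat.digits_lt_base hp.one_lt hd; omega)
    rwa [Nat.length_digits p n hp.one_lt hn0, smul_eq_mul] at h
  have h2 : n ≤ (p - 1) * n.factorial.factorization p + (Nat.log p n + 1) * (p - 1) := by omega
  have h3 : (n : ℝ) ≤ (p - 1) * n.factorial.factorization p + (Nat.log p n + 1) * (p - 1) := by
    have : (n : ℝ) ≤ ((p - 1 : ℕ) : ℝ) * n.factorial.factorization p +
      (Nat.log p n + 1) * ((p - 1 : ℕ) : ℝ) := by exact_mod_cast h2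
    rwa [Nat.cast_sub hp.one_le, Nat.cast_one] at this
  have h4 : (n : ℝ) / (p - 1) - n.factorial.factorization p ≤ Nat.log p n + 1 := by
    rw [sub_le_iff_le_add, div_le_iff₀ hp1]; linarith
  have h5 : (Nat.log p n : ℝ) * Real.log p ≤ Real.log n := by
    rw [← Real.log_pow]
    refine Real.log_le_log (by have := hp.pos; positivity) ?_
    exact_mod_cast Nat.pow_log_le_self p hn0
  have h6 : 2 * Real.log p ≤ Real.log n := by
    have : Real.log ((p : ℝ) ^ 2) ≤ Real.log n := by
      refine Real.log_le_log (by have := hp.pos; positivity) ?_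
      rw [pow_two]; exact_mod_cast hsq
    rwa [Real.log_pow] at this
  have := mul_le_mul_of_nonneg_right h4 (Real.log_natCast_nonneg p)
  linarith

/-- For `√n < p ≤ n` the difference `n/(p-1) - v_p(n!)` is the fractional part of `n/p` plus a small error;
the fractional part is at most `2/3` for `p > 3n/5` and at most `1/3` for `p > 3n/4`. -/
theorem factorial_large_prime (n p : ℕ) (hp : p.Prime) (hps : n.sqrt < p) (hpn : p ≤ n) :
    (n : ℝ) / (p - 1) - n.factorial.factorization p ≤
      1 - (if 3 * n / 5 < p then 1 / 3 else 0) - (if 3 * n / 4 < p then 1 / 3 else 0)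
        + n * (1 / (p * (p - 1))) := by
  have hp0 : (0 : ℝ) < (p : ℝ) := by exact_mod_cast hp.pos
  have hp1 : (0 : ℝ) < (p : ℝ) - 1 := by
    have : (1 : ℝ) < p := by exact_mod_cast hp.one_lt
    linarith
  have hlog : Nat.log p n < 2 := Nat.log_lt_of_lt_pow (by have := hp.pos; omega)
      (by rw [pow_two]; exact Nat.sqrt_lt.1 hps)
  have hf : n.factorial.factorization p = n / p := by
    rw [Nat.factorization_factorial hp hlog]; simp
  have e : (n : ℝ) / (p - 1) = n / p + n * (1 / (p * (p - 1))) := by field_simp; ring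
  rw [hf, e]
  have h1 : 1 ≤ n / p := (Nat.one_le_div_iff hp.pos).2 hpn
  have h1' : (1 : ℝ) ≤ ((n / p : ℕ) : ℝ) := by exact_mod_cast h1
  have hfl : (n : ℝ) / p ≤ ((n / p : ℕ) : ℝ) + 1 := by
    rw [div_le_iff₀ hp0]
    have := Nat.lt_div_mul_add (a := n) hp.pos
    have h2 : n ≤ (n / p + 1) * p := by rw [add_mul, one_mul]; exact this.le
    exact_mod_cast h2
  have h5 : 3 * n / 5 < p → (n : ℝ) / p ≤ 5 / 3 := by
    intro h
    rw [div_le_iff₀ hp0]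
    have : (3 * n : ℝ) ≤ 5 * p := by exact_mod_cast (by omega : 3 * n ≤ 5 * p)
    linarith
  have h4 : 3 * n / 4 < p → (n : ℝ) / p ≤ 4 / 3 := by
    intro h
    rw [div_le_iff₀ hp0]
    have : (3 * n : ℝ) ≤ 4 * p := by exact_mod_cast (by omega : 3 * n ≤ 4 * p)
    linarith
  split_ifs with a b b
  · have := h4 b; linarith
  · have := h5 a; linarith
  · exfalso; omega
  · linarith

/-- The tail is compared with the telescoping differences of `(log x + 1.01) / x`. -/
theorem sum_log_div_le (s n : ℕ) (hs : 200 ≤ s) (hn : s ≤ n) :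
    ∑ p ∈ Nat.primesLE n \ Nat.primesLE s, Real.log p * (1 / ((p : ℝ) * (p - 1))) ≤
      (Real.log s + 1.01) / s := by
  have hsub : Nat.primesLE n \ Nat.primesLE s ⊆ Finset.Ioc s n := by
    intro p hp
    rw [Finset.mem_sdiff, Nat.mem_primesLE, Nat.mem_primesLE] at hp
    rw [Finset.mem_Ioc]
    refine ⟨?_, hp.1.1⟩
    by_contra h
    exact hp.2 ⟨by omega, hp.1.2⟩
  refine (Finset.sum_le_sum_of_subset_of_nonneg hsub fun p hp _ => ?_).trans ?_
  · rw [Finset.mem_Ioc] at hp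
    have : (1 : ℝ) ≤ p := by exact_mod_cast (by omega : 1 ≤ p)
    have : 0 ≤ (p : ℝ) - 1 := by linarith
    have := Real.log_natCast_nonneg p
    positivity
  · suffices h : ∑ p ∈ Finset.Ioc s n, Real.log p * (1 / ((p : ℝ) * (p - 1))) ≤
        (Real.log s + 1.01) / s - (Real.log n + 1.01) / n by
      have : 0 ≤ (Real.log n + 1.01) / n := by
        have := Real.log_natCast_nonneg n
        positivity
      linarith
    induction n, hn using Nat.le_induction with
    | base => simp
    | succ m hm ih =>
      have hih := ih (by
        intro p hp
        rw [Finset.mem_sdiff, Nat.mem_primesLE, Nat.mem_primesLE] at hp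
        rw [Finset.mem_Ioc]
        refine ⟨?_, hp.1.1⟩
        by_contra h
        exact hp.2 ⟨by omega, hp.1.2⟩)
      rw [← Finset.insert_Ioc_right_eq_Ioc_add_one hm, Finset.sum_insert (by simp)]
      have hm0 : (200 : ℝ) ≤ m := by exact_mod_cast hs.trans hm
      have hstep : Real.log ((m + 1 : ℕ) : ℝ) * (1 / (((m + 1 : ℕ) : ℝ) * (((m + 1 : ℕ) : ℝ) - 1))) ≤
          (Real.log m + 1.01) / m - (Real.log ((m + 1 : ℕ) : ℝ) + 1.01) / ((m + 1 : ℕ) : ℝ) := by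
        push_cast
        have h1 : Real.log ((m : ℝ) + 1) - Real.log m ≤ 1 / m := by
          rw [← Real.log_div (by positivity) (by positivity)]
          refine (Real.log_le_sub_one_of_pos (by positivity)).trans (le_of_eq ?_)
          field_simp; ring
        have h2 : ((m : ℝ) + 1) * (Real.log ((m : ℝ) + 1) - Real.log m) ≤ 1.01 := by
          calc _ ≤ ((m : ℝ) + 1) * (1 / m) := by gcongr
            _ = 1 + 1 / m := by field_simp
            _ ≤ 1 + 1 / 200 := by gcongr
            _ ≤ _ := by norm_num
        rw [add_sub_cancel_right, div_sub_div _ _ (by positivity) (by positivity),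
          mul_one_div, mul_comm ((m : ℝ) + 1) m, div_le_div_iff_of_pos_right (by positivity)]
        linarith
      linarith

/-- The upper bound matching `G_ge`. The saving for the primes in `(3n/5, n]` leaves
`(θ(n) + θ(3n/5) + θ(3n/4)) / 3` as the main term; keeping `θ(n)` symbolic matters, because a large
`θ(n)` also increases the right-hand side of the inequality to be proved. -/
theorem G_le {n : ℕ} (hn : 2 ^ 18 ≤ n) :
    n * (G n - Real.log n + 1) ≤ th n / 3 + 0.537 * n := by
  set s := n.sqrt with hs
  have hs512 : 512 ≤ s := by rw [hs, Nat.le_sqrt]; omega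
  have hsn : s ≤ n := Nat.sqrt_le_self n
  have hr := sqrt_ge hn
  have hlogr := log_le_mul_sqrt hn
  have hrn : (n : ℝ) = √(n : ℝ) ^ 2 := (Real.sq_sqrt (Nat.cast_nonneg n)).symm
  have hsr : (s : ℝ) ≤ √(n : ℝ) := Real.nat_sqrt_le_real_sqrt
  have hrs : √(n : ℝ) ≤ s + 1 := Real.real_sqrt_le_nat_sqrt_succ
  have hlog0 : 0 ≤ Real.log (n : ℝ) := Real.log_natCast_nonneg n
  have hsub : Nat.primesLE s ⊆ Nat.primesLE n := Nat.primesLE_mono hsn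
  have hfact := log_factorial_le n (by omega)
  have hn0 : (0 : ℝ) < n := by exact_mod_cast (by omega : 0 < n)
  have hdiff : n * G n - Real.log (n.factorial : ℝ) =
      ∑ p ∈ Nat.primesLE n, ((n : ℝ) / (p - 1) - n.factorial.factorization p) * Real.log p := by
    rw [log_factorial_eq_factorization, G, Finset.mul_sum, ← Finset.sum_sub_distrib]
    refine Finset.sum_congr rfl fun p _ => ?_
    ring
  rw [← Finset.sum_sdiff hsub] at hdiff
  have hsmall : ∑ p ∈ Nat.primesLE s,
      ((n : ℝ) / (p - 1) - n.factorial.factorization p) * Real.log p ≤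
      (s / 3 + 3) * (1.5 * Real.log n) := by
    refine (Finset.sum_le_card_nsmul _ _ (1.5 * Real.log n) fun p hp =>
      factorial_small_prime n p (Nat.prime_of_mem_primesLE hp) (Nat.le_of_mem_primesLE hp)).trans ?_
    rw [nsmul_eq_mul]
    exact mul_le_mul_of_nonneg_right (card_primesLE_le s (by omega)) (by positivity)
  have hcut : ∀ k, k ≤ n → ∑ p ∈ Nat.primesLE n, (if k < p then (1 / 3 : ℝ) else 0) * Real.log p =
      (th n - th k) / 3 := by
    intro k hk
    unfold th
    rw [← Finset.sum_sdiff (Nat.primesLE_mono hk), ← Finset.sum_sdiff (Nat.primesLE_mono hk)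
      (f := fun p : ℕ => Real.log (p : ℝ)), add_sub_cancel_right, Finset.sum_div]
    rw [Finset.sum_eq_zero (s := Nat.primesLE k), add_zero]
    · refine Finset.sum_congr rfl fun p hp => ?_
      rw [Finset.mem_sdiff, Nat.mem_primesLE, Nat.mem_primesLE] at hp
      rw [if_pos]
      · ring
      · by_contra h
        exact hp.2 ⟨by omega, hp.1.2⟩
    · intro p hp
      rw [if_neg (by have := Nat.le_of_mem_primesLE hp; omega), zero_mul]
  have hlarge : ∑ p ∈ Nat.primesLE n \ Nat.primesLE s,
      ((n : ℝ) / (p - 1) - n.factorial.factorization p) * Real.log p ≤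
      (th n - (th n - th (3 * n / 5)) / 3 - (th n - th (3 * n / 4)) / 3) +
        n * ((Real.log s + 1.01) / s) := by
    have h1 : ∑ p ∈ Nat.primesLE n \ Nat.primesLE s,
        ((n : ℝ) / (p - 1) - n.factorial.factorization p) * Real.log p ≤
        ∑ p ∈ Nat.primesLE n \ Nat.primesLE s,
          ((1 - (if 3 * n / 5 < p then 1 / 3 else 0) - (if 3 * n / 4 < p then 1 / 3 else 0))
            * Real.log p + n * (Real.log p * (1 / ((p : ℝ) * (p - 1))))) := by
      refine Finset.sum_le_sum fun p hp => ?_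
      rw [Finset.mem_sdiff, Nat.mem_primesLE, Nat.mem_primesLE] at hp
      have hsp : s < p := by
        by_contra h
        exact hp.2 ⟨by omega, hp.1.2⟩
      have := mul_le_mul_of_nonneg_right (factorial_large_prime n p hp.1.2 hsp hp.1.1)
        (Real.log_natCast_nonneg p)
      refine this.trans (le_of_eq ?_)
      ring
    refine h1.trans ?_
    rw [Finset.sum_add_distrib, ← Finset.mul_sum]
    refine add_le_add ?_ (mul_le_mul_of_nonneg_left (sum_log_div_le s n (by omega) hsn) hn0.le)
    rw [← hcut _ (by omega), ← hcut _ (by omega)]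
    unfold th
    rw [← Finset.sum_sub_distrib, ← Finset.sum_sub_distrib]
    refine (Finset.sum_le_sum_of_subset_of_nonneg Finset.sdiff_subset fun p _ _ => ?_).trans
      (le_of_eq (Finset.sum_congr rfl fun p _ => ?_))
    · refine mul_nonneg ?_ (Real.log_natCast_nonneg p)
      split_ifs <;> norm_num
    · ring
  have ht5 := th_le (3 * n / 5)
  have ht4 := th_le (3 * n / 4)
  have c5 : ((3 * n / 5 : ℕ) : ℝ) ≤ 3 * n / 5 := by
    exact_mod_cast Nat.cast_div_le (α := ℝ) (m := 3 * n) (n := 5)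
  have c4 : ((3 * n / 4 : ℕ) : ℝ) ≤ 3 * n / 4 := by
    exact_mod_cast Nat.cast_div_le (α := ℝ) (m := 3 * n) (n := 4)
  have hs0 : (512 : ℝ) ≤ s := by exact_mod_cast hs512
  have hlogs : 2 * Real.log s ≤ Real.log n := by
    have : Real.log ((s : ℝ) ^ 2) ≤ Real.log n := by
      refine Real.log_le_log (by positivity) ?_
      rw [pow_two]; exact_mod_cast Nat.sqrt_le n
    rwa [Real.log_pow] at this
  have htail : (Real.log s + 1.01) / s ≤ 0.0142 := by
    rw [div_le_iff₀ (by positivity)]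
    linarith
  have htail' : n * ((Real.log s + 1.01) / s) ≤ n * 0.0142 :=
    mul_le_mul_of_nonneg_left htail hn0.le
  have hsm : (s / 3 + 3) * (1.5 * Real.log n) ≤ (√n / 3 + 3) * (1.5 * (0.02437 * √n)) :=
    mul_le_mul (by linarith) (by linarith) (by positivity) (by positivity)
  nlinarith

/-! ### Partial summation for the reciprocals of the primes -/

/-- The sum of the reciprocals of the primes up to `n`. -/
noncomputable def recipSum (n : ℕ) : ℝ := ∑ p ∈ Nat.primesLE n, 1 / (p : ℝ)

/-- A lower approximation to `∑_{p ≤ n} 1/p - log log n`, shown to be monotone in `n` by partial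
summation. -/
noncomputable def mertensLow (n : ℕ) : ℝ :=
  recipSum n - Real.log (Real.log n) - (G n - Real.log n + 1) / Real.log n - 2 / n

theorem mertensLow_le_succ (m : ℕ) (hm : 5 ≤ m) : mertensLow m ≤ mertensLow (m + 1) := by
  have hm' : (5 : ℝ) ≤ m := by exact_mod_cast hm
  have hg := G_ge m (by omega)
  obtain ⟨x, hx0, hx1, hR, hG⟩ : ∃ x : ℝ, 0 ≤ x ∧ x ≤ 1 ∧
      recipSum (m + 1) = recipSum m + x / (m + 1) ∧
      G (m + 1) = G m + x * Real.log (m + 1) / m := by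
    by_cases hp : (m + 1).Prime
    · refine ⟨1, by norm_num, le_rfl, ?_, ?_⟩
      · rw [recipSum, recipSum, Nat.primesLE_succ, if_pos hp, Finset.sum_insert (by simp [Nat.mem_primesLE])]
        push_cast; ring
      · rw [G, G, Nat.primesLE_succ, if_pos hp, Finset.sum_insert (by simp [Nat.mem_primesLE])]
        push_cast; rw [add_sub_cancel_right]; ring
    · refine ⟨0, le_rfl, by norm_num, ?_, ?_⟩
      · rw [recipSum, recipSum, Nat.primesLE_succ, if_neg hp]; simp
      · rw [G, G, Nat.primesLE_succ, if_neg hp]; simp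
  unfold mertensLow
  rw [hR, hG]
  push_cast
  set L := Real.log (m : ℝ) with hL
  set L' := Real.log ((m : ℝ) + 1) with hL'
  have hL5 : 1.5 ≤ L := by
    have : Real.log 5 ≤ L := Real.log_le_log (by norm_num) hm'
    linarith [Real.log_five_gt_d9]
  have hLL : L ≤ L' := Real.log_le_log (by linarith) (by linarith)
  have hl : L' - L ≤ 1 / m := by
    rw [hL, hL', ← Real.log_div (by positivity) (by positivity)]
    refine (Real.log_le_sub_one_of_pos (by positivity)).trans (le_of_eq ?_)
    field_simp; ring
  have hb : Real.log L' - Real.log L ≤ (L' - L) / L := by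
    rw [← Real.log_div (by linarith) (by linarith)]
    refine (Real.log_le_sub_one_of_pos (div_pos (by linarith) (by linarith))).trans (le_of_eq ?_)
    have : L ≠ 0 := by linarith
    field_simp
  have hL0 : 0 < L := by linarith
  have hL0' : 0 < L' := by linarith
  -- the second-order error of replacing `log L' - log L` by `(L' - L) / L'`
  have hq : (L' - L) / L - (L' - L) / L' ≤ 1 / (m * (m + 1)) := by
    have e : (L' - L) / L - (L' - L) / L' = (L' - L) ^ 2 / (L * L') := by field_simp
    rw [e, div_le_div_iff₀ (by positivity) (by positivity)]
    have h1 : (L' - L) ^ 2 ≤ (1 / m) ^ 2 := by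
      have : 0 ≤ L' - L := by linarith
      gcongr
    have h2 : (L' - L) ^ 2 * (m * (m + 1)) ≤ (1 / (m : ℝ)) ^ 2 * (m * (m + 1)) := by gcongr
    have h3 : (1 / (m : ℝ)) ^ 2 * (m * (m + 1)) = 1 + 1 / m := by field_simp
    have h4 : 1 / (m : ℝ) ≤ 1 / 5 := by gcongr
    nlinarith
  have hgg : (G m - L + 1) / L' ≤ (G m - L + 1) / L := by
    apply div_le_div_of_nonneg_left (by linarith) hL0 hLL
  have e1 : (G m + x * L' / m - L' + 1) / L' = (G m - L + 1) / L' + x / m - (L' - L) / L' := by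
    field_simp; ring
  have e2 : x / m - x / (m + 1) = x * (1 / (m * (m + 1))) := by field_simp; ring
  have e3 : 2 / (m : ℝ) - 2 / (m + 1) = 2 * (1 / (m * (m + 1))) := by field_simp; ring
  have e4 : x * (1 / ((m : ℝ) * (m + 1))) ≤ 1 * (1 / (m * (m + 1))) := by gcongr
  rw [e1]
  linarith

/-- A lower bound for `∑_{p ≤ m} 1/p` valid for all `m ≥ n`, with a constant determined by `n` and the
primes up to `n`. -/
theorem le_recipSum {n m : ℕ} (hn : 5 ≤ n) (hm : n ≤ m) :
    Real.log (Real.log m) + mertensLow n ≤ recipSum m := by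
  have h1 : mertensLow n ≤ mertensLow m := by
    induction m, hm using Nat.le_induction with
    | base => exact le_rfl
    | succ k hk ih => exact ih.trans (mertensLow_le_succ k (by omega))
  have hg := G_ge m (by omega)
  have h2 : 0 ≤ (G m - Real.log m + 1) / Real.log m :=
    div_nonneg (by linarith) (Real.log_natCast_nonneg m)
  have h3 : (0 : ℝ) ≤ 2 / m := by positivity
  unfold mertensLow at h1 ⊢
  linarith

/-! ### Euler products and the constant in Mertens' theorem -/

/-- The completely multiplicative function `n ↦ n^(-s)` on the natural numbers, for real `s ≠ 0`. -/
noncomputable def rpowHom (s : ℝ) (hs : s ≠ 0) : ℕ →*₀ ℝ where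
  toFun n := 1 / (n : ℝ) ^ s
  map_zero' := by simp [Real.zero_rpow hs]
  map_one' := by simp
  map_mul' a b := by
    rw [Nat.cast_mul, Real.mul_rpow (Nat.cast_nonneg a) (Nat.cast_nonneg b)]
    field_simp

/-- The Euler product of the Riemann zeta function at real `s > 1`. -/
theorem tendsto_euler {s : ℝ} (hs : 1 < s) :
    Tendsto (fun M : ℕ => ∏ p ∈ Nat.primesLE M, (1 - 1 / (p : ℝ) ^ s)⁻¹) atTop
      (𝓝 (∑' n : ℕ, 1 / (n : ℝ) ^ s)) := by
  have hsum : Summable (fun n : ℕ => 1 / (n : ℝ) ^ s) := Real.summable_one_div_nat_rpow.2 hs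
  have h := EulerProduct.eulerProduct_completely_multiplicative
    (f := rpowHom s (by linarith)) (hsum.norm)
  exact (tendsto_add_atTop_iff_nat 1).2 h

theorem one_div_rpow_lt_one {s : ℝ} (hs : 0 < s) {p : ℕ} (hp : p.Prime) :
    0 < 1 / (p : ℝ) ^ s ∧ 1 / (p : ℝ) ^ s < 1 := by
  have hp1 : (1 : ℝ) < p := by exact_mod_cast hp.one_lt
  have h := Real.one_lt_rpow hp1 hs
  exact ⟨by positivity, by rw [div_lt_one (by linarith)]; exact h⟩

theorem prod_euler_le {s : ℝ} (hs : 1 < s) (M : ℕ) :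
    ∏ p ∈ Nat.primesLE M, (1 - 1 / (p : ℝ) ^ s)⁻¹ ≤ ∑' n : ℕ, 1 / (n : ℝ) ^ s := by
  refine Monotone.ge_of_tendsto ?_ (tendsto_euler hs) M
  intro a b hab
  have hone : ∀ p ∈ Nat.primesLE b, 1 ≤ (1 - 1 / (p : ℝ) ^ s)⁻¹ := fun p hp => by
    have := one_div_rpow_lt_one (by linarith : 0 < s) (Nat.prime_of_mem_primesLE hp)
    exact (one_le_inv₀ (by linarith)).2 (by linarith)
  have hsub : Nat.primesLE a ⊆ Nat.primesLE b := Nat.primesLE_mono hab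
  simp only
  rw [← Finset.prod_sdiff hsub]
  refine le_mul_of_one_le_left (Finset.prod_nonneg fun p hp =>
    zero_le_one.trans (hone p (hsub hp))) ?_
  exact Finset.prod_induction _ (fun x : ℝ => 1 ≤ x) (fun _ _ => one_le_mul_of_one_le_of_one_le)
    le_rfl fun p hp => hone p (Finset.sdiff_subset hp)

/-- Contribution of the higher prime powers to the logarithm of an Euler factor. -/
noncomputable def eulerTail (s : ℝ) (p : ℕ) : ℝ :=
  -Real.log (1 - 1 / (p : ℝ) ^ s) - 1 / (p : ℝ) ^ s

theorem sum_le_log_zeta {s : ℝ} (hs : 1 < s) {n M : ℕ} (h : n ≤ M) :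
    ∑ p ∈ Nat.primesLE M, 1 / (p : ℝ) ^ s + ∑ p ∈ Nat.primesLE n, eulerTail s p ≤
      Real.log (∑' n : ℕ, 1 / (n : ℝ) ^ s) := by
  have hb : ∀ p ∈ Nat.primesLE M, 0 < 1 / (p : ℝ) ^ s ∧ 1 / (p : ℝ) ^ s < 1 := fun p hp =>
    one_div_rpow_lt_one (by linarith : 0 < s) (Nat.prime_of_mem_primesLE hp)
  have h1 : ∑ p ∈ Nat.primesLE n, eulerTail s p ≤ ∑ p ∈ Nat.primesLE M, eulerTail s p := by
    refine Finset.sum_le_sum_of_subset_of_nonneg (Nat.primesLE_mono h) fun p hp _ => ?_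
    have h2 := hb p hp
    have := Real.log_le_sub_one_of_pos (show 0 < 1 - 1 / (p : ℝ) ^ s by linarith)
    unfold eulerTail; linarith
  have h3 : Real.log (∏ p ∈ Nat.primesLE M, (1 - 1 / (p : ℝ) ^ s)⁻¹) =
      ∑ p ∈ Nat.primesLE M, 1 / (p : ℝ) ^ s + ∑ p ∈ Nat.primesLE M, eulerTail s p := by
    rw [Real.log_prod, ← Finset.sum_add_distrib]
    · refine Finset.sum_congr rfl fun p _ => ?_
      rw [Real.log_inv, eulerTail]; ring
    · intro p hp
      have := hb p hp
      exact inv_ne_zero (by linarith)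
  have h4 := Real.log_le_log (Finset.prod_pos fun p hp => inv_pos.2 (by have := hb p hp; linarith))
    (prod_euler_le hs M)
  linarith

/-- Abel summation: if `E` is eventually at least `C`, then so is `∑ q^k (E k - E (k-1))`, up to an
error vanishing as `q → 1`. -/
theorem abel_lower (E : ℕ → ℝ) (C : ℝ) (k₀ : ℕ) (h0 : E 0 = 0) (hE : ∀ k, k₀ ≤ k → C ≤ E k) :
    ∃ B : ℝ, ∀ q : ℝ, 0 < q → q < 1 → ∀ K, k₀ ≤ K →
      C - (1 - q) * B ≤ ∑ k ∈ Finset.range K, q ^ (k + 1) * (E (k + 1) - E k) := by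
  refine ⟨∑ k ∈ Finset.range k₀, |E k - C|, fun q hq0 hq1 K hK => ?_⟩
  have key : ∀ K, C - (1 - q) * ∑ k ∈ Finset.range K, (if k < k₀ then |E k - C| else 0) ≤
      ∑ k ∈ Finset.range K, q ^ (k + 1) * (E (k + 1) - E k) - q ^ K * (E K - C) := by
    intro K
    induction K with
    | zero => simp [h0]
    | succ K ih =>
      rw [Finset.sum_range_succ, Finset.sum_range_succ]
      have h2 : -(1 - q) * (if K < k₀ then |E K - C| else 0) ≤ q ^ K * (1 - q) * (E K - C) := by
        split_ifs with h
        · have h3 : q ^ K ≤ 1 := pow_le_one₀ hq0.le hq1.le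
          have h4 : 0 < q ^ K := by positivity
          have h5 := neg_abs_le (E K - C)
          have h6 : -|E K - C| ≤ q ^ K * (E K - C) := by
            nlinarith [abs_nonneg (E K - C)]
          nlinarith
        · have := hE K (by omega)
          have h4 : 0 < q ^ K := by positivity
          rw [mul_zero]
          exact mul_nonneg (mul_nonneg h4.le (by linarith)) (by linarith)
      have e : q ^ (K + 1) = q ^ K * q := pow_succ q K
      rw [e]
      nlinarith
  have h1 := key K
  have h2 : ∑ k ∈ Finset.range K, (if k < k₀ then |E k - C| else 0) =
      ∑ k ∈ Finset.range k₀, |E k - C| := by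
    rw [← Finset.sum_filter]
    congr 1
    ext k; simp; omega
  rw [h2] at h1
  have h3 : 0 ≤ q ^ K * (E K - C) := mul_nonneg (by positivity) (by linarith [hE K hK])
  linarith

/-- At the points `e^k` the sum of reciprocals is compared with the harmonic number `H_k`, which brings in
Euler's constant through `H_k - log k → γ`. -/
theorem recipSum_exp_ge {n : ℕ} {c : ℝ}
    (h : ∀ m, n ≤ m → Real.log (Real.log m) + c ≤ recipSum m) {C : ℝ}
    (hC : C < c - Real.eulerMascheroniConstant) :
    ∃ k₀ : ℕ, ∀ k, k₀ ≤ k → C ≤ recipSum ⌊Real.exp k⌋₊ - (harmonic k : ℝ) := by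
  have ht : Tendsto (fun k : ℕ => c - ((harmonic k : ℝ) - Real.log k) - 1 / ((k : ℝ) + 1)) atTop
      (𝓝 (c - Real.eulerMascheroniConstant - 0)) :=
    (tendsto_const_nhds.sub Real.tendsto_harmonic_sub_log).sub tendsto_one_div_add_atTop_nhds_zero_nat
  rw [sub_zero] at ht
  obtain ⟨k₁, hk₁⟩ := eventually_atTop.1 (ht.eventually (lt_mem_nhds hC))
  refine ⟨max (k₁ + 1) (n + 2), fun k hk => ?_⟩
  obtain ⟨j, rfl⟩ : ∃ j, k = j + 1 := ⟨k - 1, by omega⟩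
  have h1 := hk₁ j (by omega)
  have hj1 : (1 : ℝ) ≤ j := by exact_mod_cast (by omega : 1 ≤ j)
  -- `⌊e^(j+1)⌋ ≥ e^j`
  have h2 : Real.exp j ≤ ⌊Real.exp ((j + 1 : ℕ) : ℝ)⌋₊ := by
    have h3 := Nat.lt_floor_add_one (Real.exp ((j + 1 : ℕ) : ℝ))
    have h4 : Real.exp ((j + 1 : ℕ) : ℝ) = Real.exp j * Real.exp 1 := by
      push_cast; exact Real.exp_add _ _
    have h5 := Real.add_one_le_exp (j : ℝ)
    have h6 := Real.exp_one_gt_d9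
    nlinarith
  have hn : n ≤ ⌊Real.exp ((j + 1 : ℕ) : ℝ)⌋₊ := by
    refine Nat.le_floor ?_
    have := Real.add_one_le_exp ((j + 1 : ℕ) : ℝ)
    have h5 : (n : ℝ) ≤ ((j + 1 : ℕ) : ℝ) := by exact_mod_cast (by omega)
    linarith
  have h7 := h _ hn
  have h8 : (j : ℝ) ≤ Real.log ⌊Real.exp ((j + 1 : ℕ) : ℝ)⌋₊ := by
    rw [Real.le_log_iff_exp_le (lt_of_lt_of_le (Real.exp_pos _) h2)]; exact h2
  have h9 := Real.log_le_log (by linarith) h8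
  rw [harmonic_succ]
  push_cast at h7 h9 ⊢
  rw [one_div] at h1
  linarith

/-- For primes `p ∈ (e^k, e^(k+1)]` one has `p^(1-s) ≥ e^((1-s)(k+1))`. -/
theorem block_lower {s : ℝ} (hs : 1 < s) (K : ℕ) :
    ∑ k ∈ Finset.range K, Real.exp (1 - s) ^ (k + 1) *
        (recipSum ⌊Real.exp ((k + 1 : ℕ) : ℝ)⌋₊ - recipSum ⌊Real.exp (k : ℝ)⌋₊) ≤
      ∑ p ∈ Nat.primesLE ⌊Real.exp (K : ℝ)⌋₊, 1 / (p : ℝ) ^ s := by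
  induction K with
  | zero =>
    simp only [Finset.range_zero, Finset.sum_empty]
    exact Finset.sum_nonneg fun p _ => by positivity
  | succ K ih =>
    have hsub : Nat.primesLE ⌊Real.exp (K : ℝ)⌋₊ ⊆ Nat.primesLE ⌊Real.exp ((K + 1 : ℕ) : ℝ)⌋₊ :=
      Nat.primesLE_mono (Nat.floor_mono (Real.exp_le_exp.2 (by push_cast; linarith)))
    rw [Finset.sum_range_succ, ← Finset.sum_sdiff hsub, add_comm]
    refine add_le_add ?_ ih
    rw [recipSum, recipSum, ← Finset.sum_sdiff hsub, add_sub_cancel_right, Finset.mul_sum]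
    refine Finset.sum_le_sum fun p hp => ?_
    have hp' := (Finset.mem_sdiff.1 hp).1
    have hp0 : (0 : ℝ) < p := by exact_mod_cast (Nat.prime_of_mem_primesLE hp').pos
    have hpe : (p : ℝ) ≤ Real.exp ((K + 1 : ℕ) : ℝ) :=
      (Nat.le_floor_iff (Real.exp_pos _).le).1 (Nat.le_of_mem_primesLE hp')
    have hl : Real.log p ≤ ((K + 1 : ℕ) : ℝ) := (Real.log_le_iff_le_exp hp0).2 hpe
    have hinv : (p : ℝ)⁻¹ = Real.exp (-Real.log p) := by rw [Real.exp_neg, Real.exp_log hp0]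
    rw [← Real.exp_nat_mul, one_div, one_div, ← Real.rpow_neg hp0.le,
      Real.rpow_def_of_pos hp0, hinv, ← Real.exp_add, Real.exp_le_exp]
    nlinarith

/-- The upper bound for the constant in Mertens' second theorem: if `∑_{p ≤ m} 1/p ≥ log log m + c` for all
`m ≥ n`, then `c` plus the higher prime power terms for `p ≤ n` is at most `γ`. Abel summation over the
blocks `(e^k, e^(k+1)]` bounds `∑ p^(-s)` from below by `-log (1 - e^(1-s)) + c - γ - o(1)`, and
`ζ(s) (1 - e^(1-s)) → 1` as `s → 1+`. -/
theorem mertens_limit {n : ℕ} {c : ℝ}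
    (h : ∀ m, n ≤ m → Real.log (Real.log m) + c ≤ recipSum m) :
    c + ∑ p ∈ Nat.primesLE n, eulerTail 1 p ≤ Real.eulerMascheroniConstant := by
  refine le_of_forall_sub_le fun ε hε => ?_
  set C := c - Real.eulerMascheroniConstant - ε with hC
  obtain ⟨k₀, hk₀⟩ := recipSum_exp_ge h (C := C) (by linarith)
  obtain ⟨B, hB⟩ := abel_lower (fun k => recipSum ⌊Real.exp (k : ℝ)⌋₊ - (harmonic k : ℝ)) C k₀
    (by simp [recipSum, Nat.primesLE]) hk₀
  set Z : ℝ → ℝ := fun s => ∑' n : ℕ, 1 / (n : ℝ) ^ s with hZ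
  -- the inequality at `s > 1`
  have main : ∀ s : ℝ, 1 < s → -Real.log (1 - Real.exp (1 - s)) + (C - (1 - Real.exp (1 - s)) * B) +
      ∑ p ∈ Nat.primesLE n, eulerTail s p ≤ Real.log (Z s) := by
    intro s hs
    set q := Real.exp (1 - s) with hq
    have hq0 : 0 < q := Real.exp_pos _
    have hq1 : q < 1 := by rw [hq, Real.exp_lt_one_iff]; linarith
    have ht := (Real.hasSum_pow_div_log_of_abs_lt_one (x := q)
      (by rw [abs_of_pos hq0]; exact hq1)).tendsto_sum_nat
    refine le_of_tendsto ((ht.add_const (C - (1 - q) * B)).add_const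
      (∑ p ∈ Nat.primesLE n, eulerTail s p)) ?_
    filter_upwards [eventually_ge_atTop (max k₀ n)] with K hK
    have h1 := hB q hq0 hq1 K (by omega)
    have h2 := block_lower hs K
    have hnK : n ≤ ⌊Real.exp (K : ℝ)⌋₊ := by
      refine Nat.le_floor ?_
      have := Real.add_one_le_exp (K : ℝ)
      have : (n : ℝ) ≤ K := by exact_mod_cast (by omega)
      linarith
    have h3 := sum_le_log_zeta hs hnK
    have h4 : ∑ k ∈ Finset.range K, q ^ (k + 1) *
        ((recipSum ⌊Real.exp ((k + 1 : ℕ) : ℝ)⌋₊ - (harmonic (k + 1) : ℝ)) -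
          (recipSum ⌊Real.exp (k : ℝ)⌋₊ - (harmonic k : ℝ))) =
        ∑ k ∈ Finset.range K, q ^ (k + 1) *
          (recipSum ⌊Real.exp ((k + 1 : ℕ) : ℝ)⌋₊ - recipSum ⌊Real.exp (k : ℝ)⌋₊) -
        ∑ k ∈ Finset.range K, q ^ (k + 1) / ((k : ℝ) + 1) := by
      rw [← Finset.sum_sub_distrib]
      refine Finset.sum_congr rfl fun k _ => ?_
      rw [harmonic_succ]; push_cast; rw [div_eq_mul_inv]; ring
    rw [h4] at h1
    linarith
  -- let `s` decrease to `1`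
  have hZ1 : Tendsto (fun s : ℝ => (s - 1) * Z s) (𝓝[>] 1) (𝓝 1) := tendsto_sub_mul_tsum_nat_rpow
  have hid : Tendsto (fun s : ℝ => s) (𝓝[>] 1) (𝓝 1) := tendsto_id.mono_left nhdsWithin_le_nhds
  have hq : Tendsto (fun s : ℝ => (1 - Real.exp (1 - s)) / (s - 1)) (𝓝[>] 1) (𝓝 1) := by
    have hd : HasDerivAt (fun s : ℝ => -Real.exp (1 - s)) 1 1 := by
      convert! (((hasDerivAt_id (1 : ℝ)).const_sub 1).exp).neg using 1
      simp
    have := (hasDerivAt_iff_tendsto_slope.1 hd).mono_left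
      (nhdsWithin_mono (1 : ℝ) (fun x (hx : 1 < x) => ne_of_gt hx))
    refine this.congr fun s => ?_
    rw [slope_def_field]; simp; ring
  have hlog : Tendsto (fun s : ℝ => Real.log (Z s) + Real.log (1 - Real.exp (1 - s))) (𝓝[>] 1)
      (𝓝 0) := by
    have h1 : Tendsto (fun s : ℝ => Real.log (((s - 1) * Z s) * ((1 - Real.exp (1 - s)) / (s - 1))))
        (𝓝[>] 1) (𝓝 0) := by
      have := (hZ1.mul hq).log (by norm_num)
      simpa using this
    refine h1.congr' ?_
    filter_upwards [self_mem_nhdsWithin] with s hs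
    have hs' : (1 : ℝ) < s := hs
    have hs1 : s - 1 ≠ 0 := by linarith
    have hq1 : Real.exp (1 - s) < 1 := by rw [Real.exp_lt_one_iff]; linarith
    have hZpos : 0 < Z s := by
      have := prod_euler_le hs' 0
      simp [Nat.primesLE] at this
      simp only [hZ, one_div]; linarith
    rw [← Real.log_mul hZpos.ne' (by linarith)]
    congr 1
    field_simp
  have hR : Tendsto (fun s : ℝ => (C - (1 - Real.exp (1 - s)) * B) +
      ∑ p ∈ Nat.primesLE n, eulerTail s p) (𝓝[>] 1)
      (𝓝 ((C - (1 - Real.exp (1 - 1)) * B) + ∑ p ∈ Nat.primesLE n, eulerTail 1 p)) := by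
    refine Tendsto.add ?_ (tendsto_finsetSum _ fun p hp => ?_)
    · have : Continuous fun s : ℝ => C - (1 - Real.exp (1 - s)) * B := by fun_prop
      exact this.continuousAt.tendsto.comp hid
    · have hpp := Nat.prime_of_mem_primesLE hp
      have hp0 : (0 : ℝ) < p := by exact_mod_cast hpp.pos
      have hp1 := one_div_rpow_lt_one one_pos hpp
      have ht : Tendsto (fun s : ℝ => 1 / (p : ℝ) ^ s) (𝓝[>] 1) (𝓝 (1 / (p : ℝ) ^ (1 : ℝ))) := by
        refine Tendsto.div tendsto_const_nhds ?_ (by positivity)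
        exact (Real.continuousAt_const_rpow hp0.ne').tendsto.comp hid
      exact ((tendsto_const_nhds.sub ht).log (by linarith)).neg.sub ht
  have := le_of_tendsto_of_tendsto hR hlog (by
    filter_upwards [self_mem_nhdsWithin] with s hs
    linarith [main s hs])
  simp at this
  linarith

/-- The product over all primes is `1/ζ(2) = 6/π²`; the tail beyond `n` costs at most `exp (1/n)`. -/
theorem prod_one_sub_sq_le {n : ℕ} (hn : 1 ≤ n) :
    ∏ p ∈ Nat.primesLE n, (1 - 1 / (p : ℝ) ^ 2) ≤ 6 / Real.pi ^ 2 * Real.exp (1 / n) := by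
  have hpos : ∀ p : ℕ, p.Prime → 0 < 1 - 1 / (p : ℝ) ^ 2 := by
    intro p hp
    have := one_div_rpow_lt_one (s := 2) (by norm_num) hp
    rw [Real.rpow_two] at this
    linarith
  have hstep : ∀ M, n ≤ M → ∏ p ∈ Nat.primesLE M, (1 - 1 / (p : ℝ) ^ 2)⁻¹ ≤
      (∏ p ∈ Nat.primesLE n, (1 - 1 / (p : ℝ) ^ 2)⁻¹) * Real.exp (1 / n - 1 / M) := by
    intro M hM
    induction M, hM using Nat.le_induction with
    | base => simp
    | succ m hm ih =>
      have hm0 : (1 : ℝ) ≤ m := by exact_mod_cast hn.trans hm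
      have hA : 0 ≤ ∏ p ∈ Nat.primesLE n, (1 - 1 / (p : ℝ) ^ 2)⁻¹ :=
        Finset.prod_nonneg fun p hp => (inv_pos.2 (hpos p (Nat.prime_of_mem_primesLE hp))).le
      have e0 : (1 : ℝ) / m - 1 / (m + 1 : ℕ) = 1 / (m * (m + 1)) := by push_cast; field_simp; ring
      have e1 : (1 : ℝ) / n - 1 / (m + 1 : ℕ) = 1 / n - 1 / m + 1 / (m * (m + 1)) := by
        rw [← e0]; ring
      have e2 : 1 + 1 / ((m : ℝ) * (m + 1)) ≤ Real.exp (1 / (m * (m + 1))) := by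
        linarith [Real.add_one_le_exp (1 / ((m : ℝ) * (m + 1)))]
      have e3 : 0 < 1 / ((m : ℝ) * (m + 1)) := by positivity
      rw [e1, Real.exp_add, ← mul_assoc, Nat.primesLE_succ]
      split_ifs with hp
      · rw [Finset.prod_insert (by simp [Nat.mem_primesLE]), mul_comm]
        refine mul_le_mul ih (le_trans ?_ e2) (inv_pos.2 (hpos _ hp)).le
          (mul_nonneg hA (Real.exp_pos _).le)
        have e4 : (1 - 1 / ((m + 1 : ℕ) : ℝ) ^ 2)⁻¹ = 1 + 1 / ((m : ℝ) * (m + 2)) := by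
          have : (1 - 1 / ((m + 1 : ℕ) : ℝ) ^ 2) = m * (m + 2) / (m + 1) ^ 2 := by
            push_cast; field_simp; ring
          rw [this]; field_simp; ring
        rw [e4]
        gcongr
        norm_num
      · exact ih.trans (le_mul_of_one_le_right (mul_nonneg hA (Real.exp_pos _).le) (by linarith))
  have hz : ∑' n : ℕ, 1 / (n : ℝ) ^ (2 : ℝ) = Real.pi ^ 2 / 6 := by
    simp only [Real.rpow_two]; exact hasSum_zeta_two.tsum_eq
  have ht := tendsto_euler (s := 2) (by norm_num)
  rw [hz] at ht
  simp only [Real.rpow_two] at ht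
  have hA : 0 < ∏ p ∈ Nat.primesLE n, (1 - 1 / (p : ℝ) ^ 2)⁻¹ :=
    Finset.prod_pos fun p hp => inv_pos.2 (hpos p (Nat.prime_of_mem_primesLE hp))
  have hle : Real.pi ^ 2 / 6 ≤
      (∏ p ∈ Nat.primesLE n, (1 - 1 / (p : ℝ) ^ 2)⁻¹) * Real.exp (1 / n) := by
    refine le_of_tendsto ht ?_
    filter_upwards [eventually_ge_atTop n] with M hM
    refine (hstep M hM).trans (mul_le_mul_of_nonneg_left ?_ hA.le)
    rw [Real.exp_le_exp]
    have : (0 : ℝ) ≤ 1 / M := by positivity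
    linarith
  rw [Finset.prod_inv_distrib] at hle hA
  rw [inv_mul_eq_div, le_div_iff₀ (inv_pos.1 hA)] at hle
  rw [div_mul_eq_mul_div, le_div_iff₀ (by positivity)]
  linarith

/-! ### The inequality for `n ≥ 2 ^ 18` -/

/-- Explicit upper bound in Mertens' third theorem, from `1 + 1/p = (1 - 1/p²) (1 - 1/p)⁻¹`. -/
theorem prod_one_add_le {n : ℕ} (hn : 5 ≤ n) :
    ∏ p ∈ Nat.primesLE n, (1 + 1 / (p : ℝ)) ≤
      6 * Real.exp Real.eulerMascheroniConstant / Real.pi ^ 2 *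
        (Real.log n * Real.exp ((G n - Real.log n + 1) / Real.log n + 3 / n)) := by
  have hlog : 0 < Real.log n := Real.log_pos (by exact_mod_cast (by omega : 1 < n))
  have h1 := mertens_limit fun m hm => le_recipSum hn hm
  have hp : ∀ p ∈ Nat.primesLE n, (0 : ℝ) < p ∧ (0 : ℝ) < 1 - 1 / p := by
    intro p hp
    have h : (1 : ℝ) < p := by exact_mod_cast (Nat.prime_of_mem_primesLE hp).one_lt
    refine ⟨by linarith, ?_⟩
    rw [sub_pos, div_lt_one (by linarith)]; exact h
  have h2 : ∏ p ∈ Nat.primesLE n, (1 - 1 / (p : ℝ))⁻¹ =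
      Real.exp (recipSum n + ∑ p ∈ Nat.primesLE n, eulerTail 1 p) := by
    rw [recipSum, ← Finset.sum_add_distrib, Real.exp_sum]
    refine Finset.prod_congr rfl fun p hp' => ?_
    rw [eulerTail, Real.rpow_one, add_sub_cancel, Real.exp_neg, Real.exp_log (hp p hp').2]
  have h3 : ∏ p ∈ Nat.primesLE n, (1 + 1 / (p : ℝ)) =
      (∏ p ∈ Nat.primesLE n, (1 - 1 / (p : ℝ) ^ 2)) * ∏ p ∈ Nat.primesLE n, (1 - 1 / (p : ℝ))⁻¹ := by
    rw [← Finset.prod_mul_distrib]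
    refine Finset.prod_congr rfl fun p hp' => ?_
    rw [eq_mul_inv_iff_mul_eq₀ (hp p hp').2.ne']
    ring
  rw [h3, h2]
  have h4 : Real.exp (recipSum n + ∑ p ∈ Nat.primesLE n, eulerTail 1 p) ≤
      Real.exp (Real.eulerMascheroniConstant + Real.log (Real.log n) +
        ((G n - Real.log n + 1) / Real.log n + 2 / n)) := by
    rw [Real.exp_le_exp]
    unfold mertensLow at h1
    linarith
  refine (mul_le_mul (prod_one_sub_sq_le (by omega)) h4 (Real.exp_pos _).le (by positivity)).trans
    (le_of_eq ?_)
  rw [Real.exp_add, Real.exp_add, Real.exp_log hlog,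
    show (G n - Real.log n + 1) / Real.log n + 3 / (n : ℝ) =
      1 / n + ((G n - Real.log n + 1) / Real.log n + 2 / n) by ring, Real.exp_add (1 / (n : ℝ))]
  ring

/-- With `θ(n) = c n` and `L = log n`, the claim follows from
`L exp ((c/3 + 0.5372)/L) < 1 + log c + L`, which holds for `0.912 ≤ c ≤ 1.1326` and `L ≥ 12.4`. -/
theorem prod_lt_of_large {n : ℕ} (hn : 2 ^ 18 ≤ n) :
    ∏ p ∈ Nat.primesLE n, (1 + 1 / (p : ℝ)) <
      6 * Real.exp Real.eulerMascheroniConstant / Real.pi ^ 2 * (1 + Real.log (th n)) := by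
  refine (prod_one_add_le (by omega)).trans_lt (mul_lt_mul_of_pos_left ?_ (by positivity))
  have hn' : (2 : ℝ) ^ 18 ≤ n := by exact_mod_cast hn
  have hn0 : (0 : ℝ) < n := lt_of_lt_of_le (by norm_num) hn'
  have hr := sqrt_ge hn
  have hrn : (n : ℝ) = √(n : ℝ) ^ 2 := (Real.sq_sqrt (Nat.cast_nonneg n)).symm
  have hlr := log_le_mul_sqrt hn
  set L := Real.log (n : ℝ) with hLdef
  have hL : 12.4 ≤ L := by
    have h := Real.log_le_log (by norm_num) hn'
    rw [Real.log_pow] at h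
    push_cast at h
    linarith [Real.log_two_gt_d9]
  have hL0 : 0 < L := by linarith
  obtain ⟨c, hc⟩ : ∃ c, th n = c * n := ⟨th n / n, by field_simp⟩
  have hc1 : 0.912 ≤ c := by
    have := le_th hn
    rw [hc] at this
    exact le_of_mul_le_mul_right this hn0
  have hc2 : c ≤ 1.1326 := by
    have := th_le n
    rw [hc] at this
    have h2 : c * n ≤ 1.1326 * n := by
      have : (2 : ℝ) ^ 18 = 262144 := by norm_num
      linarith
    exact le_of_mul_le_mul_right h2 hn0
  have hc0 : 0 < c := by linarith
  have hg : G n - L + 1 ≤ c / 3 + 0.537 := by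
    have := G_le hn
    rw [hc] at this
    have h2 : (G n - L + 1) * n ≤ (c / 3 + 0.537) * n := by linarith
    exact le_of_mul_le_mul_right h2 hn0
  have h3n : 3 / (n : ℝ) ≤ 0.0002 / L := by
    rw [div_le_div_iff₀ hn0 hL0]
    nlinarith
  have hd : (G n - L + 1) / L + 3 / n ≤ (c / 3 + 0.5372) / L := by
    have h2 : (G n - L + 1) / L ≤ (c / 3 + 0.537) / L := by gcongr
    have h4 : (c / 3 + 0.537) / L + 0.0002 / L = (c / 3 + 0.5372) / L := by
      rw [← add_div]; congr 1; ring
    linarith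
  have hlc : 1 - 1 / c ≤ Real.log c := by
    have := Real.one_sub_inv_le_log_of_pos hc0
    rwa [one_div]
  rw [hc, Real.log_mul hc0.ne' hn0.ne', ← hLdef]
  have hw0 : 0 < 2 - 1 / c := by
    have : 1 / c ≤ 1 / 0.912 := by gcongr
    norm_num at this ⊢
    linarith
  have key : (c / 3 + 0.5372) / L < Real.log (1 + (2 - 1 / c) / L) := by
    refine lt_of_lt_of_le ?_ (Real.le_log_one_add_of_nonneg (div_pos hw0 hL0).le)
    have e : 2 * ((2 - 1 / c) / L) / ((2 - 1 / c) / L + 2) =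
        2 * (2 * c - 1) / ((2 * c - 1) + 2 * L * c) := by
      have h1 : (2 - 1 / c) = (2 * c - 1) / c := by field_simp
      have h2 : 0 < 2 * c - 1 := by linarith
      rw [h1]
      field_simp
    rw [e, div_lt_div_iff₀ hL0 (by nlinarith)]
    have hq : 0 < (2 * c - 1) - (c / 3 + 0.5372) * c := by nlinarith
    have hq2 : (c / 3 + 0.5372) * (2 * c - 1) < 24.8 * ((2 * c - 1) - (c / 3 + 0.5372) * c) := by
      nlinarith
    nlinarith
  have h5 : Real.exp ((G n - L + 1) / L + 3 / n) < 1 + (2 - 1 / c) / L := by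
    rw [← Real.lt_log_iff_exp_lt (by have := div_pos hw0 hL0; linarith)]
    exact hd.trans_lt key
  calc L * Real.exp ((G n - L + 1) / L + 3 / n) < L * (1 + (2 - 1 / c) / L) := by gcongr
    _ = L + (2 - 1 / c) := by field_simp
    _ ≤ _ := by linarith

/-! ### Sieve products over dyadic blocks -/

/-- `∏ (2 i + 1 + c)` over those `i` in `[a, a + 2 ^ k)` for which `2 i + 1` is coprime to `M`,
computed by binary splitting. -/
def sieveProd (c M k : ℕ) : ℕ → ℕ :=
  Nat.rec (motive := fun _ => ℕ → ℕ)
    (fun i => cond (Nat.beq (Nat.gcd (2 * i + 1) M) 1) (2 * i + 1 + c) 1)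
    (fun k ih a => ih a * ih (a + 2 ^ k)) k

/-- The product of the primes below `512`. -/
def sieveModulus : ℕ :=
  31964081287196888554640742530273949712805599189441373009521636182430667982828077742788853029807931798207106885718293402541861369758591699412090677759187666930105491469725350718941073722934985042092154205321144030

theorem sieveModulus_dvd : sieveModulus ∣ Nat.factorial 511 := by decide +kernel
theorem dvd_sieveModulus_pow : Nat.factorial 511 ∣ sieveModulus ^ 512 := by decide +kernel

/-- Numerical data for the dyadic block `[2 ^ (k + 1), 2 ^ (k + 2))`: when coprimality to `M` detects the
primes in the block, the product of `1 + 1/p` over these primes is at most `r / 100000` and their product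
is at least `2 ^ m`. -/
def BlockData (k M r m : ℕ) : Prop :=
  sieveProd 1 M k (2 ^ k) * 100000 ≤ r * sieveProd 0 M k (2 ^ k) ∧
    2 ^ m ≤ sieveProd 0 M k (2 ^ k)

instance (k M r m : ℕ) : Decidable (BlockData k M r m) := inferInstanceAs (Decidable (_ ∧ _))

theorem block6 : BlockData 5 9699690 115373 84 := by decide +kernel
theorem block7 : BlockData 6 9699690 113385 173 := by decide +kernel
theorem block8 : BlockData 7 9699690 112396 367 := by decide +kernel
theorem block9 : BlockData 8 sieveModulus 110660 716 := by decide +kernel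
theorem block10 : BlockData 9 sieveModulus 109787 1444 := by decide +kernel
theorem block11 : BlockData 10 sieveModulus 109048 2945 := by decide +kernel
theorem block12 : BlockData 11 sieveModulus 108203 5823 := by decide +kernel
theorem block13 : BlockData 12 sieveModulus 107690 11817 := by decide +kernel
theorem block14 : BlockData 13 sieveModulus 107084 23457 := by decide +kernel
theorem block15 : BlockData 14 sieveModulus 106653 47117 := by decide +kernel
theorem block16 : BlockData 15 sieveModulus 106248 94496 := by decide +kernel
theorem block17 : BlockData 16 sieveModulus 105870 188670 := by decide +kernel

/-! ### Propagation of numerical bounds along dyadic blocks -/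

theorem th_mono {a b : ℕ} (h : a ≤ b) : th a ≤ th b :=
  Finset.sum_le_sum_of_subset_of_nonneg (Nat.primesLE_mono h) fun p _ _ => Real.log_natCast_nonneg p

theorem prod_one_add_mono {a b : ℕ} (h : a ≤ b) :
    ∏ p ∈ Nat.primesLE a, (1 + 1 / (p : ℝ)) ≤ ∏ p ∈ Nat.primesLE b, (1 + 1 / (p : ℝ)) := by
  refine Finset.prod_le_prod_of_subset_of_one_le (Nat.primesLE_mono h) ?_ ?_
  · intro p _; positivity
  · intro p _ _; exact le_add_of_nonneg_right (by positivity)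

/-- If `M` has the same prime divisors as `B!`, then coprimality to `M` detects primes between `B` and
`(B + 1)²`. -/
theorem gcd_eq_one_iff_prime {M B e n : ℕ} (h1 : M ∣ B.factorial) (h2 : B.factorial ∣ M ^ e)
    (hB : 1 ≤ B) (hn : B < n) (hn' : n < (B + 1) ^ 2) : Nat.gcd n M = 1 ↔ n.Prime := by
  constructor
  · intro h
    have hco : Nat.Coprime n B.factorial := (Nat.Coprime.pow_right e h).coprime_dvd_right h2
    rw [Nat.prime_def_le_sqrt]
    refine ⟨by omega, fun m hm2 hms hmn => ?_⟩
    have hmB : m ≤ B := by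
      have h3 : m * m ≤ n := Nat.le_sqrt.1 hms
      by_contra hlt
      have : (B + 1) ^ 2 ≤ m * m := by rw [pow_two]; exact Nat.mul_le_mul (by omega) (by omega)
      omega
    have : m ∣ 1 := by
      rw [← hco]
      exact Nat.dvd_gcd hmn (Nat.dvd_factorial (by omega) hmB)
    have := Nat.le_of_dvd one_pos this
    omega
  · intro h
    have : Nat.Coprime n B.factorial := (Nat.coprime_factorial_iff (by omega)).2 (by
      rw [h.minFac_eq]; exact hn)
    exact this.coprime_dvd_right h1

theorem sieveProd_spec {M B e : ℕ} (h1 : M ∣ B.factorial) (h2 : B.factorial ∣ M ^ e)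
    (hB : 3 ≤ B) (c k a : ℕ) (ha : B < 2 * a) (ha' : 2 * (a + 2 ^ k) ≤ (B + 1) ^ 2) :
    ∏ p ∈ Nat.primesBelow (2 * (a + 2 ^ k)), (p + c) =
      (∏ p ∈ Nat.primesBelow (2 * a), (p + c)) * sieveProd c M k a := by
  induction k generalizing a with
  | zero =>
    have hev : ¬ (2 * a).Prime := by
      intro h
      have := (Nat.prime_dvd_prime_iff_eq Nat.prime_two h).1 (dvd_mul_right 2 a)
      omega
    have hs : sieveProd c M 0 a = cond (Nat.beq (Nat.gcd (2 * a + 1) M) 1) (2 * a + 1 + c) 1 := rfl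
    rw [hs, show 2 * (a + 2 ^ 0) = 2 * a + 1 + 1 by ring, Nat.primesBelow_succ,
      Nat.primesBelow_succ, if_neg hev]
    have hiff := gcd_eq_one_iff_prime h1 h2 (by omega) (n := 2 * a + 1) (by omega) (by omega)
    by_cases hp : (2 * a + 1).Prime
    · rw [if_pos hp, Finset.prod_insert (by simp [Nat.mem_primesBelow]), hiff.2 hp]
      simp [mul_comm]
    · have hne : Nat.gcd (2 * a + 1) M ≠ 1 := fun h => hp (hiff.1 h)
      rw [if_neg hp, show Nat.beq (Nat.gcd (2 * a + 1) M) 1 = false from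
        by rw [← Bool.not_eq_true, Nat.beq_eq]; exact hne]
      simp
  | succ k ih =>
    have hs : sieveProd c M (k + 1) a = sieveProd c M k a * sieveProd c M k (a + 2 ^ k) := rfl
    rw [pow_succ] at ha' ⊢
    rw [hs, show a + 2 ^ k * 2 = (a + 2 ^ k) + 2 ^ k by ring, ih (a + 2 ^ k) (by omega) (by omega),
      ih a ha (by omega), mul_assoc]

/-- The bounds propagated along dyadic blocks, at the point `x`: the product of `1 + 1/p` over the
primes `p < x` is at most `u`, and `∑_{p < x} log p ≥ m log 2`. -/
def DyadicBound (x : ℕ) (u : ℝ) (m : ℕ) : Prop :=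
  ∏ p ∈ Nat.primesBelow x, (1 + 1 / (p : ℝ)) ≤ u ∧
    (m : ℝ) * Real.log 2 ≤ ∑ p ∈ Nat.primesBelow x, Real.log p

/-- Passing from `x` to `2x` multiplies the product by at most `r / 100000` and adds at least `m' log 2` to
the sum of logarithms. -/
theorem DyadicBound.step {x k M B e r m m' : ℕ} {u u' : ℝ} (h : DyadicBound x u m)
    (hd : BlockData k M r m') (h1 : M ∣ B.factorial) (h2 : B.factorial ∣ M ^ e)
    (hB : 3 ≤ B) (hx : x = 2 * 2 ^ k) (hxB : B < x) (hxB' : 2 * x ≤ (B + 1) ^ 2)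
    (hu : u * (r / 100000) ≤ u') : DyadicBound (2 * x) u' (m + m') := by
  have hcast : ∀ y : ℕ, ∏ p ∈ Nat.primesBelow y, (1 + 1 / (p : ℝ)) =
      ((∏ p ∈ Nat.primesBelow y, (p + 1) : ℕ) : ℝ) / ((∏ p ∈ Nat.primesBelow y, (p + 0) : ℕ) : ℝ) := by
    intro y
    push_cast
    rw [← Finset.prod_div_distrib]
    refine Finset.prod_congr rfl fun p hp => ?_
    have : (0 : ℝ) < p := by exact_mod_cast (Nat.prime_of_mem_primesBelow hp).pos
    rw [add_zero]; field_simp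
  have hlog : ∀ y : ℕ, ∑ p ∈ Nat.primesBelow y, Real.log p =
      Real.log ((∏ p ∈ Nat.primesBelow y, (p + 0) : ℕ) : ℝ) := by
    intro y
    push_cast
    rw [Real.log_prod]
    · simp
    · intro p hp
      have : (0 : ℝ) < p := by exact_mod_cast (Nat.prime_of_mem_primesBelow hp).pos
      rw [add_zero]; exact this.ne'
  have e2 : 2 * x = 2 * (2 ^ k + 2 ^ k) := by omega
  have hs : ∀ c, ∏ p ∈ Nat.primesBelow (2 * x), (p + c) =
      (∏ p ∈ Nat.primesBelow x, (p + c)) * sieveProd c M k (2 ^ k) := by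
    intro c
    have := sieveProd_spec h1 h2 hB c k (2 ^ k) (by omega) (by omega)
    rwa [← hx, ← e2] at this
  obtain ⟨hP, hT⟩ := h
  obtain ⟨d1, d2⟩ := hd
  rw [hcast] at hP
  rw [hlog] at hT
  unfold DyadicBound
  rw [hcast, hlog, hs 1, hs 0]
  set Q := sieveProd 1 M k (2 ^ k)
  set D := sieveProd 0 M k (2 ^ k)
  have hD : (0 : ℝ) < D := by exact_mod_cast lt_of_lt_of_le (by positivity) d2
  have hA : 0 < ∏ p ∈ Nat.primesBelow x, (p + 0) :=
    Finset.prod_pos fun p hp => (Nat.prime_of_mem_primesBelow hp).pos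
  have hA' : ((∏ p ∈ Nat.primesBelow x, (p + 0) : ℕ) : ℝ) ≠ 0 := by exact_mod_cast hA.ne'
  constructor
  · rw [Nat.cast_mul, Nat.cast_mul, mul_div_mul_comm]
    have hr : (Q : ℝ) / D ≤ r / 100000 := by
      rw [div_le_div_iff₀ hD (by norm_num)]
      exact_mod_cast d1
    exact (mul_le_mul hP hr (by positivity) (le_trans (by positivity) hP)).trans hu
  · rw [Nat.cast_mul, Real.log_mul hA' hD.ne']
    have : (m' : ℝ) * Real.log 2 ≤ Real.log D := by
      rw [← Real.log_pow]
      exact Real.log_le_log (by positivity) (by exact_mod_cast d2)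
    rw [Nat.cast_add]
    linarith

/-- The true value of the constant is `1.0827…`. Euler's constant is bounded from below by `H_255 - log 256`. -/
theorem euler_const_lower :
    1.0805 ≤ 6 * Real.exp Real.eulerMascheroniConstant / Real.pi ^ 2 := by
  have h7 : Real.pi ^ 2 ≤ 9.869608 := by
    have := Real.pi_lt_d6
    have := Real.pi_pos
    nlinarith
  have h1 := Real.eulerMascheroniSeq_lt_eulerMascheroniConstant 255
  rw [Real.eulerMascheroniSeq] at h1
  have h2 : 6120430000 ≤ ∑ i ∈ Finset.range 255, 1000000000 / (i + 1) := by decide +kernel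
  have h3 : (6.12043 : ℝ) ≤ (harmonic 255 : ℝ) := by
    have h : ((∑ i ∈ Finset.range 255, 1000000000 / (i + 1) : ℕ) : ℝ) ≤
        1000000000 * (harmonic 255 : ℝ) := by
      rw [harmonic]
      push_cast
      rw [Finset.mul_sum]
      refine Finset.sum_le_sum fun i _ => ?_
      refine Nat.cast_div_le.trans (le_of_eq ?_)
      push_cast
      rw [div_eq_mul_inv]
    have h' : (6120430000 : ℝ) ≤ ((∑ i ∈ Finset.range 255, 1000000000 / (i + 1) : ℕ) : ℝ) := by
      exact_mod_cast h2
    have h'' := h'.trans h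
    clear h h' h2
    linarith
  have h4 : Real.log ((255 : ℕ) + 1 : ℝ) = 8 * Real.log 2 := by
    rw [show ((255 : ℕ) + 1 : ℝ) = 2 ^ 8 by norm_num, Real.log_pow]; norm_num
  rw [h4] at h1
  have h5 : 0.57525 ≤ Real.eulerMascheroniConstant := by
    linarith only [h1, h3, Real.log_two_lt_d9]
  have h6 : 1.7775 ≤ Real.exp Real.eulerMascheroniConstant := by
    refine le_trans ?_ (Real.exp_le_exp.2 h5)
    refine le_trans ?_ (Real.sum_le_exp_of_nonneg (by norm_num) 8)
    simp only [Finset.sum_range_succ, Finset.sum_range_zero, Nat.factorial]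
    norm_num
  rw [le_div_iff₀ (by positivity)]
  linarith only [h6, h7]

theorem lt_of_log_bound {u x T : ℝ} (hT : 0 < T) (hx : T ≤ x) (h : u < 1.0805 * (1 + Real.log T))
    (hu : 0 ≤ u) :
    u < 6 * Real.exp Real.eulerMascheroniConstant / Real.pi ^ 2 * (1 + Real.log x) := by
  have h1 := Real.log_le_log hT hx
  have h2 : 0 < 1 + Real.log T := by
    by_contra h3
    nlinarith
  refine h.trans_le (mul_le_mul euler_const_lower (by linarith) h2.le (by positivity))

/-- The inequality for `x ≤ n < 2x`: here `T = 2^a * 3^b * 5^d / 5^c` is a lower bound for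
`m log 2 ≤ th n` whose logarithm is known numerically. -/
theorem DyadicBound.final {x m m' n : ℕ} {u u' : ℝ} (a b c d : ℕ) (h : DyadicBound x u m)
    (h' : DyadicBound (2 * x) u' m') (hn : x ≤ n) (hn' : n < 2 * x)
    (hT : (2 : ℝ) ^ a * 3 ^ b * 5 ^ d / 5 ^ c ≤ m * 0.693)
    (hu : u' < 1.0805 * (1 + (a * 0.69314 + b * 1.09861 + d * 1.60943 - c * 1.60944))) :
    ∏ p ∈ Nat.primesLE n, (1 + 1 / (p : ℝ)) <
      6 * Real.exp Real.eulerMascheroniConstant / Real.pi ^ 2 * (1 + Real.log (th n)) := by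
  have h1 : ∏ p ∈ Nat.primesLE n, (1 + 1 / (p : ℝ)) ≤ u' := by
    refine le_trans (Finset.prod_le_prod_of_subset_of_one_le ?_ ?_ ?_) h'.1
    · intro p hp
      rw [Nat.mem_primesLE] at hp
      exact Nat.mem_primesBelow.2 ⟨by omega, hp.2⟩
    · intro p _; positivity
    · intro p _ _; exact le_add_of_nonneg_right (by positivity)
  have h2 : (m : ℝ) * Real.log 2 ≤ th n := by
    refine h.2.trans (Finset.sum_le_sum_of_subset_of_nonneg ?_ fun p _ _ => Real.log_natCast_nonneg p)
    intro p hp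
    rw [Nat.mem_primesBelow] at hp
    exact Nat.mem_primesLE.2 ⟨by omega, hp.2⟩
  have h3 : (m : ℝ) * 0.693 ≤ m * Real.log 2 :=
    mul_le_mul_of_nonneg_left (by linarith [Real.log_two_gt_d9]) (Nat.cast_nonneg m)
  refine lt_of_log_bound (T := (2 : ℝ) ^ a * 3 ^ b * 5 ^ d / 5 ^ c) (by positivity) (by linarith)
    (h1.trans_lt (hu.trans_le ?_)) (Finset.prod_nonneg fun p _ => by positivity)
  rw [Real.log_div (by positivity) (by positivity), Real.log_mul (by positivity) (by positivity),
    Real.log_mul (by positivity) (by positivity), Real.log_pow, Real.log_pow, Real.log_pow,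
    Real.log_pow]
  have l2 : (a : ℝ) * 0.69314 ≤ a * Real.log 2 :=
    mul_le_mul_of_nonneg_left (by linarith [Real.log_two_gt_d9]) (Nat.cast_nonneg a)
  have l3 : (b : ℝ) * 1.09861 ≤ b * Real.log 3 :=
    mul_le_mul_of_nonneg_left (by linarith [Real.log_three_gt_d9]) (Nat.cast_nonneg b)
  have l5 : (d : ℝ) * 1.60943 ≤ d * Real.log 5 :=
    mul_le_mul_of_nonneg_left (by linarith [Real.log_five_gt_d9]) (Nat.cast_nonneg d)
  have l5' : (c : ℝ) * Real.log 5 ≤ c * 1.60944 :=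
    mul_le_mul_of_nonneg_left (by linarith [Real.log_five_lt_d9]) (Nat.cast_nonneg c)
  linarith

/-! ### The inequality for `n < 2 ^ 18` and the conclusion -/

theorem dyadicBound_64 : DyadicBound 64 4.63368 76 := by
  have hset : Nat.primesBelow 64 = {2, 3, 5, 7, 11, 13, 17, 19, 23, 29, 31, 37, 41, 43, 47, 53, 59,
      61} := by decide +kernel
  refine ⟨?_, ?_⟩
  · rw [hset]
    norm_num
  · have h : (2 : ℝ) ^ 76 ≤ ∏ p ∈ Nat.primesBelow 64, (p : ℝ) := by
      rw [hset]
      norm_num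
    have h2 := Real.log_le_log (by positivity) h
    rw [Real.log_pow, Real.log_prod] at h2
    · exact h2
    · intro p hp
      exact_mod_cast (Nat.prime_of_mem_primesBelow hp).ne_zero

theorem prod_lt_of_medium {n : ℕ} (hn : 64 ≤ n) (hn' : n < 2 ^ 18) :
    ∏ p ∈ Nat.primesLE n, (1 + 1 / (p : ℝ)) <
      6 * Real.exp Real.eulerMascheroniConstant / Real.pi ^ 2 * (1 + Real.log (th n)) := by
  have w1 : 9699690 ∣ Nat.factorial 22 := by decide +kernel
  have w2 : Nat.factorial 22 ∣ 9699690 ^ 20 := by decide +kernel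
  have v1 := sieveModulus_dvd
  have v2 := dvd_sieveModulus_pow
  have b6 := dyadicBound_64
  have b7 : DyadicBound 128 5.3461 160 :=
    b6.step block6 w1 w2 (by norm_num) (by norm_num) (by norm_num) (by norm_num) (by norm_num)
  have b8 : DyadicBound 256 6.0617 333 :=
    b7.step block7 w1 w2 (by norm_num) (by norm_num) (by norm_num) (by norm_num) (by norm_num)
  have b9 : DyadicBound 512 6.8132 700 :=
    b8.step block8 w1 w2 (by norm_num) (by norm_num) (by norm_num) (by norm_num) (by norm_num)
  have b10 : DyadicBound 1024 7.5396 1416 :=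
    b9.step block9 v1 v2 (by norm_num) (by norm_num) (by norm_num) (by norm_num) (by norm_num)
  have b11 : DyadicBound 2048 8.2776 2860 :=
    b10.step block10 v1 v2 (by norm_num) (by norm_num) (by norm_num) (by norm_num) (by norm_num)
  have b12 : DyadicBound 4096 9.0266 5805 :=
    b11.step block11 v1 v2 (by norm_num) (by norm_num) (by norm_num) (by norm_num) (by norm_num)
  have b13 : DyadicBound 8192 9.7671 11628 :=
    b12.step block12 v1 v2 (by norm_num) (by norm_num) (by norm_num) (by norm_num) (by norm_num)
  have b14 : DyadicBound 16384 10.5182 23445 :=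
    b13.step block13 v1 v2 (by norm_num) (by norm_num) (by norm_num) (by norm_num) (by norm_num)
  have b15 : DyadicBound 32768 11.2634 46902 :=
    b14.step block14 v1 v2 (by norm_num) (by norm_num) (by norm_num) (by norm_num) (by norm_num)
  have b16 : DyadicBound 65536 12.0128 94019 :=
    b15.step block15 v1 v2 (by norm_num) (by norm_num) (by norm_num) (by norm_num) (by norm_num)
  have b17 : DyadicBound 131072 12.7634 188515 :=
    b16.step block16 v1 v2 (by norm_num) (by norm_num) (by norm_num) (by norm_num) (by norm_num)
  have b18 : DyadicBound 262144 13.5127 377185 :=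
    b17.step block17 v1 v2 (by norm_num) (by norm_num) (by norm_num) (by norm_num) (by norm_num)
  have hn18 : n < 262144 := by omega
  rcases lt_or_ge n 128 with h7 | h7
  · exact b6.final 15 0 4 0 b7 hn h7 (by norm_num) (by norm_num)
  rcases lt_or_ge n 256 with h8 | h8
  · exact b7.final 2 3 0 0 b8 h7 h8 (by norm_num) (by norm_num)
  rcases lt_or_ge n 512 with h9 | h9
  · exact b8.final 3 3 0 0 b9 h8 h9 (by norm_num) (by norm_num)
  rcases lt_or_ge n 1024 with h10 | h10
  · exact b9.final 4 0 0 2 b10 h9 h10 (by norm_num) (by norm_num)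
  rcases lt_or_ge n 2048 with h11 | h11
  · exact b10.final 5 0 0 2 b11 h10 h11 (by norm_num) (by norm_num)
  rcases lt_or_ge n 4096 with h12 | h12
  · exact b11.final 6 0 0 2 b12 h11 h12 (by norm_num) (by norm_num)
  rcases lt_or_ge n 8192 with h13 | h13
  · exact b12.final 7 0 0 2 b13 h12 h13 (by norm_num) (by norm_num)
  rcases lt_or_ge n 16384 with h14 | h14
  · exact b13.final 8 0 0 2 b14 h13 h14 (by norm_num) (by norm_num)
  rcases lt_or_ge n 32768 with h15 | h15
  · exact b14.final 9 0 0 2 b15 h14 h15 (by norm_num) (by norm_num)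
  rcases lt_or_ge n 65536 with h16 | h16
  · exact b15.final 10 0 0 2 b16 h15 h16 (by norm_num) (by norm_num)
  rcases lt_or_ge n 131072 with h17 | h17
  · exact b16.final 11 0 0 2 b17 h16 h17 (by norm_num) (by norm_num)
  · exact b17.final 12 0 0 2 b18 h17 hn18 (by norm_num) (by norm_num)

/-- The inequality for `a ≤ n ≤ b`, from the products over the primes up to `a` and `b`. -/
theorem prod_lt_of_small {a b n m : ℕ} {u T : ℝ} (han : a ≤ n) (hnb : n ≤ b)
    (hb : ∏ p ∈ Nat.primesLE b, (1 + 1 / (p : ℝ)) ≤ u) (ha : 2 ^ m ≤ ∏ p ∈ Nat.primesLE a, p)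
    (hT : 0 < T) (hTm : T ≤ m * 0.693) (hu : u < 1.0805 * (1 + Real.log T)) :
    ∏ p ∈ Nat.primesLE n, (1 + 1 / (p : ℝ)) <
      6 * Real.exp Real.eulerMascheroniConstant / Real.pi ^ 2 * (1 + Real.log (th n)) := by
  refine lt_of_log_bound hT ?_ (((prod_one_add_mono hnb).trans hb).trans_lt hu)
    (Finset.prod_nonneg fun p _ => by positivity)
  refine le_trans ?_ (th_mono han)
  have h1 : (2 : ℝ) ^ m ≤ ∏ p ∈ Nat.primesLE a, (p : ℝ) := by
    have h := (Nat.cast_le (α := ℝ)).2 ha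
    push_cast at h
    exact h
  have h2 := Real.log_le_log (by positivity) h1
  rw [Real.log_pow, Real.log_prod] at h2
  · have h3 : (m : ℝ) * 0.693 ≤ m * Real.log 2 :=
      mul_le_mul_of_nonneg_left (by linarith [Real.log_two_gt_d9]) (Nat.cast_nonneg m)
    rw [th]
    linarith
  · intro p hp
    exact_mod_cast (Nat.prime_of_mem_primesLE hp).ne_zero

theorem log_235 (a b c : ℤ) :
    Real.log ((2 : ℝ) ^ a * 3 ^ b * 5 ^ c) = a * Real.log 2 + b * Real.log 3 + c * Real.log 5 := by
  rw [Real.log_mul (by positivity) (by positivity), Real.log_mul (by positivity) (by positivity),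
    Real.log_zpow, Real.log_zpow, Real.log_zpow]

/-- The inequality for the primes up to `n`, for every prime `n ≥ 5`; the ranges below `64` are settled
by evaluating the products at their end points. -/
theorem prod_lt_of_prime {n : ℕ} (hp : n.Prime) (hn : 5 ≤ n) :
    ∏ p ∈ Nat.primesLE n, (1 + 1 / (p : ℝ)) <
      6 * Real.exp Real.eulerMascheroniConstant / Real.pi ^ 2 * (1 + Real.log (th n)) := by
  have l2 := Real.log_two_gt_d9
  have l2' := Real.log_two_lt_d9
  have l3 := Real.log_three_gt_d9
  have l5 := Real.log_five_lt_d9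
  rcases lt_or_ge n (2 ^ 18) with h18 | h18
  swap
  · exact prod_lt_of_large h18
  rcases lt_or_ge n 64 with h64 | h64
  swap
  · exact prod_lt_of_medium h64 h18
  rcases lt_or_ge n 53 with h53 | h53
  swap
  · have e : Nat.primesLE 63 = {2, 3, 5, 7, 11, 13, 17, 19, 23, 29, 31, 37, 41, 43, 47, 53, 59, 61} := by
      decide +kernel
    refine prod_lt_of_small (a := 53) (b := 63) (m := 60) (u := 4.634) (T := 36) h53 (by omega)
      ?_ (by decide +kernel) (by norm_num) (by norm_num) ?_
    · rw [e]; norm_num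
    · have := log_235 2 2 0
      norm_num at this
      norm_num
      linarith
  rcases lt_or_ge n 29 with h29 | h29
  swap
  · have e : Nat.primesLE 52 = {2, 3, 5, 7, 11, 13, 17, 19, 23, 29, 31, 37, 41, 43, 47} := by
      decide +kernel
    refine prod_lt_of_small (a := 29) (b := 52) (m := 32) (u := 4.39994) (T := 2187 / 100) h29 (by omega)
      ?_ (by decide +kernel) (by norm_num) (by norm_num) ?_
    · rw [e]; norm_num
    · have := log_235 (-2) 7 (-2)
      norm_num at this
      norm_num
      linarith
  rcases lt_or_ge n 17 with h17 | h17
  swap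
  · have e : Nat.primesLE 28 = {2, 3, 5, 7, 11, 13, 17, 19, 23} := by decide +kernel
    refine prod_lt_of_small (a := 17) (b := 28) (m := 18) (u := 3.7477) (T := 12) h17 (by omega)
      ?_ (by decide +kernel) (by norm_num) (by norm_num) ?_
    · rw [e]; norm_num
    · have := log_235 2 1 0
      norm_num at this
      norm_num
      linarith
  rcases lt_or_ge n 11 with h11 | h11
  swap
  · have e : Nat.primesLE 16 = {2, 3, 5, 7, 11, 13} := by decide +kernel
    refine prod_lt_of_small (a := 11) (b := 16) (m := 11) (u := 3.2224) (T := 7.5) h11 (by omega)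
      ?_ (by decide +kernel) (by norm_num) (by norm_num) ?_
    · rw [e]; norm_num
    · have := log_235 (-1) 1 1
      have := Real.log_five_gt_d9
      norm_num at *
      linarith
  rcases lt_or_ge n 7 with h7 | h7
  swap
  · have e : Nat.primesLE 10 = {2, 3, 5, 7} := by decide +kernel
    refine prod_lt_of_small (a := 7) (b := 10) (m := 7) (u := 2.7429) (T := 24 / 5) h7 (by omega)
      ?_ (by decide +kernel) (by norm_num) (by norm_num) ?_
    · rw [e]; norm_num
    · have := log_235 3 1 (-1)
      norm_num at this
      norm_num
      linarith
  have hn5 : n = 5 := by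
    have : n ≠ 6 := by rintro rfl; norm_num at hp
    omega
  subst hn5
  have e : Nat.primesLE 5 = {2, 3, 5} := by decide +kernel
  refine lt_of_log_bound (T := 3.395) (by norm_num) ?_ ?_
    (Finset.prod_nonneg fun p _ => by positivity)
  · rw [th, e]
    norm_num
    linarith [Real.log_five_gt_d9]
  · -- `log 3.395` is bounded through `3.395 ^ 2 ≥ 288 / 25`
    have h1 := Real.log_le_log (x := 288 / 25) (y := 3.395 ^ 2) (by norm_num) (by norm_num)
    rw [Real.log_pow] at h1
    have h2 := log_235 5 2 (-2)
    norm_num at h1 h2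
    rw [e]
    norm_num
    linarith

theorem prod_lt_of_le_ten {N : ℕ} (hN : 6 < N) (hN' : N ≤ 10) :
    ∏ p ∈ N.primeFactors, (1 + 1 / (p : ℝ)) <
      6 * Real.exp Real.eulerMascheroniConstant / Real.pi ^ 2 *
        (1 + Real.log (Real.log N)) := by
  have l2 := Real.log_two_gt_d9
  have l2' := Real.log_two_lt_d9
  have l3 := Real.log_three_gt_d9
  have l5 := Real.log_five_gt_d9
  have hNr : (6 : ℝ) ≤ N := by exact_mod_cast hN.le
  have hlogN : 1.5 ≤ Real.log N := by
    have h := Real.log_le_log (by norm_num) hNr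
    have h2 := log_235 1 1 0
    norm_num at h2 ⊢
    linarith
  have h15 : 1.5 < 1.0805 * (1 + Real.log 1.5) := by
    have h2 := log_235 (-1) 1 0
    norm_num at h2 ⊢
    linarith
  rcases Nat.lt_or_ge N 10 with h | h
  · refine lt_of_log_bound (T := 1.5) (by norm_num) hlogN (lt_of_le_of_lt ?_ h15)
      (Finset.prod_nonneg fun p _ => by positivity)
    interval_cases N
    · have e : Nat.primeFactors 7 = {7} := by decide +kernel
      rw [e]; norm_num
    · have e : Nat.primeFactors 8 = {2} := by decide +kernel
      rw [e]; norm_num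
    · have e : Nat.primeFactors 9 = {3} := by decide +kernel
      rw [e]; norm_num
  · obtain rfl : N = 10 := by omega
    have e : Nat.primeFactors 10 = {2, 5} := by decide +kernel
    refine lt_of_log_bound (T := 2) (by norm_num) ?_ ?_
      (Finset.prod_nonneg fun p _ => by positivity)
    · have h2 := log_235 1 0 1
      norm_num at h2 ⊢
      linarith
    · rw [e]
      norm_num
      linarith

/-- **An effective variant of Mertens's theorems.**
For every integer `N > 6`, the product over the prime divisors `p` of `N` of `(1 + 1/p)`
is strictly less than `(6·e^γ/π²)·(1 + log log N)`, where `γ` is the Euler–Mascheroni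
constant. -/
theorem prod_one_add_inv_prime_dvd_lt (N : ℕ) (hN : 6 < N) :
    ∏ p ∈ N.primeFactors, (1 + 1 / (p : ℝ)) <
      6 * Real.exp Real.eulerMascheroniConstant / Real.pi ^ 2 *
        (1 + Real.log (Real.log N)) := by
  rcases Nat.lt_or_ge 10 N with hN10 | hN10
  swap
  · exact prod_lt_of_le_ten hN hN10
  have hk : N.primeFactors.card ≠ 0 := by
    rw [Finset.card_ne_zero, Nat.nonempty_primeFactors]; omega
  obtain ⟨n, hn, hcard⟩ := exists_initial_primes N hk
  obtain ⟨h1, h2⟩ := exchange N.primeFactors n hn.pos (fun p hp => Nat.prime_of_mem_primeFactors hp)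
    hcard
  rcases Nat.lt_or_ge n 5 with h5 | h5
  · have e : Nat.primesLE 4 = {2, 3} := by decide +kernel
    have h3 : ∏ p ∈ Nat.primesLE n, (1 + 1 / (p : ℝ)) ≤ 2 := by
      refine (prod_one_add_mono (show n ≤ 4 by omega)).trans ?_
      rw [e]; norm_num
    have hNr : (54 / 5 : ℝ) ≤ N := by
      have : (11 : ℝ) ≤ N := by exact_mod_cast hN10
      linarith
    have h := Real.log_le_log (by norm_num) hNr
    have l2 := Real.log_two_gt_d9
    have l2' := Real.log_two_lt_d9
    have l3 := Real.log_three_gt_d9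
    have l3' := Real.log_three_lt_d9
    have l5 := Real.log_five_lt_d9
    refine lt_of_log_bound (T := 64 / 27) (by norm_num) ?_ ?_
      (Finset.prod_nonneg fun p _ => by positivity)
    · have h2 := log_235 1 3 (-1)
      norm_num at h2 ⊢
      linarith
    · refine (h1.trans h3).trans_lt ?_
      have h2 := log_235 6 (-3) 0
      norm_num at h2 ⊢
      linarith
  · have hth : th n ≤ Real.log N := by
      have h3 : ∏ p ∈ Nat.primesLE n, p ≤ N :=
        h2.trans (Nat.le_of_dvd (by omega) (Nat.prod_primeFactors_dvd N))
      have h4 : ∏ p ∈ Nat.primesLE n, (p : ℝ) ≤ N := by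
        have h := (Nat.cast_le (α := ℝ)).2 h3
        push_cast at h
        exact h
      have hpos : ∀ p ∈ Nat.primesLE n, (0 : ℝ) < p := fun p hp => by
        exact_mod_cast (Nat.prime_of_mem_primesLE hp).pos
      have h5 := Real.log_le_log (Finset.prod_pos hpos) h4
      rwa [Real.log_prod fun p hp => (hpos p hp).ne'] at h5
    have hth0 : 0 < th n := by
      have h6 := th_mono (show 2 ≤ n by omega)
      have e : Nat.primesLE 2 = {2} := by decide +kernel
      have h7 : th 2 = Real.log 2 := by rw [th, e]; simp
      have := Real.log_two_gt_d9
      linarith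
    refine (h1.trans_lt (prod_lt_of_prime hn h5)).trans_le ?_
    have := Real.log_le_log hth0 hth
    refine mul_le_mul_of_nonneg_left (by linarith) (by positivity)
end

section
/- Let G ≤ GL₂(ℤ_p) be an N-Cartan lift with respect to the Cartan subgroup C. Then each 𝔤ₙ is an 𝔽_p[G(p)]-submodule of gl₂(𝔽_p) for the conjugation action. Suppose there exists an element of G(p) ∩ C(p) whose image in PGL₂(𝔽_p) has order greater than 2. Then gl₂(𝔽_p) = V₁ ⊕ V₂ ⊕ V₃ is a decomposition into irreducible 𝔽_p[G(p)]-submodules (with V₁, V₂, V₃ as defined for the non-split case if C = C_ns and for the split case if C = C_sp). Moreover, in both cases V₃ is not a Lie subalgebra of gl₂(𝔽_p). -/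
/-!
The pieces `𝔤ₙ` are closed under addition because `(1 + pⁿB)(1 + pⁿB') ≡ 1 + pⁿ(B + B')`
modulo `pⁿ⁺¹` when `n ≥ 1`, hence are `𝔽_p`-subspaces; stability under conjugation by `G(p)` comes
from conjugating inside `G` (`glSet_submodule`, `glSet_conj_mem`).

For the decomposition, membership in each `Vᵢ` is a set of linear equations in the matrix entries,
which settles directness, stability under `C⁺(p)` and the failure of closure under the bracket;
`p` odd and `ε ≠ 0` are what is needed. Conjugation by `g` is replaced throughout by the
polynomial map `M ↦ g M adj(g)`, which differs from it by the factor `det g`.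

The only real content is the irreducibility of `V₃`. Let `g ∈ G(p) ∩ C(p)` have order greater than
`2` in `PGL₂(𝔽_p)`, so that `g²` is not scalar. In the split case (`split_irred`), `g = diag(a, b)`
with `a² ≠ b²` acts on the two coordinate lines of `V₃` with distinct eigenvalues, and an element
of `G(p)` outside `C(p)` swaps these lines. In the non-split case (`nonsplit_irred`),
`g = a + bJ` with `J² = ε` and `ab ≠ 0`, and `V₃` is a line over `𝔽_p[J] = 𝔽_{p²}` on which `g`
acts as `g²/det g`, so a `g`-stable subspace is an `𝔽_{p²}`-subspace.
-/

open Matrix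

noncomputable section

variable (p : ℕ) [Fact p.Prime]

/-- Reduction `GL₂(ℤ_p) → GL₂(ℤ/pⁿℤ)` of the matrix entries modulo `pⁿ`;
`G(pⁿ)` is the image of `G` under this map. -/
def redPow (n : ℕ) : GL (Fin 2) ℤ_[p] →* GL (Fin 2) (ZMod (p ^ n)) :=
  Matrix.GeneralLinearGroup.map (PadicInt.toZModPow n)

/-- Reduction `GL₂(ℤ_p) → GL₂(𝔽_p)` of the matrix entries modulo `p`;
`G(p)` is the image of `G` under this map. -/
def red : GL (Fin 2) ℤ_[p] →* GL (Fin 2) (ZMod p) :=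
  Matrix.GeneralLinearGroup.map (PadicInt.toZMod)

/-- The least positive integer representing a quadratic non-residue modulo `p`. -/
def epsN : ℕ := sInf {n : ℕ | 0 < n ∧ ¬ IsSquare ((n : ZMod p))}

/-- The (carrier set of the) split Cartan subgroup of `GL₂(R)`:
invertible diagonal matrices. -/
def cspSet (R : Type*) [CommRing R] : Set (GL (Fin 2) R) :=
  {A | ∃ a b : R, (A : Matrix (Fin 2) (Fin 2) R) = !![a, 0; 0, b]}

/-- The (carrier set of the) normaliser `C_sp⁺ = C_sp ∪ [[0,1],[1,0]]·C_sp`. -/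
def cspPlusSet (R : Type*) [CommRing R] : Set (GL (Fin 2) R) :=
  {A | ∃ a b : R, (A : Matrix (Fin 2) (Fin 2) R) = !![a, 0; 0, b] ∨
    (A : Matrix (Fin 2) (Fin 2) R) = !![0, 1; 1, 0] * !![a, 0; 0, b]}

/-- The (carrier set of the) non-split Cartan subgroup of `GL₂(R)`:
invertible matrices of the shape `[[a, εb], [b, a]]`.  (Over `ℤ_p`, resp. `ℤ/pⁿℤ`,
invertibility forces `(a, b) ≢ (0, 0) mod p`.) -/
def cnsSet (R : Type*) [CommRing R] (ε : R) : Set (GL (Fin 2) R) :=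
  {A | ∃ a b : R, (A : Matrix (Fin 2) (Fin 2) R) = !![a, ε * b; b, a]}

/-- The (carrier set of the) normaliser `C_ns⁺ = C_ns ∪ [[1,0],[0,-1]]·C_ns`. -/
def cnsPlusSet (R : Type*) [CommRing R] (ε : R) : Set (GL (Fin 2) R) :=
  {A | ∃ a b : R, (A : Matrix (Fin 2) (Fin 2) R) = !![a, ε * b; b, a] ∨
    (A : Matrix (Fin 2) (Fin 2) R) = !![(1 : R), 0; 0, -1] * !![a, ε * b; b, a]}

/-- `G ≤ GL₂(ℤ_p)` is an *N-Cartan lift* with respect to the Cartan subgroup with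
carrier set `C` (with normaliser carrier set `Cplus`): `G` is closed,
`det G = ℤ_p^×`, the reduction `G(p)` is contained in `C⁺(p)` but not in `C(p)`, and
`G(p)` contains an element of `C(p)` which is not a scalar multiple of the identity. -/
def IsNCartanLift (G : Subgroup (GL (Fin 2) ℤ_[p]))
    (C Cplus : Set (GL (Fin 2) ℤ_[p])) : Prop :=
  IsClosed (G : Set (GL (Fin 2) ℤ_[p])) ∧
  (∀ u : ℤ_[p]ˣ, ∃ A ∈ G, Matrix.GeneralLinearGroup.det A = u) ∧
  (⇑(red p) '' ↑G ⊆ ⇑(red p) '' Cplus) ∧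
  ¬ (⇑(red p) '' ↑G ⊆ ⇑(red p) '' C) ∧
  (∃ g ∈ (⇑(red p) '' ↑G) ∩ (⇑(red p) '' C),
    ¬ ∃ c : ZMod p,
      (g : Matrix (Fin 2) (Fin 2) (ZMod p)) = c • (1 : Matrix (Fin 2) (Fin 2) (ZMod p)))

/-- The image `𝔤ₙ` of `Gₙ/Gₙ₊₁` inside `gl₂(𝔽_p)` under `I + pⁿB ↦ (B mod p)`:
the set of reductions mod `p` of matrices `B` with `I + pⁿB ∈ G`. -/
def glSet (n : ℕ) (G : Subgroup (GL (Fin 2) ℤ_[p])) :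
    Set (Matrix (Fin 2) (Fin 2) (ZMod p)) :=
  {M | ∃ A ∈ G, ∃ B : Matrix (Fin 2) (Fin 2) ℤ_[p],
    (A : Matrix (Fin 2) (Fin 2) ℤ_[p]) = 1 + ((p : ℤ_[p]) ^ n) • B ∧
    B.map ⇑(PadicInt.toZMod (p := p)) = M}

/-- The dimension of `𝔤ₙ` as an `𝔽_p`-vector space (recall that `𝔤ₙ` is an
`𝔽_p`-subspace of `gl₂(𝔽_p)`, so it coincides with its span). -/
def glDim (n : ℕ) (G : Subgroup (GL (Fin 2) ℤ_[p])) : ℕ :=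
  Module.finrank (ZMod p) (Submodule.span (ZMod p) (glSet p n G))

/-- `V₁ = 𝔽_p · Id`. -/
def V1 : Submodule (ZMod p) (Matrix (Fin 2) (Fin 2) (ZMod p)) :=
  Submodule.span (ZMod p) {(1 : Matrix (Fin 2) (Fin 2) (ZMod p))}

/-- Non-split case: `V₂ = 𝔽_p · [[0, ε], [1, 0]]`. -/
def V2ns : Submodule (ZMod p) (Matrix (Fin 2) (Fin 2) (ZMod p)) :=
  Submodule.span (ZMod p) {!![0, (epsN p : ZMod p); 1, 0]}

/-- Non-split case: `V₃ = 𝔽_p · [[1,0],[0,-1]] ⊕ 𝔽_p · [[0,ε],[-1,0]]`. -/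
def V3ns : Submodule (ZMod p) (Matrix (Fin 2) (Fin 2) (ZMod p)) :=
  Submodule.span (ZMod p) {!![1, 0; 0, -1], !![0, (epsN p : ZMod p); -1, 0]}

/-- Split case: `V₂ = 𝔽_p · [[1,0],[0,-1]]`. -/
def V2sp : Submodule (ZMod p) (Matrix (Fin 2) (Fin 2) (ZMod p)) :=
  Submodule.span (ZMod p) {!![1, 0; 0, -1]}

/-- Split case: `V₃ = 𝔽_p · [[0,1],[1,0]] ⊕ 𝔽_p · [[0,1],[-1,0]]`. -/
def V3sp : Submodule (ZMod p) (Matrix (Fin 2) (Fin 2) (ZMod p)) :=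
  Submodule.span (ZMod p) {!![0, 1; 1, 0], !![0, 1; -1, 0]}

/-- There is an element of `G(p) ∩ C(p)` whose image in `PGL₂(𝔽_p)` has order
greater than `2`. -/
def HasLargeOrderElt (G : Subgroup (GL (Fin 2) ℤ_[p]))
    (C : Set (GL (Fin 2) ℤ_[p])) : Prop :=
  ∃ g ∈ (⇑(red p) '' ↑G) ∩ (⇑(red p) '' C),
    2 < orderOf (QuotientGroup.mk g :
      GL (Fin 2) (ZMod p) ⧸ Subgroup.center (GL (Fin 2) (ZMod p)))

/-! ### The graded pieces `𝔤ₙ` -/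

/-- For `n ≥ 1`, `(1 + pⁿB)(1 + pⁿB') ≡ 1 + pⁿ(B + B')` modulo `pⁿ⁺¹`. -/
lemma glSet_add_mem {n : ℕ} (hn : 1 ≤ n) (G : Subgroup (GL (Fin 2) ℤ_[p]))
    {M N : Matrix (Fin 2) (Fin 2) (ZMod p)} (hM : M ∈ glSet p n G) (hN : N ∈ glSet p n G) :
    M + N ∈ glSet p n G := by
  obtain ⟨A, hA, B, hAB, rfl⟩ := hM
  obtain ⟨A', hA', B', hAB', rfl⟩ := hN
  refine ⟨A * A', G.mul_mem hA hA', B + B' + (p : ℤ_[p]) ^ n • (B * B'), ?_, ?_⟩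
  · rw [Units.val_mul, hAB, hAB']
    simp only [add_mul, mul_add, one_mul, mul_one, smul_mul_assoc, mul_smul_comm, smul_add]
    abel
  · ext i j
    have h0 : (PadicInt.toZMod (p := p)) ((p : ℤ_[p]) ^ n) = 0 := by
      simp [Nat.one_le_iff_ne_zero.mp hn]
    simp only [Matrix.map_apply, Matrix.add_apply, Matrix.smul_apply, smul_eq_mul, map_add,
      map_mul, h0, zero_mul, add_zero]

/-- An additively closed subset of an `𝔽_p`-space containing `0` is a subspace, because every
scalar is a natural number. -/
lemma glSet_submodule {n : ℕ} (hn : 1 ≤ n) (G : Subgroup (GL (Fin 2) ℤ_[p])) :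
    ∃ W : Submodule (ZMod p) (Matrix (Fin 2) (Fin 2) (ZMod p)), ↑W = glSet p n G := by
  have hz : (0 : Matrix (Fin 2) (Fin 2) (ZMod p)) ∈ glSet p n G :=
    ⟨1, G.one_mem, 0, by simp, by ext; simp⟩
  let S : AddSubmonoid (Matrix (Fin 2) (Fin 2) (ZMod p)) :=
    { carrier := glSet p n G
      add_mem' := glSet_add_mem p hn G
      zero_mem' := hz }
  refine ⟨{ S with smul_mem' := ?_ }, rfl⟩
  intro c x hx
  rw [← ZMod.natCast_zmod_val c, Nat.cast_smul_eq_nsmul]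
  exact S.nsmul_mem hx _

lemma glSet_conj_mem {n : ℕ} (G : Subgroup (GL (Fin 2) ℤ_[p]))
    {g : GL (Fin 2) (ZMod p)} (hg : g ∈ Subgroup.map (red p) G)
    {M : Matrix (Fin 2) (Fin 2) (ZMod p)} (hM : M ∈ glSet p n G) :
    (g : Matrix (Fin 2) (Fin 2) (ZMod p)) * M * ((g⁻¹ : GL (Fin 2) (ZMod p)) :
      Matrix (Fin 2) (Fin 2) (ZMod p)) ∈ glSet p n G := by
  obtain ⟨A, hA, B, hAB, rfl⟩ := hM
  obtain ⟨h, hh, rfl⟩ := hg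
  refine ⟨h * A * h⁻¹, G.mul_mem (G.mul_mem hh hA) (G.inv_mem hh),
    h.val * B * (h⁻¹).val, ?_, ?_⟩
  · rw [Units.val_mul, Units.val_mul, hAB]
    simp only [mul_add, add_mul, mul_one, Units.mul_inv, mul_smul_comm, smul_mul_assoc]
  · rw [← map_inv, Matrix.map_mul, Matrix.map_mul]
    rfl

/-! ### Linear algebra over `𝔽_p` -/

lemma two_ne_zero_zmod (hp : Odd p) : (2 : ZMod p) ≠ 0 := by
  apply Ring.two_ne_zero
  rw [ZMod.ringChar_zmod_n]
  rintro rfl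
  exact absurd hp (by decide)

lemma epsN_nonsquare (hp : Odd p) : ¬ IsSquare (epsN p : ZMod p) := by
  have hne : {n : ℕ | 0 < n ∧ ¬ IsSquare ((n : ZMod p))}.Nonempty := by
    obtain ⟨a, ha⟩ := FiniteField.exists_nonsquare (F := ZMod p) (by
      rw [ZMod.ringChar_zmod_n]
      rintro rfl
      exact absurd hp (by decide))
    refine ⟨a.val, ?_, by simpa using ha⟩
    rcases Nat.eq_zero_or_pos a.val with h | h
    · exact absurd ((ZMod.val_eq_zero a).mp h ▸ ha) (by simp)
    · exact h
  exact (Nat.sInf_mem hne).2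

lemma epsN_ne_zero (hp : Odd p) : (epsN p : ZMod p) ≠ 0 := fun h =>
  epsN_nonsquare p hp (by simp [h])

/-- The norm form `x² - εy²` of the quadratic extension is anisotropic. -/
lemma norm_ne_zero (hp : Odd p) {x y : ZMod p} (h : x ≠ 0 ∨ y ≠ 0) :
    x * x - (epsN p : ZMod p) * (y * y) ≠ 0 := by
  intro h0
  by_cases hy : y = 0
  · subst hy
    simp at h0 h
    exact h h0
  · refine epsN_nonsquare p hp ⟨x / y, ?_⟩
    field_simp
    linear_combination -h0

/-- Conjugation by `g` is `M ↦ g M adj(g)` up to the nonzero factor `det g`, so a subspace is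
stable under the one exactly when it is stable under the other. -/
lemma conj_mem_iff (W : Submodule (ZMod p) (Matrix (Fin 2) (Fin 2) (ZMod p)))
    (g : GL (Fin 2) (ZMod p)) (M : Matrix (Fin 2) (Fin 2) (ZMod p)) :
    (g : Matrix (Fin 2) (Fin 2) (ZMod p)) * M * ((g⁻¹ : GL (Fin 2) (ZMod p)) :
      Matrix (Fin 2) (Fin 2) (ZMod p)) ∈ W ↔ g.val * M * g.val.adjugate ∈ W := by
  have hdet : g.val.det ≠ 0 := ((Matrix.isUnit_iff_isUnit_det _).mp g.isUnit).ne_zero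
  rw [Matrix.coe_units_inv, Matrix.inv_def, Matrix.mul_smul, Ring.inverse_eq_inv']
  exact W.smul_mem_iff (inv_ne_zero hdet)

lemma isInternal_three {K E : Type*} [Field K] [AddCommGroup E] [Module K E]
    (U V W : Submodule K E)
    (hind : ∀ a ∈ U, ∀ b ∈ V, ∀ c ∈ W, a + b + c = 0 → a = 0 ∧ b = 0 ∧ c = 0)
    (hspan : ∀ x : E, ∃ a ∈ U, ∃ b ∈ V, ∃ c ∈ W, a + b + c = x) :
    DirectSum.IsInternal ![U, V, W] := by
  apply DirectSum.isInternal_submodule_of_iSupIndep_of_iSup_eq_top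
  · have key : ∀ (i : Fin 3) (T : Submodule K E), (∀ j, j ≠ i → ![U, V, W] j ≤ T) →
        Disjoint (![U, V, W] i) T →
        Disjoint (![U, V, W] i) (⨆ j, ⨆ _ : j ≠ i, ![U, V, W] j) :=
      fun i T h hd => hd.mono_right (iSup₂_le h)
    intro i
    fin_cases i
    · refine key 0 (V ⊔ W) (fun j hj => ?_) ?_
      · fin_cases j
        · exact absurd rfl hj
        · exact le_sup_left
        · exact le_sup_right
      · rw [Submodule.disjoint_def]
        intro x hx hx'
        obtain ⟨b, hb, c, hc, rfl⟩ := Submodule.mem_sup.mp hx'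
        obtain ⟨h1, -, -⟩ := hind _ (U.neg_mem hx) b hb c hc (by abel)
        exact neg_eq_zero.mp h1
    · refine key 1 (U ⊔ W) (fun j hj => ?_) ?_
      · fin_cases j
        · exact le_sup_left
        · exact absurd rfl hj
        · exact le_sup_right
      · rw [Submodule.disjoint_def]
        intro x hx hx'
        obtain ⟨b, hb, c, hc, rfl⟩ := Submodule.mem_sup.mp hx'
        obtain ⟨-, h1, -⟩ := hind b hb _ (V.neg_mem hx) c hc (by abel)
        exact neg_eq_zero.mp h1
    · refine key 2 (U ⊔ V) (fun j hj => ?_) ?_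
      · fin_cases j
        · exact le_sup_left
        · exact le_sup_right
        · exact absurd rfl hj
      · rw [Submodule.disjoint_def]
        intro x hx hx'
        obtain ⟨b, hb, c, hc, rfl⟩ := Submodule.mem_sup.mp hx'
        obtain ⟨-, -, h1⟩ := hind b hb c hc _ (W.neg_mem hx) (by abel)
        exact neg_eq_zero.mp h1
  · rw [eq_top_iff]
    intro x _
    obtain ⟨a, ha, b, hb, c, hc, rfl⟩ := hspan x
    have hle := fun i => le_iSup ![U, V, W] i
    exact add_mem (add_mem (hle 0 ha) (hle 1 hb)) (hle 2 hc)

lemma eq_bot_or_eq_span_singleton {K E : Type*} [Field K] [AddCommGroup E] [Module K E]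
    (v : E) (W : Submodule K E) (hW : W ≤ Submodule.span K {v}) :
    W = ⊥ ∨ W = Submodule.span K {v} := by
  by_cases h : W = ⊥
  · exact Or.inl h
  · right
    obtain ⟨w, hw, hw0⟩ := W.ne_bot_iff.mp h
    obtain ⟨c, rfl⟩ := Submodule.mem_span_singleton.mp (hW hw)
    have hc : c ≠ 0 := by
      rintro rfl
      simp at hw0
    refine le_antisymm hW ?_
    rw [Submodule.span_singleton_le_iff_mem]
    exact (W.smul_mem_iff hc).mp hw

/-! ### The subspaces `V₁`, `V₂`, `V₃` in coordinates -/

lemma mem_V1 {M : Matrix (Fin 2) (Fin 2) (ZMod p)} :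
    M ∈ V1 p ↔ M 0 1 = 0 ∧ M 1 0 = 0 ∧ M 0 0 = M 1 1 := by
  rw [V1, Submodule.mem_span_singleton]
  constructor
  · rintro ⟨c, rfl⟩
    simp
  · rintro ⟨h1, h2, h3⟩
    refine ⟨M 0 0, ?_⟩
    ext i j
    fin_cases i <;> fin_cases j <;> simp [h1, h2, h3]

lemma mem_V2sp {M : Matrix (Fin 2) (Fin 2) (ZMod p)} :
    M ∈ V2sp p ↔ M 0 1 = 0 ∧ M 1 0 = 0 ∧ M 1 1 = -M 0 0 := by
  rw [V2sp, Submodule.mem_span_singleton]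
  constructor
  · rintro ⟨c, rfl⟩
    simp
  · rintro ⟨h1, h2, h3⟩
    refine ⟨M 0 0, ?_⟩
    ext i j
    fin_cases i <;> fin_cases j <;> simp [h1, h2, h3]

lemma mem_V2ns {M : Matrix (Fin 2) (Fin 2) (ZMod p)} :
    M ∈ V2ns p ↔ M 0 0 = 0 ∧ M 1 1 = 0 ∧ M 0 1 = (epsN p : ZMod p) * M 1 0 := by
  rw [V2ns, Submodule.mem_span_singleton]
  constructor
  · rintro ⟨c, rfl⟩
    simp [mul_comm]
  · rintro ⟨h1, h2, h3⟩
    refine ⟨M 1 0, ?_⟩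
    ext i j
    fin_cases i <;> fin_cases j <;> simp [h1, h2, h3, mul_comm]

lemma mem_V3sp (hp : Odd p) {M : Matrix (Fin 2) (Fin 2) (ZMod p)} :
    M ∈ V3sp p ↔ M 0 0 = 0 ∧ M 1 1 = 0 := by
  rw [V3sp, Submodule.mem_span_pair]
  constructor
  · rintro ⟨a, b, rfl⟩
    simp
  · rintro ⟨h1, h2⟩
    have h := two_ne_zero_zmod p hp
    refine ⟨(M 0 1 + M 1 0) / 2, (M 0 1 - M 1 0) / 2, ?_⟩
    ext i j
    fin_cases i <;> fin_cases j <;> simp [h1, h2] <;> field_simp <;> ring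

lemma mem_V3ns {M : Matrix (Fin 2) (Fin 2) (ZMod p)} :
    M ∈ V3ns p ↔ M 1 1 = -M 0 0 ∧ M 0 1 = -((epsN p : ZMod p) * M 1 0) := by
  rw [V3ns, Submodule.mem_span_pair]
  constructor
  · rintro ⟨a, b, rfl⟩
    simp [mul_comm]
  · rintro ⟨h1, h2⟩
    refine ⟨M 0 0, - M 1 0, ?_⟩
    ext i j
    fin_cases i <;> fin_cases j <;> simp [h1, h2, mul_comm]

lemma mat_eq {R : Type*} (M : Matrix (Fin 2) (Fin 2) R) : M = !![M 0 0, M 0 1; M 1 0, M 1 1] :=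
  Matrix.eta_fin_two M

/-! ### Reductions of elements of the Cartan subgroup and its normaliser -/

/-- If the square of a matrix is scalar, its order in the quotient by the centre is at most
`2`. -/
lemma sq_not_scalar {g : GL (Fin 2) (ZMod p)}
    (hg : 2 < orderOf (QuotientGroup.mk g :
      GL (Fin 2) (ZMod p) ⧸ Subgroup.center (GL (Fin 2) (ZMod p)))) (c : ZMod p)
    (hc : g.val * g.val = c • 1) : False := by
  have hmem : g ^ 2 ∈ Subgroup.center (GL (Fin 2) (ZMod p)) := by
    rw [Subgroup.mem_center_iff]
    intro h
    apply Units.ext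
    rw [Units.val_mul, Units.val_mul, pow_two, Units.val_mul, hc]
    simp
  have h1 : (QuotientGroup.mk g :
      GL (Fin 2) (ZMod p) ⧸ Subgroup.center (GL (Fin 2) (ZMod p))) ^ 2 = 1 := by
    rw [← QuotientGroup.mk_pow]
    exact (QuotientGroup.eq_one_iff _).mpr hmem
  have := orderOf_le_of_pow_eq_one two_pos h1
  omega

lemma red_val (A : GL (Fin 2) ℤ_[p]) :
    (red p A).val = A.val.map (PadicInt.toZMod (p := p)) := rfl

lemma red_csp {A : GL (Fin 2) ℤ_[p]} (h : A ∈ cspSet ℤ_[p]) :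
    ∃ a b : ZMod p, (red p A).val = !![a, 0; 0, b] := by
  obtain ⟨a, b, h⟩ := h
  refine ⟨PadicInt.toZMod a, PadicInt.toZMod b, ?_⟩
  rw [red_val, h]
  ext i j
  fin_cases i <;> fin_cases j <;> simp

lemma red_cspPlus {A : GL (Fin 2) ℤ_[p]} (h : A ∈ cspPlusSet ℤ_[p]) :
    A ∈ cspSet ℤ_[p] ∨ ∃ a b : ZMod p, (red p A).val = !![0, a; b, 0] := by
  obtain ⟨a, b, h | h⟩ := h
  · exact Or.inl ⟨a, b, h⟩
  · refine Or.inr ⟨PadicInt.toZMod b, PadicInt.toZMod a, ?_⟩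
    rw [red_val, h]
    ext i j
    fin_cases i <;> fin_cases j <;> simp

lemma red_cns {A : GL (Fin 2) ℤ_[p]} (h : A ∈ cnsSet ℤ_[p] (epsN p : ℤ_[p])) :
    ∃ a b : ZMod p, (red p A).val = !![a, (epsN p : ZMod p) * b; b, a] := by
  obtain ⟨a, b, h⟩ := h
  refine ⟨PadicInt.toZMod a, PadicInt.toZMod b, ?_⟩
  rw [red_val, h]
  ext i j
  fin_cases i <;> fin_cases j <;> simp

lemma red_cnsPlus {A : GL (Fin 2) ℤ_[p]} (h : A ∈ cnsPlusSet ℤ_[p] (epsN p : ℤ_[p])) :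
    (∃ a b : ZMod p, (red p A).val = !![a, (epsN p : ZMod p) * b; b, a]) ∨
    ∃ a b : ZMod p, (red p A).val = !![a, (epsN p : ZMod p) * b; -b, -a] := by
  obtain ⟨a, b, h | h⟩ := h
  · exact Or.inl (red_cns p ⟨a, b, h⟩)
  · refine Or.inr ⟨PadicInt.toZMod a, PadicInt.toZMod b, ?_⟩
    rw [red_val, h]
    ext i j
    fin_cases i <;> fin_cases j <;> simp

/-! ### Stability under conjugation -/

lemma V1_stable (g : GL (Fin 2) (ZMod p)) {M : Matrix (Fin 2) (Fin 2) (ZMod p)}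
    (hM : M ∈ V1 p) :
    (g : Matrix (Fin 2) (Fin 2) (ZMod p)) * M * ((g⁻¹ : GL (Fin 2) (ZMod p)) :
      Matrix (Fin 2) (Fin 2) (ZMod p)) ∈ V1 p := by
  obtain ⟨c, rfl⟩ := Submodule.mem_span_singleton.mp hM
  simpa using hM

lemma split_stable (hp : Odd p) {g : GL (Fin 2) (ZMod p)}
    (hg : (∃ a b : ZMod p, g.val = !![a, 0; 0, b]) ∨ ∃ a b : ZMod p, g.val = !![0, a; b, 0])
    (M : Matrix (Fin 2) (Fin 2) (ZMod p)) :
    (M ∈ V2sp p → g.val * M * g.val.adjugate ∈ V2sp p) ∧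
    (M ∈ V3sp p → g.val * M * g.val.adjugate ∈ V3sp p) := by
  rw [mem_V2sp, mem_V2sp, mem_V3sp p hp, mem_V3sp p hp, mat_eq M]
  obtain ⟨a, b, hg⟩ | ⟨a, b, hg⟩ := hg <;> rw [hg] <;> constructor <;> intro h <;>
    simp [Matrix.adjugate_fin_two, Matrix.mul_apply, Fin.sum_univ_two] at h ⊢ <;>
    simp [h] <;> try ring

lemma nonsplit_stable {g : GL (Fin 2) (ZMod p)}
    (hg : (∃ a b : ZMod p, g.val = !![a, (epsN p : ZMod p) * b; b, a]) ∨
      ∃ a b : ZMod p, g.val = !![a, (epsN p : ZMod p) * b; -b, -a])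
    (M : Matrix (Fin 2) (Fin 2) (ZMod p)) :
    (M ∈ V2ns p → g.val * M * g.val.adjugate ∈ V2ns p) ∧
    (M ∈ V3ns p → g.val * M * g.val.adjugate ∈ V3ns p) := by
  rw [mem_V2ns, mem_V2ns, mem_V3ns, mem_V3ns, mat_eq M]
  obtain ⟨a, b, hg⟩ | ⟨a, b, hg⟩ := hg <;> rw [hg] <;> constructor <;> intro h <;>
    simp [Matrix.adjugate_fin_two, Matrix.mul_apply, Fin.sum_univ_two] at h ⊢ <;>
    simp only [h] <;> refine ⟨?_, ?_⟩ <;> try refine ⟨?_, ?_⟩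
  all_goals ring

/-! ### The direct sum decomposition -/

lemma split_internal (hp : Odd p) : DirectSum.IsInternal ![V1 p, V2sp p, V3sp p] := by
  have h2 := two_ne_zero_zmod p hp
  apply isInternal_three
  · intro a ha b hb c hc h
    rw [mem_V1] at ha
    rw [mem_V2sp] at hb
    rw [mem_V3sp p hp] at hc
    obtain ⟨ha1, ha2, ha3⟩ := ha
    obtain ⟨hb1, hb2, hb3⟩ := hb
    obtain ⟨hc1, hc2⟩ := hc
    have e00 := congrFun (congrFun h 0) 0
    have e01 := congrFun (congrFun h 0) 1
    have e10 := congrFun (congrFun h 1) 0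
    have e11 := congrFun (congrFun h 1) 1
    simp only [Matrix.add_apply, Matrix.zero_apply] at e00 e01 e10 e11
    have ha0 : a 0 0 = 0 := by
      apply (mul_eq_zero.mp (?_ : (2 : ZMod p) * a 0 0 = 0)).resolve_left h2
      linear_combination e00 + e11 + ha3 - hb3 - hc1 - hc2
    have hb0 : b 0 0 = 0 := by linear_combination e00 - ha0 - hc1
    refine ⟨?_, ?_, ?_⟩ <;> ext i j <;> fin_cases i <;> fin_cases j <;> simp <;> grind
  · intro M
    refine ⟨!![(M 0 0 + M 1 1) / 2, 0; 0, (M 0 0 + M 1 1) / 2], by simp [mem_V1],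
      !![(M 0 0 - M 1 1) / 2, 0; 0, -((M 0 0 - M 1 1) / 2)], by simp [mem_V2sp],
      !![0, M 0 1; M 1 0, 0], by simp [mem_V3sp p hp], ?_⟩
    ext i j
    fin_cases i <;> fin_cases j <;> simp <;> field_simp <;> ring

lemma nonsplit_internal (hp : Odd p) : DirectSum.IsInternal ![V1 p, V2ns p, V3ns p] := by
  have h2 := two_ne_zero_zmod p hp
  have he := epsN_ne_zero p hp
  apply isInternal_three
  · intro a ha b hb c hc h
    rw [mem_V1] at ha
    rw [mem_V2ns] at hb
    rw [mem_V3ns] at hc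
    obtain ⟨ha1, ha2, ha3⟩ := ha
    obtain ⟨hb1, hb2, hb3⟩ := hb
    obtain ⟨hc1, hc2⟩ := hc
    have e00 := congrFun (congrFun h 0) 0
    have e01 := congrFun (congrFun h 0) 1
    have e10 := congrFun (congrFun h 1) 0
    have e11 := congrFun (congrFun h 1) 1
    simp only [Matrix.add_apply, Matrix.zero_apply] at e00 e01 e10 e11
    have ha0 : a 0 0 = 0 := by
      apply (mul_eq_zero.mp (?_ : (2 : ZMod p) * a 0 0 = 0)).resolve_left h2
      linear_combination e00 + e11 + ha3 - hb1 - hb2 - hc1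
    have hb0 : b 1 0 = 0 := by
      apply (mul_eq_zero.mp (?_ : (2 * (epsN p : ZMod p)) * b 1 0 = 0)).resolve_left
        (mul_ne_zero h2 he)
      linear_combination e01 + (epsN p : ZMod p) * e10 - ha1 - (epsN p : ZMod p) * ha2 - hb3 - hc2
    refine ⟨?_, ?_, ?_⟩ <;> ext i j <;> fin_cases i <;> fin_cases j <;> simp <;> grind
  · intro M
    refine ⟨!![(M 0 0 + M 1 1) / 2, 0; 0, (M 0 0 + M 1 1) / 2], by simp [mem_V1],
      !![0, (epsN p : ZMod p) * ((M 0 1 / (epsN p : ZMod p) + M 1 0) / 2);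
        (M 0 1 / (epsN p : ZMod p) + M 1 0) / 2, 0], by simp [mem_V2ns],
      !![(M 0 0 - M 1 1) / 2, -((epsN p : ZMod p) * ((M 1 0 - M 0 1 / (epsN p : ZMod p)) / 2));
        (M 1 0 - M 0 1 / (epsN p : ZMod p)) / 2, -((M 0 0 - M 1 1) / 2)], by simp [mem_V3ns], ?_⟩
    ext i j
    fin_cases i <;> fin_cases j <;> simp <;> field_simp <;> ring

/-! ### Irreducibility of `V₃` -/

/-- The diagonal element separates the two coordinate lines of `V₃`, and the antidiagonal element
swaps them. -/
lemma split_irred (hp : Odd p) (W : Submodule (ZMod p) (Matrix (Fin 2) (Fin 2) (ZMod p)))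
    (hW : W ≤ V3sp p) (a b u v : ZMod p) (hab : a * a ≠ b * b) (hu : u ≠ 0) (hv : v ≠ 0)
    (h1 : ∀ M ∈ W, !![a, 0; 0, b] * M * (!![a, 0; 0, b]).adjugate ∈ W)
    (h2 : ∀ M ∈ W, !![0, u; v, 0] * M * (!![0, u; v, 0]).adjugate ∈ W) :
    W = ⊥ ∨ W = V3sp p := by
  by_cases hbot : W = ⊥
  · exact Or.inl hbot
  right
  have hd : a * a - b * b ≠ 0 := sub_ne_zero.mpr hab
  -- the antidiagonal element swaps the two coordinate lines
  have s12 : !![(0 : ZMod p), 1; 0, 0] ∈ W → !![(0 : ZMod p), 0; 1, 0] ∈ W := by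
    intro h
    have h' := W.smul_mem (-(v * v)⁻¹) (h2 _ h)
    convert h' using 1
    ext i j
    fin_cases i <;> fin_cases j <;> simp [Matrix.adjugate_fin_two] <;> field_simp
  have s21 : !![(0 : ZMod p), 0; 1, 0] ∈ W → !![(0 : ZMod p), 1; 0, 0] ∈ W := by
    intro h
    have h' := W.smul_mem (-(u * u)⁻¹) (h2 _ h)
    convert h' using 1
    ext i j
    fin_cases i <;> fin_cases j <;> simp [Matrix.adjugate_fin_two] <;> field_simp
  obtain ⟨X, hX, hX0⟩ := W.ne_bot_iff.mp hbot
  obtain ⟨hx1, hx2⟩ := (mem_V3sp p hp).mp (hW hX)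
  obtain ⟨x, y, rfl⟩ : ∃ x y, X = !![0, x; y, 0] :=
    ⟨X 0 1, X 1 0, by rw [mat_eq X, hx1, hx2]; simp⟩
  have hE : !![(0 : ZMod p), 1; 0, 0] ∈ W ∧ !![(0 : ZMod p), 0; 1, 0] ∈ W := by
    by_cases hx : x = 0
    · subst hx
      have hy : y ≠ 0 := by
        rintro rfl
        apply hX0
        ext i j
        fin_cases i <;> fin_cases j <;> simp
      have h : !![(0 : ZMod p), 0; 1, 0] ∈ W := by
        convert W.smul_mem y⁻¹ hX using 1
        ext i j
        fin_cases i <;> fin_cases j <;> simp [hy]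
      exact ⟨s21 h, h⟩
    · have h : !![(0 : ZMod p), 1; 0, 0] ∈ W := by
        rw [← W.smul_mem_iff (mul_ne_zero hd hx)]
        convert W.sub_mem (h1 _ hX) (W.smul_mem (b * b) hX) using 1
        ext i j
        fin_cases i <;> fin_cases j <;> simp [Matrix.adjugate_fin_two] <;> ring
      exact ⟨h, s12 h⟩
  refine le_antisymm hW fun Z hZ => ?_
  obtain ⟨hz1, hz2⟩ := (mem_V3sp p hp).mp hZ
  convert W.add_mem (W.smul_mem (Z 0 1) hE.1) (W.smul_mem (Z 1 0) hE.2) using 1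
  ext i j
  fin_cases i <;> fin_cases j <;> simp [hz1, hz2]

/-- `V₃` is a line over `𝔽_{p²} = 𝔽_p[J]`, where `J = [[0,ε],[1,0]]`, and an element
`g = a + bJ` sends `X ∈ V₃` to `g²X` under `X ↦ g X adj(g)`.  As `ab ≠ 0`, a stable subspace
is therefore closed under `J`, that is, an `𝔽_{p²}`-subspace. -/
lemma nonsplit_irred (hp : Odd p) (W : Submodule (ZMod p) (Matrix (Fin 2) (Fin 2) (ZMod p)))
    (hW : W ≤ V3ns p) (a b : ZMod p) (hab : a * b ≠ 0)
    (h1 : ∀ M ∈ W, !![a, (epsN p : ZMod p) * b; b, a] * M *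
      (!![a, (epsN p : ZMod p) * b; b, a]).adjugate ∈ W) :
    W = ⊥ ∨ W = V3ns p := by
  by_cases hbot : W = ⊥
  · exact Or.inl hbot
  right
  have h2 := two_ne_zero_zmod p hp
  obtain ⟨X, hX, hX0⟩ := W.ne_bot_iff.mp hbot
  obtain ⟨hx1, hx2⟩ := (mem_V3ns p).mp (hW hX)
  set e : ZMod p := (epsN p : ZMod p) with he
  obtain ⟨x, y, rfl⟩ : ∃ x y, X = !![x, -(e * y); y, -x] :=
    ⟨X 0 0, X 1 0, by rw [mat_eq X, hx1, hx2]; simp⟩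
  have hne : x ≠ 0 ∨ y ≠ 0 := by
    by_contra! hcon
    apply hX0
    ext i j
    fin_cases i <;> fin_cases j <;> simp [hcon]
  have hN := norm_ne_zero p hp hne
  rw [← he] at hN
  have hJX : !![e * y, -(e * x); x, -(e * y)] ∈ W := by
    rw [← W.smul_mem_iff (mul_ne_zero h2 hab)]
    convert W.sub_mem (h1 _ hX) (W.smul_mem (a * a + e * (b * b)) hX) using 1
    ext i j
    fin_cases i <;> fin_cases j <;> simp [Matrix.adjugate_fin_two] <;> ring
  refine le_antisymm hW fun Z hZ => ?_
  obtain ⟨hz1, hz2⟩ := (mem_V3ns p).mp hZ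
  -- the Cramer formulas for `Z = αX + βJX`
  rw [← W.smul_mem_iff hN]
  convert W.add_mem (W.smul_mem (x * Z 0 0 - e * (y * Z 1 0)) hX)
    (W.smul_mem (x * Z 1 0 - y * Z 0 0) hJX) using 1
  ext i j
  fin_cases i <;> fin_cases j <;> simp [hz1, hz2] <;> ring

/-! ### Failure of closure under the bracket -/

lemma split_not_lie (hp : Odd p) : ¬ (∀ X ∈ V3sp p, ∀ Y ∈ V3sp p, X * Y - Y * X ∈ V3sp p) := by
  intro h
  have h' := h !![0, 1; 1, 0] (by simp [mem_V3sp p hp]) !![0, 1; -1, 0] (by simp [mem_V3sp p hp])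
  have hbr := ((mem_V3sp p hp).mp h').2
  simp at hbr
  exact two_ne_zero_zmod p hp (by linear_combination hbr)

lemma nonsplit_not_lie (hp : Odd p) :
    ¬ (∀ X ∈ V3ns p, ∀ Y ∈ V3ns p, X * Y - Y * X ∈ V3ns p) := by
  intro h
  have h' := h !![1, 0; 0, -1] (by simp [mem_V3ns]) !![0, (epsN p : ZMod p); -1, 0]
    (by simp [mem_V3ns])
  have hbr := ((mem_V3ns p).mp h').2
  simp at hbr
  have h2 := two_ne_zero_zmod p hp
  refine mul_ne_zero (mul_ne_zero h2 h2) (epsN_ne_zero p hp) ?_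
  linear_combination hbr

/-- **(Zywina; Lemma 3.5.)** For an N-Cartan lift `G` with respect to the Cartan
subgroup `C`, each `𝔤ₙ` is an `𝔽_p[G(p)]`-submodule of `gl₂(𝔽_p)` for the conjugation
action.  If moreover `G(p) ∩ C(p)` contains an element whose image in `PGL₂(𝔽_p)`
has order greater than `2`, then `gl₂(𝔽_p) = V₁ ⊕ V₂ ⊕ V₃` is a decomposition into
irreducible `𝔽_p[G(p)]`-submodules, and `V₃` is not a Lie subalgebra of `gl₂(𝔽_p)`. -/
theorem nCartanLift_decomposition
    (p : ℕ) [Fact p.Prime] (hp : Odd p)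
    (G : Subgroup (GL (Fin 2) ℤ_[p]))
    (C Cplus : Set (GL (Fin 2) ℤ_[p]))
    (V2 V3 : Submodule (ZMod p) (Matrix (Fin 2) (Fin 2) (ZMod p)))
    (hC : (C = cspSet ℤ_[p] ∧ Cplus = cspPlusSet ℤ_[p] ∧ V2 = V2sp p ∧ V3 = V3sp p) ∨
          (C = cnsSet ℤ_[p] ((epsN p : ℤ_[p])) ∧ Cplus = cnsPlusSet ℤ_[p] ((epsN p : ℤ_[p])) ∧
            V2 = V2ns p ∧ V3 = V3ns p))
    (hG : IsNCartanLift p G C Cplus) :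
    (∀ n : ℕ, 1 ≤ n →
      (∃ W : Submodule (ZMod p) (Matrix (Fin 2) (Fin 2) (ZMod p)), ↑W = glSet p n G) ∧
      (∀ g ∈ Subgroup.map (red p) G, ∀ M ∈ glSet p n G,
        (g : Matrix (Fin 2) (Fin 2) (ZMod p)) * M * ((g⁻¹ : GL (Fin 2) (ZMod p)) :
          Matrix (Fin 2) (Fin 2) (ZMod p)) ∈ glSet p n G)) ∧
    (HasLargeOrderElt p G C →
      DirectSum.IsInternal ![V1 p, V2, V3] ∧
      (∀ i : Fin 3, ∀ g ∈ Subgroup.map (red p) G, ∀ M ∈ ![V1 p, V2, V3] i,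
        (g : Matrix (Fin 2) (Fin 2) (ZMod p)) * M * ((g⁻¹ : GL (Fin 2) (ZMod p)) :
          Matrix (Fin 2) (Fin 2) (ZMod p)) ∈ ![V1 p, V2, V3] i) ∧
      (∀ i : Fin 3, ∀ W : Submodule (ZMod p) (Matrix (Fin 2) (Fin 2) (ZMod p)),
        W ≤ ![V1 p, V2, V3] i →
        (∀ g ∈ Subgroup.map (red p) G, ∀ M ∈ W,
          (g : Matrix (Fin 2) (Fin 2) (ZMod p)) * M * ((g⁻¹ : GL (Fin 2) (ZMod p)) :
            Matrix (Fin 2) (Fin 2) (ZMod p)) ∈ W) →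
        W = ⊥ ∨ W = ![V1 p, V2, V3] i) ∧
      ¬ (∀ X ∈ V3, ∀ Y ∈ V3, X * Y - Y * X ∈ V3)) := by
  refine ⟨fun n hn => ⟨glSet_submodule p hn G, fun g hg M hM => glSet_conj_mem p G hg hM⟩, ?_⟩
  rintro ⟨g, ⟨hgG, c, hcC, rfl⟩, hord⟩
  obtain ⟨-, -, hplus, hnot, -⟩ := hG
  have hgG' : red p c ∈ Subgroup.map (red p) G := hgG
  rcases hC with ⟨rfl, rfl, rfl, rfl⟩ | ⟨rfl, rfl, rfl, rfl⟩
  · refine ⟨split_internal p hp, ?_, ?_, split_not_lie p hp⟩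
    · intro i g hg M hM
      have hform : (∃ a b : ZMod p, g.val = !![a, 0; 0, b]) ∨
          ∃ a b : ZMod p, g.val = !![0, a; b, 0] := by
        obtain ⟨d, hd, rfl⟩ := hplus hg
        exact (red_cspPlus p hd).imp_left (red_csp p)
      fin_cases i
      · exact V1_stable p g hM
      · exact (conj_mem_iff p _ g M).mpr ((split_stable p hp hform M).1 hM)
      · exact (conj_mem_iff p _ g M).mpr ((split_stable p hp hform M).2 hM)
    · intro i W hW hst
      fin_cases i
      · exact eq_bot_or_eq_span_singleton _ W hW
      · exact eq_bot_or_eq_span_singleton _ W hW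
      · obtain ⟨a, b, hab⟩ := red_csp p hcC
        obtain ⟨h, hh, hhC⟩ := Set.not_subset.mp hnot
        obtain ⟨d, hd, rfl⟩ := hplus hh
        obtain ⟨u, v, huv⟩ := (red_cspPlus p hd).resolve_left fun h' => hhC ⟨d, h', rfl⟩
        have hdet : (red p d).val.det ≠ 0 :=
          ((Matrix.isUnit_iff_isUnit_det _).mp (red p d).isUnit).ne_zero
        rw [huv] at hdet
        simp [Matrix.det_fin_two] at hdet
        refine split_irred p hp W hW a b u v ?_ hdet.1 hdet.2 ?_ ?_
        · intro hsq
          refine sq_not_scalar p hord (a * a) ?_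
          rw [hab]
          ext i j
          fin_cases i <;> fin_cases j <;> simp [hsq]
        · intro M hM
          rw [← hab]
          exact (conj_mem_iff p W _ M).mp (hst _ hgG' M hM)
        · intro M hM
          rw [← huv]
          exact (conj_mem_iff p W _ M).mp (hst _ hh M hM)
  · refine ⟨nonsplit_internal p hp, ?_, ?_, nonsplit_not_lie p hp⟩
    · intro i g hg M hM
      have hform : (∃ a b : ZMod p, g.val = !![a, (epsN p : ZMod p) * b; b, a]) ∨
          ∃ a b : ZMod p, g.val = !![a, (epsN p : ZMod p) * b; -b, -a] := by
        obtain ⟨d, hd, rfl⟩ := hplus hg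
        exact red_cnsPlus p hd
      fin_cases i
      · exact V1_stable p g hM
      · exact (conj_mem_iff p _ g M).mpr ((nonsplit_stable p hform M).1 hM)
      · exact (conj_mem_iff p _ g M).mpr ((nonsplit_stable p hform M).2 hM)
    · intro i W hW hst
      fin_cases i
      · exact eq_bot_or_eq_span_singleton _ W hW
      · exact eq_bot_or_eq_span_singleton _ W hW
      · obtain ⟨a, b, hab⟩ := red_cns p hcC
        refine nonsplit_irred p hp W hW a b ?_ ?_
        · intro h0
          refine sq_not_scalar p hord (a * a + (epsN p : ZMod p) * (b * b)) ?_
          rw [hab]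
          ext i j
          fin_cases i <;> fin_cases j <;> simp
          · ring
          · linear_combination 2 * (epsN p : ZMod p) * h0
          · linear_combination 2 * h0
          · ring
        · intro M hM
          rw [← hab]
          exact (conj_mem_iff p W _ M).mp (hst _ hgG' M hM)

end
end

section
/- Let p be an odd prime and let G ≤ GL₂(ℤ_p) be a closed subgroup such that det(G) ⊇ 1 + pℤ_p and p does not divide the order of G(p). Let S := G ∩ SL₂(ℤ_p) and let 𝔰ₙ denote the image of Sₙ/Sₙ₊₁ in gl₂(𝔽_p) under I + pⁿA ↦ (A mod p). Then for every n ≥ 1 the trace map sends 𝔤ₙ onto 𝔽_p, and 𝔰ₙ = 𝔤ₙ ∩ sl₂(𝔽_p). -/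
/-!
The point is that `det(Gₙ) ⊇ 1 + pⁿℤ_p` for every `n ≥ 1` (`exists_congruence_det_eq`).
Let `m = |G(p)|`, which is prime to `p`. Hensel's lemma shows that `m`-th powering is onto
`1 + pℤ_p` (`exists_pow_eq_of_not_dvd`) and, `p` being odd, that `pⁿ⁻¹`-th powering maps
`1 + pℤ_p` onto `1 + pⁿℤ_p` (`exists_pow_pow_eq`). So an element of `1 + pⁿℤ_p` is
`v ^ (m * pⁿ⁻¹)` with `v = det A`, `A ∈ G`, and `A ^ (m * pⁿ⁻¹)` lies in `Gₙ`.

Since `det (I + pⁿB) = 1 + pⁿ(tr B + pⁿ det B)`, prescribing the determinant of an element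
of `Gₙ` prescribes `tr B` modulo `p`, which gives surjectivity of the trace and
`𝔰ₙ ⊆ sl₂(𝔽_p)`. If conversely `A = I + pⁿB ∈ G` has `tr B ≡ 0 (mod p)`, then
`det A ∈ 1 + pⁿ⁺¹ℤ_p` is also the determinant of some `C ∈ Gₙ₊₁`, and `A C⁻¹ ∈ S` has the
same image in `gl₂(𝔽_p)` as `A`.
-/

open Matrix

noncomputable section

variable (p : ℕ) [Fact p.Prime]

/-! ### Powers of elements congruent to `1` -/

/-- The binomial expansion to second order, for an odd exponent. -/
lemma one_add_pow_odd_expansion (q : ℕ) (y : Polynomial ℤ) :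
    ∃ h, (1 + y) ^ (2 * q + 1) =
      1 + (2 * q + 1) * y + q * (2 * q + 1) * y ^ 2 + h * y ^ 3 := by
  induction q with
  | zero => exact ⟨0, by simp⟩
  | succ q ih =>
    obtain ⟨h, hh⟩ := ih
    refine ⟨h * (1 + y) ^ 2 + (2 * q + 1) + 2 * q * (2 * q + 1)
      + q * (2 * q + 1) * y, ?_⟩
    rw [show 2 * (q + 1) + 1 = (2 * q + 1) + 2 by ring, pow_add, hh]
    push_cast
    ring

/-- `(1 + pᵏX)^p ≡ 1 + pᵏ⁺¹X (mod pᵏ⁺²)` for odd `p`. It is stated over `ℤ[X]` so that it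
can be specialised both to `p`-adic integers and to matrices. -/
lemma one_add_pow_mul_X_pow_eq {p : ℕ} (hp : Odd p) {k : ℕ} (hk : 1 ≤ k) :
    ∃ H : Polynomial ℤ, (1 + (p : Polynomial ℤ) ^ k * Polynomial.X) ^ p =
      1 + (p : Polynomial ℤ) ^ (k + 1) * (Polynomial.X + (p : Polynomial ℤ) * H) := by
  obtain ⟨q, hq⟩ := hp
  obtain ⟨j, rfl⟩ := Nat.exists_eq_add_of_le hk
  obtain ⟨h, hh⟩ := one_add_pow_odd_expansion q
    ((p : Polynomial ℤ) ^ (1 + j) * Polynomial.X)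
  have hq' : (p : Polynomial ℤ) = 2 * q + 1 := by rw [hq]; push_cast; ring
  rw [← hq, ← hq'] at hh
  refine ⟨(q : Polynomial ℤ) * (p : Polynomial ℤ) ^ j * Polynomial.X ^ 2
    + h * (p : Polynomial ℤ) ^ (2 * j) * Polynomial.X ^ 3, ?_⟩
  rw [hh]
  ring

lemma matrix_pow_pow_eq {p : ℕ} [Fact p.Prime] (hp : Odd p) (k : ℕ)
    (B : Matrix (Fin 2) (Fin 2) ℤ_[p]) :
    ∃ B' : Matrix (Fin 2) (Fin 2) ℤ_[p],
      (1 + (p : ℤ_[p]) • B) ^ p ^ k = 1 + ((p : ℤ_[p]) ^ (k + 1)) • B' := by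
  induction k with
  | zero => exact ⟨B, by simp⟩
  | succ k ih =>
    obtain ⟨B', hB'⟩ := ih
    obtain ⟨H, hH⟩ := one_add_pow_mul_X_pow_eq hp (k := k + 1) (by omega)
    have h := congrArg (Polynomial.aeval B') hH
    simp only [map_pow, map_add, map_mul, map_one, map_natCast, Polynomial.aeval_X] at h
    have hc : ∀ (j : ℕ) (D : Matrix (Fin 2) (Fin 2) ℤ_[p]),
        ((p : ℤ_[p]) ^ j) • D = (p : Matrix (Fin 2) (Fin 2) ℤ_[p]) ^ j * D := by
      intro j D
      rw [← Nat.cast_pow, ← Nat.cast_pow, Nat.cast_smul_eq_nsmul, nsmul_eq_mul]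
    refine ⟨B' + p * Polynomial.aeval B' H, ?_⟩
    rw [pow_succ p k, pow_mul, hB', hc, hc, h]

lemma dvd_of_norm_lt_one {p : ℕ} [Fact p.Prime] {x : ℤ_[p]} (h : ‖x‖ < 1) :
    (p : ℤ_[p]) ∣ x := by
  rwa [← PadicInt.norm_lt_one_iff_dvd]

/-- Every element of `1 + pᵏ⁺¹ℤ_p` is the `p`-th power of an element of `1 + pᵏℤ_p`:
after dividing by `pᵏ⁺¹`, the equation reduces modulo `p` to a linear one. -/
lemma exists_pow_prime_eq {p : ℕ} [Fact p.Prime] (hp : Odd p) {k : ℕ} (hk : 1 ≤ k)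
    (x : ℤ_[p]) :
    ∃ y : ℤ_[p], (1 + (p : ℤ_[p]) ^ k * y) ^ p = 1 + (p : ℤ_[p]) ^ (k + 1) * x := by
  obtain ⟨H, hH⟩ := one_add_pow_mul_X_pow_eq hp hk
  let H' : Polynomial ℤ_[p] := H.map (Int.castRingHom ℤ_[p])
  let F : Polynomial ℤ_[p] :=
    Polynomial.X - Polynomial.C x + Polynomial.C (p : ℤ_[p]) * H'
  have hF : F.eval x = p * H'.eval x := by simp [F]
  have hF' : F.derivative.eval x = 1 + p * H'.derivative.eval x := by simp [F]
  have hlt : ∀ z : ℤ_[p], ‖(p : ℤ_[p]) * z‖ < 1 := fun z =>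
    (PadicInt.norm_lt_one_iff_dvd _).2 (dvd_mul_right _ _)
  have hn : ‖F.derivative.eval x‖ = 1 := by
    rw [hF']
    refine le_antisymm (PadicInt.norm_le_one _) (not_lt.1 fun h => ?_)
    have h1 := dvd_of_norm_lt_one h
    have h2 : (p : ℤ_[p]) ∣ 1 := (dvd_add_left (dvd_mul_right _ _)).1 h1
    have h3 := (PadicInt.norm_lt_one_iff_dvd (1 : ℤ_[p])).2 h2
    simp at h3
  obtain ⟨y, hy, -⟩ := hensels_lemma (F := F) (a := x) (by
    simp only [Polynomial.coe_aeval_eq_eval]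
    rw [hn, hF, one_pow]; exact hlt _)
  refine ⟨y, ?_⟩
  have h := congrArg (Polynomial.aeval y) hH
  simp only [map_pow, map_add, map_mul, map_one, map_natCast, Polynomial.aeval_X] at h
  have hy' : y - x + p * Polynomial.aeval y H = 0 := by
    have : Polynomial.aeval y H = H'.eval y := by
      simp [H', Polynomial.aeval_def, Polynomial.eval_map]
    rw [this]
    simpa [F] using hy
  rw [h]
  linear_combination (p : ℤ_[p]) ^ (k + 1) * hy'

lemma exists_pow_pow_eq {p : ℕ} [Fact p.Prime] (hp : Odd p) (k : ℕ) (x : ℤ_[p]) :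
    ∃ y : ℤ_[p], (1 + (p : ℤ_[p]) * y) ^ p ^ k = 1 + (p : ℤ_[p]) ^ (k + 1) * x := by
  induction k generalizing x with
  | zero => exact ⟨x, by simp⟩
  | succ k ih =>
    obtain ⟨z, hz⟩ := exists_pow_prime_eq hp (k := k + 1) (by omega) x
    obtain ⟨y, hy⟩ := ih z
    exact ⟨y, by rw [pow_succ p k, pow_mul, hy, hz]⟩

lemma exists_pow_eq_of_not_dvd {p : ℕ} [Fact p.Prime] {m : ℕ} (hm : ¬ p ∣ m) (x : ℤ_[p]) :
    ∃ y : ℤ_[p], (1 + (p : ℤ_[p]) * y) ^ m = 1 + (p : ℤ_[p]) * x := by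
  let F : Polynomial ℤ_[p] := Polynomial.X ^ m - Polynomial.C (1 + (p : ℤ_[p]) * x)
  have hF : F.eval 1 = p * (-x) := by simp [F]
  have hn : ‖F.derivative.eval 1‖ = 1 := by
    have : F.derivative.eval 1 = (m : ℤ_[p]) := by
      simp [F, Polynomial.derivative_X_pow]
    rw [this]
    refine le_antisymm (PadicInt.norm_le_one _) (not_lt.1 fun h => hm ?_)
    have := PadicInt.norm_int_lt_one_iff_dvd (p := p) (m : ℤ)
    exact_mod_cast this.1 (by exact_mod_cast h)
  obtain ⟨z, hz, hz1, -⟩ := hensels_lemma (F := F) (a := (1 : ℤ_[p])) (by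
    simp only [Polynomial.coe_aeval_eq_eval]
    rw [hn, hF, one_pow]
    exact (PadicInt.norm_lt_one_iff_dvd _).2 (dvd_mul_right _ _))
  simp only [Polynomial.coe_aeval_eq_eval] at hz hz1
  rw [hn] at hz1
  obtain ⟨y, hy⟩ := dvd_of_norm_lt_one hz1
  refine ⟨y, ?_⟩
  rw [← hy]
  have : z ^ m - (1 + (p : ℤ_[p]) * x) = 0 := by simpa [F] using hz
  linear_combination this

/-! ### Determinants of the congruence subgroups of `G` -/

lemma toZMod_eq_zero_iff {p : ℕ} [Fact p.Prime] (x : ℤ_[p]) :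
    PadicInt.toZMod x = 0 ↔ (p : ℤ_[p]) ∣ x := by
  rw [← RingHom.mem_ker, PadicInt.ker_toZMod, PadicInt.maximalIdeal_eq_span_p,
    Ideal.mem_span_singleton]

lemma det_one_add_smul_fin_two {R : Type*} [CommRing R] (c : R) (B : Matrix (Fin 2) (Fin 2) R) :
    (1 + c • B).det = 1 + c * (B.trace + c * B.det) := by
  simp [Matrix.det_fin_two, Matrix.trace_fin_two]
  ring

lemma exists_eq_one_add_smul_of_red_eq_one {p : ℕ} [Fact p.Prime] {A : GL (Fin 2) ℤ_[p]}
    (h : red p A = 1) :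
    ∃ B : Matrix (Fin 2) (Fin 2) ℤ_[p],
      (A : Matrix (Fin 2) (Fin 2) ℤ_[p]) = 1 + (p : ℤ_[p]) • B := by
  have h1 : ∀ i j, (p : ℤ_[p]) ∣
      (A : Matrix (Fin 2) (Fin 2) ℤ_[p]) i j - (1 : Matrix (Fin 2) (Fin 2) ℤ_[p]) i j := by
    intro i j
    rw [← toZMod_eq_zero_iff, map_sub, sub_eq_zero]
    have := congrArg (fun g : GL (Fin 2) (ZMod p) => (g : Matrix _ _ (ZMod p)) i j) h
    simp only [red, Matrix.GeneralLinearGroup.map_apply, Units.val_one] at this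
    rw [this, Matrix.one_apply, Matrix.one_apply]
    split_ifs <;> simp
  choose B hB using h1
  refine ⟨Matrix.of B, ?_⟩
  ext i j
  simp only [Matrix.add_apply, Matrix.smul_apply, Matrix.of_apply, smul_eq_mul, ← hB]
  ring

/-- `det(Gₖ₊₁) ⊇ 1 + pᵏ⁺¹ℤ_p`. Write the target as `v ^ (m * pᵏ)` with `m = |G(p)|` and
`v ∈ 1 + pℤ_p`, and take the same power of an element of `G` of determinant `v`: the `m`-th
power lands in `G₁`, the further `pᵏ`-th power in `Gₖ₊₁`. -/
lemma exists_congruence_det_eq {p : ℕ} [Fact p.Prime] (hp : Odd p)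
    {G : Subgroup (GL (Fin 2) ℤ_[p])}
    (hdet : ∀ x : ℤ_[p], ∃ A ∈ G,
      (A : Matrix (Fin 2) (Fin 2) ℤ_[p]).det = 1 + (p : ℤ_[p]) * x)
    (hcard : ¬ (p ∣ Nat.card (Subgroup.map (red p) G))) (k : ℕ) (x : ℤ_[p]) :
    ∃ A ∈ G, ∃ B : Matrix (Fin 2) (Fin 2) ℤ_[p],
      (A : Matrix (Fin 2) (Fin 2) ℤ_[p]) = 1 + ((p : ℤ_[p]) ^ (k + 1)) • B ∧
      (A : Matrix (Fin 2) (Fin 2) ℤ_[p]).det = 1 + (p : ℤ_[p]) ^ (k + 1) * x := by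
  obtain ⟨y, hy⟩ := exists_pow_pow_eq hp k x
  obtain ⟨z, hz⟩ := exists_pow_eq_of_not_dvd hcard y
  obtain ⟨A, hA, hAdet⟩ := hdet z
  have hred : red p (A ^ Nat.card (Subgroup.map (red p) G)) = 1 := by
    rw [map_pow]
    have := pow_card_eq_one' (x := (⟨red p A, Subgroup.mem_map_of_mem _ hA⟩ :
      Subgroup.map (red p) G))
    simpa using congrArg Subtype.val this
  obtain ⟨B, hB⟩ := exists_eq_one_add_smul_of_red_eq_one hred
  obtain ⟨B', hB'⟩ := matrix_pow_pow_eq hp k B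
  refine ⟨(A ^ Nat.card (Subgroup.map (red p) G)) ^ p ^ k,
    pow_mem (pow_mem hA _) _, B', ?_, ?_⟩
  · rw [Units.val_pow_eq_pow_val, hB, hB']
  · rw [Units.val_pow_eq_pow_val, Units.val_pow_eq_pow_val, Matrix.det_pow, Matrix.det_pow,
      hAdet, hz, hy]

lemma trace_map_toZMod {p : ℕ} [Fact p.Prime] (B : Matrix (Fin 2) (Fin 2) ℤ_[p]) :
    (B.map ⇑(PadicInt.toZMod (p := p))).trace = PadicInt.toZMod B.trace := by
  simp [Matrix.trace_fin_two]

/-- **(Zywina; Lemma 3.7.)** Let `G ≤ GL₂(ℤ_p)` (`p` odd) be a closed subgroup with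
`det(G) ⊇ 1 + pℤ_p` and `p ∤ |G(p)|`, and let `S := G ∩ SL₂(ℤ_p)`.  Then for every
`n ≥ 1` the trace map sends `𝔤ₙ` onto `𝔽_p`, and `𝔰ₙ = 𝔤ₙ ∩ sl₂(𝔽_p)`. -/
theorem trace_glSet_surjective_and_slSet_eq
    (p : ℕ) [Fact p.Prime] (hp : Odd p)
    (G : Subgroup (GL (Fin 2) ℤ_[p]))
    (hclosed : IsClosed (G : Set (GL (Fin 2) ℤ_[p])))
    (hdet : ∀ x : ℤ_[p], ∃ A ∈ G,
      (A : Matrix (Fin 2) (Fin 2) ℤ_[p]).det = 1 + (p : ℤ_[p]) * x)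
    (hcard : ¬ (p ∣ Nat.card (Subgroup.map (red p) G)))
    (n : ℕ) (hn : 1 ≤ n) :
    {t : ZMod p | ∃ M ∈ glSet p n G, Matrix.trace M = t} = Set.univ ∧
    glSet p n (G ⊓ MonoidHom.ker
        (Matrix.GeneralLinearGroup.det (n := Fin 2) (R := ℤ_[p]))) =
      glSet p n G ∩ {M : Matrix (Fin 2) (Fin 2) (ZMod p) | Matrix.trace M = 0} := by
  obtain ⟨k, rfl⟩ : ∃ k, n = k + 1 := ⟨n - 1, by omega⟩
  have hp0 : ∀ j : ℕ, (p : ℤ_[p]) ^ j ≠ 0 := fun j =>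
    pow_ne_zero _ (by exact_mod_cast (Fact.out : p.Prime).ne_zero)
  have htr : ∀ (B : Matrix (Fin 2) (Fin 2) ℤ_[p]) (x : ℤ_[p]),
      (1 + ((p : ℤ_[p]) ^ (k + 1)) • B).det = 1 + (p : ℤ_[p]) ^ (k + 1) * x →
      PadicInt.toZMod B.trace = PadicInt.toZMod x := by
    intro B x h
    rw [det_one_add_smul_fin_two] at h
    have h1 := mul_left_cancel₀ (hp0 (k + 1)) (add_left_cancel h)
    rw [← h1]
    simp
  refine ⟨Set.eq_univ_of_forall fun t => ?_, Set.Subset.antisymm ?_ ?_⟩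
  · obtain ⟨x, rfl⟩ := ZMod.ringHom_surjective (PadicInt.toZMod (p := p)) t
    obtain ⟨A, hA, B, hB, hdetA⟩ := exists_congruence_det_eq hp hdet hcard k x
    refine ⟨_, ⟨A, hA, B, hB, rfl⟩, ?_⟩
    rw [trace_map_toZMod]
    exact htr B x (by rw [← hB, hdetA])
  · rintro M ⟨A, ⟨hA, hA1⟩, B, hB, rfl⟩
    refine ⟨⟨A, hA, B, hB, rfl⟩, ?_⟩
    have hd : (A : Matrix (Fin 2) (Fin 2) ℤ_[p]).det = 1 := by
      have := congrArg Units.val (MonoidHom.mem_ker.1 hA1)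
      simpa using this
    rw [Set.mem_ofPred_eq, trace_map_toZMod, htr B 0 (by rw [← hB, hd]; simp), map_zero]
  · rintro M ⟨⟨A, hA, B, hB, rfl⟩, hM⟩
    rw [Set.mem_ofPred_eq, trace_map_toZMod, toZMod_eq_zero_iff] at hM
    obtain ⟨s, hs⟩ := hM
    have hdA : (A : Matrix (Fin 2) (Fin 2) ℤ_[p]).det =
        1 + (p : ℤ_[p]) ^ (k + 1 + 1) * (s + (p : ℤ_[p]) ^ k * B.det) := by
      rw [hB, det_one_add_smul_fin_two, hs]
      ring
    -- Dividing `A` by an element of `Gₙ₊₁` of the same determinant moves it into `S`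
    -- without changing its class modulo `pⁿ⁺¹`.
    obtain ⟨C, hC, D, hD, hdC⟩ := exists_congruence_det_eq hp hdet hcard (k + 1)
      (s + (p : ℤ_[p]) ^ k * B.det)
    refine ⟨A * C⁻¹, ⟨G.mul_mem hA (G.inv_mem hC), ?_⟩,
      B - (p : ℤ_[p]) • (((A * C⁻¹ : GL (Fin 2) ℤ_[p]) : Matrix (Fin 2) (Fin 2) ℤ_[p]) * D),
      ?_, ?_⟩
    · have : Matrix.GeneralLinearGroup.det A = Matrix.GeneralLinearGroup.det C :=
        Units.ext (by simpa using hdA.trans hdC.symm)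
      change Matrix.GeneralLinearGroup.det (A * C⁻¹) = 1
      rw [map_mul, map_inv, this, mul_inv_cancel]
    · set E := ((A * C⁻¹ : GL (Fin 2) ℤ_[p]) : Matrix (Fin 2) (Fin 2) ℤ_[p]) with hE
      have h1 : E * (C : Matrix (Fin 2) (Fin 2) ℤ_[p]) = A := by
        rw [hE, ← Units.val_mul, inv_mul_cancel_right]
      rw [hD, hB, mul_add, mul_one, Matrix.mul_smul] at h1
      rw [smul_sub, smul_smul, ← pow_succ, ← add_sub_assoc, ← h1, add_sub_cancel_right]
    · ext i j
      simp

end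
end

section
/- If G ≤ GL₂(ℤ_p) is an N-Cartan lift (with respect to either Cartan subgroup), then the line of scalar matrices V₁ = 𝔽_p·Id is contained in 𝔤ₙ for every n ≥ 1. -/
/-!
The group `G(p) ≤ C⁺(p)` has order prime to `p`: an element `x` of order `p` would be unipotent,
so `x - 1` would have trace and determinant zero, and the explicit shapes of the elements of
`C⁺(p)` then force `x = 1`, as `p` is odd (`split_eq_one_of_pow_char`,
`nonsplit_eq_one_of_pow_char`). Moreover only scalar matrices commute with both a nonscalar element
of `C(p)` and an element of `C⁺(p)` outside `C(p)` (`split_commutant`, `nonsplit_commutant`).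

Choose `A ∈ G` with `det A = 1 + p`. Then `A ^ |G(p)| = 1 + pB` with
`tr B ≡ |G(p)| ≢ 0 (mod p)`, so `𝔤₁` contains a matrix of nonzero trace
(`exists_trace_ne_zero`). Since `𝔤₁` is closed under addition and under conjugation by `G(p)`,
it contains the sum of the `G(p)`-conjugates of this matrix. That sum commutes with `G(p)`, so it is
scalar, and its trace is nonzero because `|G(p)|` is prime to `p` (`sum_conj_eq_scalar`). Its
multiples are all the scalars. Finally, taking `p`-th powers gives `𝔤ₙ ⊆ 𝔤ₙ₊₁`
(`glSet_subset_succ`), which propagates the result from `n = 1` to all `n`.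
-/

open Matrix

noncomputable section

variable (p : ℕ) [Fact p.Prime]

/-! ### Matrix identities over a field -/

section FieldMatrices

variable {F : Type*} [Field F]

/-- A `2 × 2` matrix `x` with `x ^ p = 1` in characteristic `p` is unipotent, so `x - 1` has
vanishing trace and determinant. -/
lemma trace_det_of_pow_char_eq_one {q : ℕ} [Fact q.Prime] [CharP F q]
    (x : Matrix (Fin 2) (Fin 2) F) (hx : x ^ q = 1) :
    x 0 0 + x 1 1 = 2 ∧ (x 0 0 - 1) * (x 1 1 - 1) = x 0 1 * x 1 0 := by
  have hnil : IsNilpotent (x - 1) := by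
    refine ⟨q, ?_⟩
    rw [sub_pow_char_of_commute (p := q) (Commute.one_right x), hx, one_pow, sub_self]
  have htr := (Matrix.isNilpotent_trace_of_isNilpotent hnil).eq_zero
  have hdet : (x - 1).det = 0 := by
    obtain ⟨k, hk⟩ := hnil
    have := congrArg Matrix.det hk
    rw [Matrix.det_pow, Matrix.det_zero] at this
    exact eq_zero_of_pow_eq_zero this
  simp [Matrix.trace_fin_two] at htr
  simp [Matrix.det_fin_two] at hdet
  exact ⟨by linear_combination htr, by linear_combination hdet⟩

lemma split_eq_one_of_pow_char {q : ℕ} [Fact q.Prime] [CharP F q] (h2 : (2 : F) ≠ 0)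
    (x : Matrix (Fin 2) (Fin 2) F) (hx : x ^ q = 1) (a b : F)
    (h : x = !![a, 0; 0, b] ∨ x = !![0, b; a, 0]) : x = 1 := by
  obtain ⟨ht, hd⟩ := trace_det_of_pow_char_eq_one x hx
  rcases h with rfl | rfl
  · simp at ht hd
    have hab : a = 1 ∧ b = 1 := by
      rcases hd with hd | hd
      · exact ⟨by linear_combination hd, by linear_combination ht - hd⟩
      · exact ⟨by linear_combination ht - hd, by linear_combination hd⟩
    rw [hab.1, hab.2, Matrix.one_fin_two]
  · simp at ht
    exact absurd ht.symm h2

lemma nonsplit_eq_one_of_pow_char {q : ℕ} [Fact q.Prime] [CharP F q] (h2 : (2 : F) ≠ 0)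
    {e : F} (he : ¬ IsSquare e) (x : Matrix (Fin 2) (Fin 2) F) (hx : x ^ q = 1) (a b : F)
    (h : x = !![a, e * b; b, a] ∨ x = !![a, e * b; -b, -a]) : x = 1 := by
  obtain ⟨ht, hd⟩ := trace_det_of_pow_char_eq_one x hx
  have he0 : e ≠ 0 := by rintro rfl; exact he (IsSquare.zero)
  rcases h with rfl | rfl
  · simp at ht hd
    have ha : a = 1 := mul_left_cancel₀ h2 (by linear_combination ht)
    subst ha
    have hb : b = 0 := by simpa [he0] using hd
    rw [hb, Matrix.one_fin_two]; simp
  · simp at ht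
    exact absurd ht.symm h2

lemma split_commutant {a b a' b' : F} (hab : a ≠ b) (ha : a' ≠ 0)
    (M : Matrix (Fin 2) (Fin 2) F)
    (h : !![a, 0; 0, b] * M = M * !![a, 0; 0, b])
    (w : !![0, b'; a', 0] * M = M * !![0, b'; a', 0]) :
    ∃ d : F, M = d • (1 : Matrix (Fin 2) (Fin 2) F) := by
  have hsub : a - b ≠ 0 := sub_ne_zero.2 hab
  rw [Matrix.eta_fin_two M] at h w ⊢
  have h01 := congrFun (congrFun h 0) 1
  have h10 := congrFun (congrFun h 1) 0
  have w10 := congrFun (congrFun w 1) 0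
  simp [Matrix.mul_apply, Fin.sum_univ_two] at h01 h10 w10
  have e1 : M 0 1 = 0 := mul_left_cancel₀ hsub (by linear_combination h01)
  have e2 : M 1 0 = 0 := mul_left_cancel₀ hsub (by linear_combination -h10)
  have e3 : M 1 1 = M 0 0 := mul_left_cancel₀ ha (by linear_combination -w10)
  refine ⟨M 0 0, ?_⟩
  rw [e1, e2, e3, Matrix.one_fin_two]
  simp

lemma nonsplit_commutant (h2 : (2 : F) ≠ 0) {e : F} (he : ¬ IsSquare e) {a b a' b' : F}
    (hb : b ≠ 0) (hdet : a' ≠ 0 ∨ b' ≠ 0) (M : Matrix (Fin 2) (Fin 2) F)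
    (h : !![a, e * b; b, a] * M = M * !![a, e * b; b, a])
    (w : !![a', e * b'; -b', -a'] * M = M * !![a', e * b'; -b', -a']) :
    ∃ d : F, M = d • (1 : Matrix (Fin 2) (Fin 2) F) := by
  have he0 : e ≠ 0 := by rintro rfl; exact he (IsSquare.zero)
  rw [Matrix.eta_fin_two M] at h w ⊢
  have h00 := congrFun (congrFun h 0) 0
  have h10 := congrFun (congrFun h 1) 0
  have w00 := congrFun (congrFun w 0) 0
  have w10 := congrFun (congrFun w 1) 0
  simp [Matrix.mul_apply, Fin.sum_univ_two] at h00 h10 w00 w10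
  have e1 : M 0 1 = e * M 1 0 := mul_left_cancel₀ hb (by linear_combination -h00)
  have e2 : M 1 1 = M 0 0 := mul_left_cancel₀ hb (by linear_combination -h10)
  have e3 : M 1 0 = 0 := by
    rcases hdet with hdet | hdet
    · refine mul_left_cancel₀ (mul_ne_zero h2 hdet) ?_
      rw [e2] at w10
      linear_combination -w10
    · refine mul_left_cancel₀ (mul_ne_zero (mul_ne_zero h2 he0) hdet) ?_
      rw [e1] at w00
      linear_combination w00
  refine ⟨M 0 0, ?_⟩
  rw [e1, e2, e3, Matrix.one_fin_two]
  simp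

end FieldMatrices

/-! ### Averaging over a finite matrix group of order prime to the characteristic -/

/-- If the finite group `H` has only scalar commutant and order invertible in `F`, the sum of all
`H`-conjugates of a matrix of nonzero trace is a nonzero scalar matrix. -/
lemma sum_conj_eq_scalar {F : Type*} [Field F] (H : Subgroup (GL (Fin 2) F)) [Fintype H]
    (hcard : (Fintype.card H : F) ≠ 0)
    (hcomm : ∀ M : Matrix (Fin 2) (Fin 2) F,
      (∀ h ∈ H, (h : Matrix (Fin 2) (Fin 2) F) * M = M * (h : Matrix (Fin 2) (Fin 2) F)) →
      ∃ d : F, M = d • (1 : Matrix (Fin 2) (Fin 2) F))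
    (M : Matrix (Fin 2) (Fin 2) F) (hM : M.trace ≠ 0) :
    ∃ d : F, d ≠ 0 ∧
      ∑ h : H, ((h : GL (Fin 2) F) : Matrix (Fin 2) (Fin 2) F) * M *
        (((h : GL (Fin 2) F)⁻¹ : GL (Fin 2) F) : Matrix (Fin 2) (Fin 2) F) = d • 1 := by
  set S := ∑ h : H, ((h : GL (Fin 2) F) : Matrix (Fin 2) (Fin 2) F) * M *
        (((h : GL (Fin 2) F)⁻¹ : GL (Fin 2) F) : Matrix (Fin 2) (Fin 2) F) with hS
  have hinv : ∀ k ∈ H, (k : Matrix (Fin 2) (Fin 2) F) * S = S * (k : Matrix (Fin 2) (Fin 2) F) := by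
    intro k hk
    rw [hS, Finset.mul_sum, Finset.sum_mul]
    refine Eq.trans ?_ (Equiv.sum_comp (Equiv.mulLeft (⟨k, hk⟩ : H))
        (fun h : H => ((h : GL (Fin 2) F) : Matrix (Fin 2) (Fin 2) F) * M *
        (((h : GL (Fin 2) F)⁻¹ : GL (Fin 2) F) : Matrix (Fin 2) (Fin 2) F) * (k : Matrix _ _ F)))
    refine Finset.sum_congr rfl fun h _ => ?_
    have hk1 : ((k⁻¹ : GL (Fin 2) F) : Matrix (Fin 2) (Fin 2) F) * (k : Matrix _ _ F) = 1 := by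
      rw [← Units.val_mul, inv_mul_cancel, Units.val_one]
    simp only [Equiv.coe_mulLeft, Subgroup.coe_mul, _root_.mul_inv_rev, Units.val_mul]
    simp only [mul_assoc, hk1, mul_one]
  obtain ⟨d, hd⟩ := hcomm S hinv
  refine ⟨d, ?_, hd⟩
  rintro rfl
  have htr : S.trace = (Fintype.card H : F) * M.trace := by
    rw [hS, Matrix.trace_sum, Finset.sum_congr rfl (g := fun _ => M.trace), Finset.sum_const,
      Finset.card_univ, nsmul_eq_mul]
    intro h _
    rw [Matrix.trace_mul_comm, ← mul_assoc, ← Units.val_mul, inv_mul_cancel, Units.val_one,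
      one_mul]
  rw [hd, zero_smul, Matrix.trace_zero] at htr
  exact mul_ne_zero hcard hM htr.symm

/-! ### Structure of the sets `𝔤ₙ` -/

section GlSet

variable {p}

lemma map_toZMod_p_mul (k : ℕ) (B : Matrix (Fin 2) (Fin 2) ℤ_[p]) (hk : k ≠ 0) :
    ((p : ℤ_[p]) ^ k • B).map (PadicInt.toZMod (p := p)) = 0 := by
  ext i j
  simp [hk]

lemma zero_mem_glSet (n : ℕ) (G : Subgroup (GL (Fin 2) ℤ_[p])) :
    (0 : Matrix (Fin 2) (Fin 2) (ZMod p)) ∈ glSet p n G :=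
  ⟨1, G.one_mem, 0, by simp, by ext; simp⟩

lemma add_mem_glSet {n : ℕ} (hn : 1 ≤ n) {G : Subgroup (GL (Fin 2) ℤ_[p])}
    {M N : Matrix (Fin 2) (Fin 2) (ZMod p)} (hM : M ∈ glSet p n G) (hN : N ∈ glSet p n G) :
    M + N ∈ glSet p n G := by
  obtain ⟨A, hA, B, hAB, rfl⟩ := hM
  obtain ⟨A', hA', B', hAB', rfl⟩ := hN
  refine ⟨A * A', G.mul_mem hA hA', B + B' + (p : ℤ_[p]) ^ n • (B * B'), ?_, ?_⟩
  · rw [Units.val_mul, hAB, hAB']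
    simp only [mul_add, add_mul, one_mul, mul_one, smul_add, smul_mul_assoc, mul_smul_comm]
    abel
  · rw [Matrix.map_add _ (map_add _), Matrix.map_add _ (map_add _),
      map_toZMod_p_mul n _ (by omega), add_zero]

lemma conj_mem_glSet {n : ℕ} {G : Subgroup (GL (Fin 2) ℤ_[p])}
    {M : Matrix (Fin 2) (Fin 2) (ZMod p)} (hM : M ∈ glSet p n G)
    {h : GL (Fin 2) (ZMod p)} (hh : h ∈ G.map (red p)) :
    (h : Matrix (Fin 2) (Fin 2) (ZMod p)) * M *
      ((h⁻¹ : GL (Fin 2) (ZMod p)) : Matrix (Fin 2) (Fin 2) (ZMod p)) ∈ glSet p n G := by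
  obtain ⟨g, hg, rfl⟩ := hh
  obtain ⟨A, hA, B, hAB, rfl⟩ := hM
  refine ⟨g * A * g⁻¹, G.mul_mem (G.mul_mem hg hA) (G.inv_mem hg),
    (g : Matrix (Fin 2) (Fin 2) ℤ_[p]) * B *
      ((g⁻¹ : GL (Fin 2) ℤ_[p]) : Matrix (Fin 2) (Fin 2) ℤ_[p]), ?_, ?_⟩
  · have hg1 : (g : Matrix (Fin 2) (Fin 2) ℤ_[p]) *
        ((g⁻¹ : GL (Fin 2) ℤ_[p]) : Matrix (Fin 2) (Fin 2) ℤ_[p]) = 1 := by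
      rw [← Units.val_mul, mul_inv_cancel, Units.val_one]
    rw [Units.val_mul, Units.val_mul, hAB, mul_add, add_mul, mul_one, hg1, mul_smul_comm,
      smul_mul_assoc]
  · rw [Matrix.map_mul, Matrix.map_mul, ← map_inv]
    rfl

/-- Second-order binomial expansion in a noncommutative ring, with a remainder divisible by
`y ^ 3` on the left. -/
lemma exists_one_add_pow {R : Type*} [Ring R] (y : R) (m : ℕ) :
    ∃ r : R, (1 + y) ^ m = 1 + (m : R) * y + (m.choose 2 : R) * y ^ 2 + y ^ 3 * r := by
  induction m with
  | zero => exact ⟨0, by simp⟩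
  | succ m ih =>
    obtain ⟨r, hr⟩ := ih
    refine ⟨(m.choose 2 : R) + r + y * r, ?_⟩
    have hc : ((m + 1).choose 2 : R) = (m : R) + (m.choose 2 : R) := by
      rw [Nat.choose_succ_succ' m 1, Nat.choose_one_right, Nat.cast_add]
    have e1 : y * ((m : R) * y) = (m : R) * y ^ 2 := by
      rw [← mul_assoc, (Nat.cast_commute m y).eq.symm, mul_assoc, sq]
    have e2 : y * ((m.choose 2 : R) * y ^ 2) = y ^ 3 * (m.choose 2 : R) := by
      rw [(Nat.cast_commute (m.choose 2) (y ^ 2)).eq, ← mul_assoc, ← pow_succ']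
    have e3 : y * (y ^ 3 * r) = y ^ 3 * (y * r) := by
      rw [← mul_assoc, ← mul_assoc, ← pow_succ', ← pow_succ]
    rw [pow_succ', hr, hc, add_mul 1 y, one_mul, mul_add y, mul_add y, mul_add y, e1, e2, e3,
      mul_add, mul_add, mul_one, add_mul (m : R), Nat.cast_add, Nat.cast_one, add_mul, one_mul]
    abel

/-- Raising `1 + pⁿB` to the `p`-th power shows `𝔤ₙ ⊆ 𝔤ₙ₊₁`; this uses that `p` is odd,
so that `p` divides `p.choose 2`. -/
lemma glSet_subset_succ (hp : Odd p) {n : ℕ} (hn : 1 ≤ n) {G : Subgroup (GL (Fin 2) ℤ_[p])}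
    {M : Matrix (Fin 2) (Fin 2) (ZMod p)} (hM : M ∈ glSet p n G) : M ∈ glSet p (n + 1) G := by
  obtain ⟨A, hA, B, hAB, rfl⟩ := hM
  obtain ⟨r, hr⟩ := exists_one_add_pow ((p : ℤ_[p]) ^ n • B) p
  have hprime : p.Prime := Fact.out
  have h2 : 2 < p := by
    rcases hprime.eq_two_or_odd' with h | h
    · subst h; exact absurd hp (by decide)
    · have := hprime.two_le
      rcases h with ⟨k, hk⟩; omega
  obtain ⟨k, hk⟩ := hprime.dvd_choose_self (by norm_num) h2
  obtain ⟨m, rfl⟩ := Nat.exists_eq_add_of_le hn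
  refine ⟨A ^ p, G.pow_mem hA p,
    B + (p : ℤ_[p]) ^ 1 • ((p : ℤ_[p]) ^ m • ((k : ℤ_[p]) • B ^ 2) +
      (p : ℤ_[p]) ^ (2 * m) • (B ^ 3 * r)), ?_, ?_⟩
  · have hcast (a : ℕ) (X : Matrix (Fin 2) (Fin 2) ℤ_[p]) :
        (a : Matrix (Fin 2) (Fin 2) ℤ_[p]) * X = (a : ℤ_[p]) • X := by
      rw [← nsmul_eq_mul, Nat.cast_smul_eq_nsmul]
    rw [Units.val_pow_eq_pow_val, hAB, hr, hk, hcast, hcast, smul_pow, smul_pow, smul_mul_assoc]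
    push_cast
    module
  · rw [Matrix.map_add _ (map_add _), map_toZMod_p_mul 1 _ one_ne_zero, add_zero]

/-- `𝔤ₙ` as an additive submonoid of `gl₂(𝔽_p)`. -/
def glSubmonoid (n : ℕ) (hn : 1 ≤ n) (G : Subgroup (GL (Fin 2) ℤ_[p])) :
    AddSubmonoid (Matrix (Fin 2) (Fin 2) (ZMod p)) where
  carrier := glSet p n G
  zero_mem' := zero_mem_glSet n G
  add_mem' := add_mem_glSet hn

/-- If `det` is onto `ℤ_pˣ` and the reduction `G(p)` has order prime to `p`, then `𝔤₁` contains
a matrix of nonzero trace: if `A ∈ G` has determinant `1 + p`, then `A ^ |G(p)|` is congruent to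
`1` modulo `p` and has determinant `≡ 1 + |G(p)| p` modulo `p²`. -/
lemma exists_trace_ne_zero (G : Subgroup (GL (Fin 2) ℤ_[p]))
    (hdet : ∀ u : ℤ_[p]ˣ, ∃ A ∈ G, Matrix.GeneralLinearGroup.det A = u)
    (hcard : (Nat.card (G.map (red p)) : ZMod p) ≠ 0) :
    ∃ M ∈ glSet p 1 G, M.trace ≠ 0 := by
  have hp0 : (p : ℤ_[p]) ≠ 0 := by exact_mod_cast (Fact.out : p.Prime).ne_zero
  have hu : IsUnit (1 + (p : ℤ_[p])) := by
    by_contra hnot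
    have hmem : (1 + (p : ℤ_[p])) ∈ RingHom.ker (PadicInt.toZMod (p := p)) := by
      rw [PadicInt.ker_toZMod]; exact hnot
    simp [RingHom.mem_ker] at hmem
  obtain ⟨u, hu⟩ := hu
  obtain ⟨A, hA, hAu⟩ := hdet u
  have hAdet : (A : Matrix (Fin 2) (Fin 2) ℤ_[p]).det = 1 + p := by
    rw [← hu, ← hAu]; rfl
  set m := Nat.card (G.map (red p)) with hm
  have hred : red p (A ^ m) = 1 := by
    have : (⟨red p A, Subgroup.mem_map_of_mem _ hA⟩ : G.map (red p)) ^ m = 1 := pow_card_eq_one'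
    rw [map_pow]
    exact congrArg Subtype.val this
  have hentry : ∀ i j, ∃ b : ℤ_[p],
      ((A ^ m : GL (Fin 2) ℤ_[p]) : Matrix (Fin 2) (Fin 2) ℤ_[p]) i j =
        (1 : Matrix (Fin 2) (Fin 2) ℤ_[p]) i j + p * b := by
    intro i j
    have h1 : PadicInt.toZMod (p := p)
        (((A ^ m : GL (Fin 2) ℤ_[p]) : Matrix (Fin 2) (Fin 2) ℤ_[p]) i j) =
        (1 : Matrix (Fin 2) (Fin 2) (ZMod p)) i j :=
      congrArg (fun x : GL (Fin 2) (ZMod p) =>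
        (x : Matrix (Fin 2) (Fin 2) (ZMod p)) i j) hred
    have h2 : (((A ^ m : GL (Fin 2) ℤ_[p]) : Matrix (Fin 2) (Fin 2) ℤ_[p]) i j -
        (1 : Matrix (Fin 2) (Fin 2) ℤ_[p]) i j) ∈ RingHom.ker (PadicInt.toZMod (p := p)) := by
      rw [RingHom.mem_ker, map_sub, h1, Matrix.one_apply, Matrix.one_apply]
      split_ifs <;> simp
    rw [PadicInt.ker_toZMod, PadicInt.maximalIdeal_eq_span_p, Ideal.mem_span_singleton] at h2
    obtain ⟨b, hb⟩ := h2
    exact ⟨b, by rw [← hb]; ring⟩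
  choose B hB using hentry
  have hAB : ((A ^ m : GL (Fin 2) ℤ_[p]) : Matrix (Fin 2) (Fin 2) ℤ_[p]) =
      1 + (p : ℤ_[p]) ^ 1 • (Matrix.of B) := by
    ext1 i j
    rw [hB]; simp
  refine ⟨_, ⟨A ^ m, G.pow_mem hA m, Matrix.of B, hAB, rfl⟩, ?_⟩
  obtain ⟨r, hr⟩ := exists_one_add_pow (p : ℤ_[p]) m
  have hd := congrArg Matrix.det hAB
  rw [Units.val_pow_eq_pow_val, Matrix.det_pow, hAdet, hr, Matrix.det_fin_two] at hd
  simp at hd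
  have htr : B 0 0 + B 1 1 = m + p * ((m.choose 2 : ℤ_[p]) + p * r
      - (B 0 0 * B 1 1 - B 0 1 * B 1 0)) :=
    mul_left_cancel₀ hp0 (by linear_combination -hd)
  have htr' := congrArg (PadicInt.toZMod (p := p)) htr
  simp at htr'
  simp [Matrix.trace_fin_two]
  rw [htr']
  exact hcard

/-- The general principle: `det` onto, no `p`-torsion in `G(p)`, and only scalars commuting with
`G(p)` force `𝔤ₙ` to contain the scalar matrices. -/
lemma scalars_mem_of_commutant (hp : Odd p) (G : Subgroup (GL (Fin 2) ℤ_[p]))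
    (hdet : ∀ u : ℤ_[p]ˣ, ∃ A ∈ G, Matrix.GeneralLinearGroup.det A = u)
    (htors : ∀ x ∈ G.map (red p), (x : Matrix (Fin 2) (Fin 2) (ZMod p)) ^ p = 1 →
      (x : Matrix (Fin 2) (Fin 2) (ZMod p)) = 1)
    (hcomm : ∀ M : Matrix (Fin 2) (Fin 2) (ZMod p),
      (∀ h ∈ G.map (red p), (h : Matrix (Fin 2) (Fin 2) (ZMod p)) * M =
        M * (h : Matrix (Fin 2) (Fin 2) (ZMod p))) →
      ∃ d : ZMod p, M = d • (1 : Matrix (Fin 2) (Fin 2) (ZMod p)))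
    (n : ℕ) (hn : 1 ≤ n) (c : ZMod p) :
    c • (1 : Matrix (Fin 2) (Fin 2) (ZMod p)) ∈ glSet p n G := by
  classical
  have : Fintype (G.map (red p)) := Fintype.ofFinite _
  have hcard : (Nat.card (G.map (red p)) : ZMod p) ≠ 0 := by
    intro h0
    rw [ZMod.natCast_eq_zero_iff] at h0
    obtain ⟨x, hx⟩ := exists_prime_orderOf_dvd_card' p h0
    have hxp : (x : GL (Fin 2) (ZMod p)) ^ p = 1 := by
      have hpow : x ^ p = 1 := (orderOf_dvd_iff_pow_eq_one).1 hx.dvd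
      exact congrArg Subtype.val hpow
    have hx1 : x = 1 := by
      apply Subtype.ext
      apply Units.ext
      refine htors x x.2 ?_
      rw [← Units.val_pow_eq_pow_val, hxp, Units.val_one]
    rw [hx1, orderOf_one] at hx
    exact (Fact.out : p.Prime).one_lt.ne hx
  induction n, hn using Nat.le_induction with
  | succ n hn ih => exact glSet_subset_succ hp hn ih
  | base =>
    obtain ⟨M, hM, htr⟩ := exists_trace_ne_zero G hdet hcard
    obtain ⟨d, hd0, hd⟩ := sum_conj_eq_scalar (G.map (red p))
      (by rwa [← Nat.card_eq_fintype_card]) hcomm M htr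
    have hdmem : d • (1 : Matrix (Fin 2) (Fin 2) (ZMod p)) ∈ glSubmonoid 1 le_rfl G := by
      rw [← hd]
      exact sum_mem fun h _ => conj_mem_glSet hM h.2
    have hmul := nsmul_mem hdmem (c / d).val
    rw [← Nat.cast_smul_eq_nsmul (ZMod p), ZMod.natCast_zmod_val, smul_smul,
      div_mul_cancel₀ _ hd0] at hmul
    exact hmul

end GlSet

/-! ### Application to the two Cartan subgroups -/

lemma not_isSquare_epsN (hp : Odd p) : ¬ IsSquare ((epsN p : ZMod p)) := by
  have hne : {n : ℕ | 0 < n ∧ ¬ IsSquare ((n : ZMod p))}.Nonempty := by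
    obtain ⟨a, ha⟩ := FiniteField.exists_nonsquare (F := ZMod p) (by
      rw [ZMod.ringChar_zmod_n]
      rintro rfl
      exact absurd hp (by decide))
    refine ⟨a.val, ?_, by rwa [ZMod.natCast_zmod_val]⟩
    rw [Nat.pos_iff_ne_zero, ne_eq, ZMod.val_eq_zero]
    rintro rfl
    exact ha IsSquare.zero
  exact (Nat.sInf_mem hne).2

/-- **(Corollary 3.8.)** If `G ≤ GL₂(ℤ_p)` is an N-Cartan lift (with respect to either
Cartan subgroup), then the line of scalar matrices `V₁ = 𝔽_p·Id` is contained in `𝔤ₙ`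
for every `n ≥ 1`. -/
theorem scalars_mem_glSet_of_isNCartanLift
    (p : ℕ) [Fact p.Prime] (hp : Odd p)
    (G : Subgroup (GL (Fin 2) ℤ_[p]))
    (C Cplus : Set (GL (Fin 2) ℤ_[p]))
    (hC : (C = cspSet ℤ_[p] ∧ Cplus = cspPlusSet ℤ_[p]) ∨
          (C = cnsSet ℤ_[p] ((epsN p : ℤ_[p])) ∧ Cplus = cnsPlusSet ℤ_[p] ((epsN p : ℤ_[p]))))
    (hG : IsNCartanLift p G C Cplus)
    (n : ℕ) (hn : 1 ≤ n) :
    ∀ c : ZMod p, c • (1 : Matrix (Fin 2) (Fin 2) (ZMod p)) ∈ glSet p n G := by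
  intro c
  obtain ⟨-, hdet, hplus, hnot, g, ⟨⟨g₀, hg₀, hgred⟩, g₁, hg₁, hg₁red⟩, hgns⟩ := hG
  obtain ⟨w, ⟨w₀, hw₀, rfl⟩, hwC⟩ := Set.not_subset.1 hnot
  obtain ⟨w₁, hw₁, hw₁red⟩ := hplus ⟨w₀, hw₀, rfl⟩
  have h2 : (2 : ZMod p) ≠ 0 := by
    intro h
    have h' : ((2 : ℕ) : ZMod p) = 0 := by exact_mod_cast h
    rw [ZMod.natCast_eq_zero_iff, Nat.prime_dvd_prime_iff_eq Fact.out Nat.prime_two] at h'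
    subst h'
    exact absurd hp (by decide)
  have hval : ∀ x : GL (Fin 2) ℤ_[p], ((red p x : GL (Fin 2) (ZMod p)) :
      Matrix (Fin 2) (Fin 2) (ZMod p)) =
      (x : Matrix (Fin 2) (Fin 2) ℤ_[p]).map (PadicInt.toZMod (p := p)) := fun _ => rfl
  have hgmem : g ∈ G.map (red p) := ⟨g₀, hg₀, hgred⟩
  have hwmem : red p w₀ ∈ G.map (red p) := ⟨w₀, hw₀, rfl⟩
  have hwdet : ((red p w₀ : GL (Fin 2) (ZMod p)) :
      Matrix (Fin 2) (Fin 2) (ZMod p)).det ≠ 0 :=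
    ((Matrix.isUnit_iff_isUnit_det _).1 (red p w₀).isUnit).ne_zero
  have hw₁C : w₁ ∉ C := fun h => hwC ⟨w₁, h, hw₁red⟩
  rcases hC with ⟨rfl, rfl⟩ | ⟨rfl, rfl⟩
  · refine scalars_mem_of_commutant hp G hdet ?_ ?_ n hn c
    · rintro x hx hxp
      obtain ⟨y, ⟨a, b, hy⟩, rfl⟩ := hplus hx
      refine split_eq_one_of_pow_char h2 _ hxp (PadicInt.toZMod a) (PadicInt.toZMod b) ?_
      rw [hval]
      rcases hy with hy | hy
      · left; rw [hy]; ext i j; fin_cases i <;> fin_cases j <;> simp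
      · right; rw [hy]; ext i j
        fin_cases i <;> fin_cases j <;> simp
    · intro M hM
      obtain ⟨a, b, hab⟩ := hg₁
      obtain ⟨a', b', hw | hw⟩ := hw₁
      · exact absurd ⟨a', b', hw⟩ hw₁C
      have hgm : (g : Matrix (Fin 2) (Fin 2) (ZMod p)) =
          !![PadicInt.toZMod a, 0; 0, PadicInt.toZMod b] := by
        rw [← hg₁red, hval, hab]; ext i j; fin_cases i <;> fin_cases j <;> simp
      have hwm : ((red p w₀ : GL (Fin 2) (ZMod p)) : Matrix (Fin 2) (Fin 2) (ZMod p)) =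
          !![0, PadicInt.toZMod b'; PadicInt.toZMod a', 0] := by
        rw [← hw₁red, hval, hw]; ext i j; fin_cases i <;> fin_cases j <;> simp
      have hgM := hM _ hgmem
      have hwM := hM _ hwmem
      rw [hgm] at hgM
      rw [hwm] at hwM hwdet
      refine split_commutant (fun h => hgns ⟨PadicInt.toZMod a, ?_⟩) ?_ M hgM hwM
      · rw [hgm, ← h, Matrix.one_fin_two]; simp
      · intro h; simp [h] at hwdet
  · have he := not_isSquare_epsN p hp
    refine scalars_mem_of_commutant hp G hdet ?_ ?_ n hn c
    · rintro x hx hxp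
      obtain ⟨y, ⟨a, b, hy⟩, rfl⟩ := hplus hx
      refine nonsplit_eq_one_of_pow_char h2 he _ hxp (PadicInt.toZMod a) (PadicInt.toZMod b) ?_
      rw [hval]
      rcases hy with hy | hy
      · left; rw [hy]; ext i j; fin_cases i <;> fin_cases j <;> simp
      · right; rw [hy]; ext i j
        fin_cases i <;> fin_cases j <;> simp
    · intro M hM
      obtain ⟨a, b, hab⟩ := hg₁
      obtain ⟨a', b', hw | hw⟩ := hw₁
      · exact absurd ⟨a', b', hw⟩ hw₁C
      have hgm : (g : Matrix (Fin 2) (Fin 2) (ZMod p)) =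
          !![PadicInt.toZMod a, epsN p * PadicInt.toZMod b;
            PadicInt.toZMod b, PadicInt.toZMod a] := by
        rw [← hg₁red, hval, hab]; ext i j; fin_cases i <;> fin_cases j <;> simp
      have hwm : ((red p w₀ : GL (Fin 2) (ZMod p)) : Matrix (Fin 2) (Fin 2) (ZMod p)) =
          !![PadicInt.toZMod a', epsN p * PadicInt.toZMod b';
            -PadicInt.toZMod b', -PadicInt.toZMod a'] := by
        rw [← hw₁red, hval, hw]; ext i j; fin_cases i <;> fin_cases j <;> simp
      have hgM := hM _ hgmem
      have hwM := hM _ hwmem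
      rw [hgm] at hgM
      rw [hwm] at hwM hwdet
      refine nonsplit_commutant h2 he (fun h => hgns ⟨PadicInt.toZMod a, ?_⟩) ?_ M hgM hwM
      · rw [hgm, h, Matrix.one_fin_two]; simp
      · by_contra! h
        simp [h.1, h.2] at hwdet

end
end
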